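/- arXiv:1701.00787 — 2 statements merged into one kernel-verified Lean document; each statement's English description precedes it below -/
import Mathlib

section
/- Let λ > 0 be real and let δ be a real number with δ ≥ ⌈λ⌉ + 1. Then for every n ∈ ℕ (n ≥ 0) and every t ∈ (0, π], the integral F_n^{λ,δ}(t) = ∫_0^t (t-θ)^δ C_n^λ(cos θ) (sin θ)^{2λ} dθ is strictly positive. -/
open MeasureTheory Real Set

/-- Generalized binomial coefficient `C(u, v) = Γ(u+1) / (Γ(v+1) Γ(u-v+1))`. -/
noncomputable def genBinom (u v : ℝ) : ℝ :=
  Real.Gamma (u + 1) / (Real.Gamma (v + 1) * Real.Gamma (u - v + 1))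

/-- Jacobi polynomial `P_n^{(a,b)}(x)`. -/
noncomputable def jacobiP (n : ℕ) (a b x : ℝ) : ℝ :=
  ∑ k ∈ Finset.range (n + 1),
    genBinom ((n : ℝ) + a) ((n : ℝ) - (k : ℝ)) * genBinom ((n : ℝ) + b) (k : ℝ) *
      ((x - 1) / 2) ^ k * ((x + 1) / 2) ^ (n - k)

/-- `F_n^{(α,β),δ}(t)`. -/
noncomputable def FJ (n : ℕ) (α β δ t : ℝ) : ℝ :=
  ∫ θ in (0:ℝ)..t, (t - θ) ^ δ * jacobiP n (α - 1/2) (β - 1/2) (Real.cos θ) *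
    (Real.sin (θ / 2)) ^ (2 * α) * (Real.cos (θ / 2)) ^ (2 * β)

/-- Pochhammer symbol `(a)_n = a (a+1) ⋯ (a+n-1)`. -/
noncomputable def poch (a : ℝ) (n : ℕ) : ℝ := Polynomial.eval a (ascPochhammer ℝ n)

/-- Gegenbauer polynomial `C_n^λ(x) = ((2λ)_n/(λ+1/2)_n) P_n^{(λ-1/2,λ-1/2)}(x)`. -/
noncomputable def gegenbauerC (n : ℕ) (lam x : ℝ) : ℝ :=
  (poch (2 * lam) n / poch (lam + 1/2) n) * jacobiP n (lam - 1/2) (lam - 1/2) x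

/-- `F_n^{λ,δ}(t) = ∫_0^t (t-θ)^δ C_n^λ(cos θ) (sin θ)^{2λ} dθ`. -/
noncomputable def FG (n : ℕ) (lam δ t : ℝ) : ℝ :=
  ∫ θ in (0:ℝ)..t, (t - θ) ^ δ * gegenbauerC n lam (Real.cos θ) * (Real.sin θ) ^ (2 * lam)

/-!
For `0 < λ ≤ 1` and `δ = 2`, the sine coefficients of `π (t - θ)₊² sin θ` on `[0, π]` are positive
because `(x - sin x) / x³` is decreasing. Integrated against `C_n^λ (cos θ) (sin θ)^(2λ - 1)`, the
function `sin ((k + 1) θ)` gives the integral of `U_k C_n^λ` against the ultraspherical weight.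
These integrals are nonnegative, and positive for `k = n`: since `C_n^λ` is an eigenfunction of a
self-adjoint operator which almost has `U_k` as an eigenfunction too, they satisfy a recurrence in
`k` whose coefficients have a sign.

To pass from `(λ, δ)` to `(λ + 1, δ + 1)`, put `w θ = C_n^(λ+1) (cos θ) (sin θ)^(2λ + 2)` and
`N = n + 2λ + 2`. Then `w'' + N² w = v` with `v` a positive multiple of
`C_n^λ (cos θ) (sin θ)^(2λ)`, so `N² ∫₀ᵗ w` is the convolution of `v` with the nonnegative kernel
`1 - cos (N x)`. Convolution with this kernel commutes with convolution by `x^δ`, so it preserves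
the positivity that is known for `v`. Finally, raising `δ` for fixed `λ` amounts to a fractional
integration, by Euler's beta integral.
-/

section GegenbauerPolynomials

open Polynomial

variable {K : Type*} [Field K]

/-- The Gegenbauer polynomials `C_n^a` as formal polynomials, defined by their three-term
recurrence. The algebraic identities are read off from this form; `gegenbauerC_eq_eval_gegenbauer`
identifies it with the normalised Jacobi polynomial. -/
noncomputable def gegenbauer (a : K) : ℕ → K[X]
  | 0 => 1
  | 1 => C (2 * a) * X
  | n + 2 => C ((n : K) + 2)⁻¹ *
      (C (2 * (n + 1 + a)) * (X * gegenbauer a (n + 1)) - C (n + 2 * a) * gegenbauer a n)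

/-- The Gegenbauer differential operator `p ↦ (1 - X²) p'' - (2a + 1) X p'`, whose eigenfunctions
are the Gegenbauer polynomials of parameter `a`. -/
noncomputable def gegenbauerOp (a : K) (p : K[X]) : K[X] :=
  (1 - X ^ 2) * derivative (derivative p) - (2 * C a + 1) * X * derivative p

@[simp]
lemma gegenbauer_zero (a : K) : gegenbauer a 0 = 1 := by rw [gegenbauer]

@[simp]
lemma gegenbauer_one (a : K) : gegenbauer a 1 = 2 * C a * X := by
  rw [gegenbauer, C_mul, map_ofNat]

lemma natDegree_gegenbauer_le (a : K) (n : ℕ) : (gegenbauer a n).natDegree ≤ n := by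
  induction n using Nat.twoStepInduction with
  | zero => simp
  | one => rw [gegenbauer]; exact (natDegree_C_mul_le _ _).trans natDegree_X_le
  | more n ih ih' =>
    rw [gegenbauer]
    refine (natDegree_C_mul_le _ _).trans ((natDegree_sub_le _ _).trans (max_le ?_ ?_))
    · refine (natDegree_C_mul_le _ _).trans (natDegree_mul_le.trans ?_)
      rw [natDegree_X]
      lia
    · exact (natDegree_C_mul_le _ _).trans (by lia)

lemma coeff_gegenbauer_self_pos [LinearOrder K] [IsStrictOrderedRing K] {a : K} (ha : 0 < a)
    (n : ℕ) : 0 < (gegenbauer a n).coeff n := by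
  induction n using Nat.twoStepInduction with
  | zero => simp
  | one => rw [gegenbauer]; simp [ha]
  | more n _ ih =>
    have hlow : (gegenbauer a n).coeff (n + 2) = 0 :=
      coeff_eq_zero_of_natDegree_lt ((natDegree_gegenbauer_le a n).trans_lt (by lia))
    rw [gegenbauer, coeff_C_mul, coeff_sub, coeff_C_mul, coeff_C_mul, coeff_X_mul, hlow, mul_zero,
      sub_zero]
    positivity

variable [CharZero K]

lemma natCast_add_two_ne_zero (n : ℕ) : (n : K[X]) + 2 ≠ 0 := by
  exact_mod_cast (n + 1).succ_ne_zero

lemma gegenbauer_add_two (a : K) (n : ℕ) :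
    ((n : K[X]) + 2) * gegenbauer a (n + 2) =
      2 * ((n : K[X]) + 1 + C a) * X * gegenbauer a (n + 1) -
        ((n : K[X]) + 2 * C a) * gegenbauer a n := by
  have hn : (n : K) + 2 ≠ 0 := by exact_mod_cast (n + 1).succ_ne_zero
  have hC : (n : K[X]) + 2 = C ((n : K) + 2) := by simp only [map_add, map_natCast, map_ofNat]
  rw [gegenbauer, hC, ← mul_assoc, ← C_mul, mul_inv_cancel₀ hn]
  simp only [map_mul, map_add, map_ofNat, map_natCast, map_one]
  ring

lemma derivative_gegenbauer_relations (a : K) (n : ℕ) :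
    X * derivative (gegenbauer a (n + 1)) - derivative (gegenbauer a n) =
        ((n : K[X]) + 1) * gegenbauer a (n + 1) ∧
      derivative (gegenbauer a (n + 1)) - X * derivative (gegenbauer a n) =
        ((n : K[X]) + 2 * C a) * gegenbauer a n := by
  induction n with
  | zero => constructor <;> simp [mul_comm]
  | succ n ih =>
    obtain ⟨hX, hD⟩ := ih
    have hrec := gegenbauer_add_two a n
    have hrec' := congrArg derivative hrec
    simp only [derivative_mul, derivative_add, derivative_sub, derivative_natCast, derivative_C,
      derivative_X, derivative_one, derivative_ofNat] at hrec'
    have hD' : derivative (gegenbauer a (n + 2)) - X * derivative (gegenbauer a (n + 1)) =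
        ((n : K[X]) + 1 + 2 * C a) * gegenbauer a (n + 1) := by
      apply mul_left_cancel₀ (natCast_add_two_ne_zero n)
      linear_combination hrec' + ((n : K[X]) + 2 * C a) * hX
    push_cast
    exact ⟨by linear_combination X * hD' - hD + X * hX - hrec, hD'⟩

lemma X_mul_derivative_gegenbauer_succ (a : K) (n : ℕ) :
    X * derivative (gegenbauer a (n + 1)) =
      derivative (gegenbauer a n) + ((n : K[X]) + 1) * gegenbauer a (n + 1) := by
  linear_combination (derivative_gegenbauer_relations a n).1

lemma derivative_gegenbauer_succ_eq_X_mul (a : K) (n : ℕ) :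
    derivative (gegenbauer a (n + 1)) =
      X * derivative (gegenbauer a n) + ((n : K[X]) + 2 * C a) * gegenbauer a n := by
  linear_combination (derivative_gegenbauer_relations a n).2

lemma derivative_gegenbauer_add_two (a : K) (n : ℕ) :
    derivative (gegenbauer a (n + 2)) =
      derivative (gegenbauer a n) + 2 * ((n : K[X]) + 1 + C a) * gegenbauer a (n + 1) := by
  have hD := derivative_gegenbauer_succ_eq_X_mul a (n + 1)
  push_cast at hD
  linear_combination hD + X_mul_derivative_gegenbauer_succ a n

lemma one_sub_X_sq_mul_derivative_gegenbauer_succ (a : K) (n : ℕ) :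
    (1 - X ^ 2) * derivative (gegenbauer a (n + 1)) =
      ((n : K[X]) + 2 * C a) * gegenbauer a n - ((n : K[X]) + 1) * X * gegenbauer a (n + 1) := by
  linear_combination derivative_gegenbauer_succ_eq_X_mul a n -
    X * X_mul_derivative_gegenbauer_succ a n

lemma gegenbauerOp_gegenbauer (a : K) (n : ℕ) :
    gegenbauerOp a (gegenbauer a n) = -((n : K[X]) * ((n : K[X]) + 2 * C a) * gegenbauer a n) := by
  rw [gegenbauerOp]
  cases n with
  | zero => simp
  | succ n =>
    have h := congrArg derivative (one_sub_X_sq_mul_derivative_gegenbauer_succ a n)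
    simp only [derivative_mul, derivative_add, derivative_sub, derivative_natCast, derivative_C,
      derivative_X, derivative_X_sq, derivative_one, derivative_ofNat, map_ofNat] at h
    push_cast
    linear_combination h - ((n : K[X]) + 2 * C a) * X_mul_derivative_gegenbauer_succ a n

lemma derivative_gegenbauer_succ (a : K) (n : ℕ) :
    derivative (gegenbauer a (n + 1)) = 2 * C a * gegenbauer (a + 1) n := by
  induction n using Nat.twoStepInduction with
  | zero => simp
  | one =>
    have h := derivative_gegenbauer_succ_eq_X_mul a 1
    simp only [Nat.cast_one, gegenbauer_one, C_add, C_1, derivative_mul, derivative_ofNat,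
      derivative_C, derivative_X] at h ⊢
    linear_combination h
  | more n ih ih' =>
    apply mul_left_cancel₀ (natCast_add_two_ne_zero n)
    have hrec := gegenbauer_add_two (a + 1) n
    have hX := X_mul_derivative_gegenbauer_succ a (n + 1)
    have hD := derivative_gegenbauer_succ_eq_X_mul a (n + 2)
    simp only [C_add, C_1] at hrec
    push_cast at *
    rw [ih'] at hD hX
    rw [ih] at hX
    linear_combination ((n : K[X]) + 2) * hD - ((n : K[X]) + 2 + 2 * C a) * hX - 2 * C a * hrec

lemma gegenbauer_one_eq_chebyshevU (n : ℕ) :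
    gegenbauer (1 : K) n = Chebyshev.U K n := by
  induction n using Nat.twoStepInduction with
  | zero => simp
  | one => simp
  | more n ih ih' =>
    apply mul_left_cancel₀ (natCast_add_two_ne_zero n)
    have hrec := gegenbauer_add_two (1 : K) n
    have hU := Chebyshev.U_add_two K n
    push_cast at ih' ⊢
    rw [C_1, ih, ih'] at hrec
    linear_combination hrec - ((n : K[X]) + 2) * hU

end GegenbauerPolynomials

section JacobiIdentification

lemma genBinom_succ {u v : ℝ} (hv : -1 < v) (huv : 0 < u - v) :
    (v + 1) * genBinom u (v + 1) = (u - v) * genBinom u v := by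
  have hv' : v + 1 ≠ 0 := by linarith
  have hΓv : Gamma (v + 1) ≠ 0 := (Gamma_pos_of_pos (by linarith)).ne'
  have hΓuv : Gamma (u - v) ≠ 0 := (Gamma_pos_of_pos huv).ne'
  rw [genBinom, genBinom, Gamma_add_one hv', Gamma_add_one huv.ne',
    show u - (v + 1) + 1 = u - v by ring]
  field_simp

lemma genBinom_zero {u : ℝ} (hu : -1 < u) : genBinom u 0 = 1 := by
  have hΓ : Gamma (u + 1) ≠ 0 := (Gamma_pos_of_pos (by linarith)).ne'
  simp [genBinom, hΓ]

lemma poch_succ (a : ℝ) (n : ℕ) : poch a (n + 1) = poch a n * (a + n) := by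
  simp [poch, ascPochhammer_succ_right]

lemma poch_succ_left (a : ℝ) (n : ℕ) : poch a (n + 1) = a * poch (a + 1) n := by
  simp [poch, ascPochhammer_succ_left, Polynomial.eval_comp]

lemma poch_pos {a : ℝ} (ha : 0 < a) (n : ℕ) : 0 < poch a n := ascPochhammer_pos n a ha

lemma poch_add_one_mul_Gamma {a : ℝ} (ha : -1 < a) (n : ℕ) :
    poch (a + 1) n * Gamma (a + 1) = Gamma (n + a + 1) := by
  induction n with
  | zero => simp [poch]
  | succ n ih =>
    have hn : (n : ℝ) + a + 1 ≠ 0 := by linarith [n.cast_nonneg (α := ℝ)]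
    rw [poch_succ, mul_right_comm, ih, mul_comm, add_right_comm a, add_comm a, ← Gamma_add_one hn]
    push_cast
    ring_nf

lemma genBinom_natCast_add_mul_factorial {a : ℝ} (ha : -1 < a) (n : ℕ) :
    genBinom (n + a) n * n.factorial = poch (a + 1) n := by
  have hΓ : Gamma (a + 1) ≠ 0 := (Gamma_pos_of_pos (by linarith)).ne'
  rw [genBinom, ← poch_add_one_mul_Gamma ha, Gamma_nat_eq_factorial, add_sub_cancel_left]
  field_simp

lemma jacobiP_one_mul_factorial {a b : ℝ} (ha : -1 < a) (hb : -1 < b) (n : ℕ) :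
    jacobiP n a b 1 * n.factorial = poch (a + 1) n := by
  have hnb : -1 < (n : ℝ) + b := by linarith [n.cast_nonneg (α := ℝ)]
  rw [jacobiP, Finset.sum_range_succ', Finset.sum_eq_zero fun k _ => by simp]
  simp [genBinom_zero hnb, genBinom_natCast_add_mul_factorial ha]

lemma hasDerivAt_sum_mul_pow_mul_pow (c : ℕ → ℝ) (n : ℕ) (x : ℝ) :
    HasDerivAt (fun x : ℝ => ∑ k ∈ Finset.range (n + 1 + 1),
        c k * ((x - 1) / 2) ^ k * ((x + 1) / 2) ^ (n + 1 - k))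
      (∑ k ∈ Finset.range (n + 1), ((k + 1) * c (k + 1) + (n - k + 1) * c k) / 2 *
        ((x - 1) / 2) ^ k * ((x + 1) / 2) ^ (n - k)) x := by
  have hsub : HasDerivAt (fun x : ℝ => (x - 1) / 2) (1 / 2) x :=
    ((hasDerivAt_id x).sub_const 1).div_const 2
  have hadd : HasDerivAt (fun x : ℝ => (x + 1) / 2) (1 / 2) x :=
    ((hasDerivAt_id x).add_const 1).div_const 2
  refine (HasDerivAt.fun_sum fun k _ =>
    ((hsub.fun_pow k).const_mul (c k)).mul (hadd.fun_pow (n + 1 - k))).congr_deriv ?_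
  rw [Finset.sum_add_distrib, Finset.sum_range_succ', Finset.sum_range_succ (n := n + 1)]
  simp only [Nat.cast_zero, zero_mul, mul_zero, add_zero, Nat.sub_self]
  rw [← Finset.sum_add_distrib]
  refine Finset.sum_congr rfl fun k hk => ?_
  have hkn : k ≤ n := Finset.mem_range_succ_iff.mp hk
  rw [show n + 1 - (k + 1) = n - k by lia, show n + 1 - k - 1 = n - k by lia,
    Nat.add_sub_cancel, Nat.cast_sub (by lia : k ≤ n + 1)]
  push_cast
  ring

lemma hasDerivAt_jacobiP {a b : ℝ} (ha : -1 < a) (hb : -1 < b) (n : ℕ) (x : ℝ) :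
    HasDerivAt (jacobiP (n + 1) a b) ((n + a + b + 2) / 2 * jacobiP n (a + 1) (b + 1) x) x := by
  refine (hasDerivAt_sum_mul_pow_mul_pow _ n x).congr_deriv ?_
  rw [jacobiP, Finset.mul_sum]
  refine Finset.sum_congr rfl fun k hk => ?_
  have hkn : (k : ℝ) ≤ n := by exact_mod_cast Finset.mem_range_succ_iff.mp hk
  have hbinb := genBinom_succ (u := n + 1 + b) (v := k)
    (by linarith [k.cast_nonneg (α := ℝ)]) (by linarith)
  have hbina := genBinom_succ (u := n + 1 + a) (v := n - k) (by linarith)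
    (by linarith [k.cast_nonneg (α := ℝ)])
  push_cast
  rw [show (n : ℝ) + (a + 1) = n + 1 + a by ring, show (n : ℝ) + (b + 1) = n + 1 + b by ring,
    show (n : ℝ) + 1 - (k + 1) = n - k by ring, show (n : ℝ) + 1 - k = n - k + 1 by ring]
  linear_combination ((1 / 2) * ((x - 1) / 2) ^ k * ((x + 1) / 2) ^ (n - k)) *
    (genBinom (n + 1 + a) (n - k) * hbinb + genBinom (n + 1 + b) k * hbina)

lemma eval_one_gegenbauer_mul_factorial (a : ℝ) (n : ℕ) :
    (gegenbauer a n).eval 1 * n.factorial = poch (2 * a) n := by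
  induction n with
  | zero => simp [poch]
  | succ n ih =>
    have h := congrArg (Polynomial.eval 1) (one_sub_X_sq_mul_derivative_gegenbauer_succ a n)
    simp only [Polynomial.eval_mul, Polynomial.eval_sub, Polynomial.eval_add, Polynomial.eval_pow,
      Polynomial.eval_one, Polynomial.eval_X, Polynomial.eval_C, Polynomial.eval_natCast,
      Polynomial.eval_ofNat] at h
    rw [poch_succ, ← ih, Nat.factorial_succ]
    push_cast
    linear_combination (n.factorial : ℝ) * h

lemma gegenbauerC_one {l : ℝ} (hl : 0 < l) (n : ℕ) :
    gegenbauerC n l 1 = (gegenbauer l n).eval 1 := by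
  have hfact : (n.factorial : ℝ) ≠ 0 := by positivity
  have hjac := jacobiP_one_mul_factorial (a := l - 1 / 2) (b := l - 1 / 2) (by linarith)
    (by linarith) n
  rw [sub_add_eq_add_sub, add_sub_assoc, show (1 - 1 / 2 : ℝ) = 1 / 2 by norm_num] at hjac
  apply mul_right_cancel₀ hfact
  rw [gegenbauerC, mul_assoc, hjac, eval_one_gegenbauer_mul_factorial,
    div_mul_cancel₀ _ (poch_pos (by linarith) n).ne']

lemma hasDerivAt_gegenbauerC {l : ℝ} (hl : 0 < l) (n : ℕ) (x : ℝ) :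
    HasDerivAt (gegenbauerC (n + 1) l) (2 * l * gegenbauerC n (l + 1) x) x := by
  refine ((hasDerivAt_jacobiP (a := l - 1 / 2) (b := l - 1 / 2) (by linarith) (by linarith) n
    x).const_mul (poch (2 * l) (n + 1) / poch (l + 1 / 2) (n + 1))).congr_deriv ?_
  have hnum : poch (2 * l) (n + 1) * (2 * l + n + 1) =
      2 * l * (2 * l + 1) * poch (2 * (l + 1)) n := by
    have h := poch_succ (2 * l) (n + 1)
    rw [poch_succ_left, poch_succ_left, show 2 * l + 1 + 1 = 2 * (l + 1) by ring] at h
    push_cast at h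
    linear_combination -h
  have hden : poch (l + 1 / 2) (n + 1) = (l + 1 / 2) * poch (l + 1 + 1 / 2) n := by
    rw [poch_succ_left, add_right_comm]
  have hpoch : poch (l + 1 + 1 / 2) n ≠ 0 := (poch_pos (by linarith) n).ne'
  rw [gegenbauerC, hden, show l + 1 - 1 / 2 = l - 1 / 2 + 1 by ring]
  generalize poch (l + 1 + 1 / 2) n = q at hpoch
  generalize jacobiP n (l - 1 / 2 + 1) (l - 1 / 2 + 1) x = J
  field_simp
  linear_combination 2 * J * hnum

lemma gegenbauerC_eq_eval_gegenbauer {l : ℝ} (hl : 0 < l) (n : ℕ) (x : ℝ) :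
    gegenbauerC n l x = (gegenbauer l n).eval x := by
  induction n generalizing l x with
  | zero => simp [gegenbauerC, jacobiP, poch, genBinom_zero (show -1 < l - 2⁻¹ by linarith)]
  | succ n ih =>
    have hC := hasDerivAt_gegenbauerC hl n
    have hpoly (y : ℝ) : HasDerivAt (fun y => (gegenbauer l (n + 1)).eval y)
        (2 * l * gegenbauerC n (l + 1) y) y := by
      rw [ih (by linarith)]
      simpa [derivative_gegenbauer_succ] using (gegenbauer l (n + 1)).hasDerivAt y
    refine isOpen_univ.eqOn_of_deriv_eq isPreconnected_univ
      (fun y _ => (hC y).differentiableAt.differentiableWithinAt)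
      (fun y _ => (hpoly y).differentiableAt.differentiableWithinAt)
      (fun y _ => (hC y).deriv.trans (hpoly y).deriv.symm) (mem_univ 1) ?_ (mem_univ x)
    exact gegenbauerC_one hl (n + 1)

end JacobiIdentification

section WeightedIntegral

open Polynomial

/-- The function `θ ↦ q (cos θ) (sin θ)^p`. With `p = 2 λ` it carries the ultraspherical weight
`(1 - x²)^(λ - 1/2) dx` to the variable `x = cos θ`. -/
noncomputable def sinWeighted (p : ℝ) (q : ℝ[X]) (θ : ℝ) : ℝ := q.eval (cos θ) * sin θ ^ p

lemma continuous_sinWeighted {p : ℝ} (hp : 0 ≤ p) (q : ℝ[X]) : Continuous (sinWeighted p q) :=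
  (q.continuous.comp continuous_cos).mul (continuous_sin.rpow_const fun _ => Or.inr hp)

lemma intervalIntegrable_sinWeighted {p : ℝ} (hp : 0 ≤ p) (q : ℝ[X]) (a b : ℝ) :
    IntervalIntegrable (sinWeighted p q) volume a b :=
  (continuous_sinWeighted hp q).intervalIntegrable a b

lemma sin_mul_sinWeighted {p θ : ℝ} (hp : p + 1 ≠ 0) (hθ : 0 ≤ sin θ) (q : ℝ[X]) :
    sin θ * sinWeighted p q θ = sinWeighted (p + 1) q θ := by
  rw [sinWeighted, sinWeighted, rpow_add_one' hθ hp]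
  ring

lemma sinWeighted_add_two {p θ : ℝ} (hp : 0 ≤ p) (hθ : 0 ≤ sin θ) (q : ℝ[X]) :
    sinWeighted (p + 2) q θ = sinWeighted p ((1 - X ^ 2) * q) θ := by
  have hpow : sin θ ^ (p + 2) = sin θ ^ p * sin θ ^ 2 := by
    rw [rpow_add_of_nonneg hθ hp zero_le_two, rpow_two]
  simp only [sinWeighted, hpow, sin_sq, eval_mul, eval_sub, eval_one, eval_pow, eval_X]
  ring

/-- The polynomial representing the derivative of `sinWeighted p q` with respect to the weight of
exponent `p - 1`. -/
noncomputable def sinWeightedDeriv (p : ℝ) (q : ℝ[X]) : ℝ[X] :=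
  C p * X * q - (1 - X ^ 2) * derivative q

lemma hasDerivAt_sinWeighted {p θ : ℝ} (hp : 1 ≤ p) (hθ : 0 ≤ sin θ) (q : ℝ[X]) :
    HasDerivAt (sinWeighted p q) (sinWeighted (p - 1) (sinWeightedDeriv p q) θ) θ := by
  have hq := (q.hasDerivAt (cos θ)).comp θ (hasDerivAt_cos θ)
  have hsin := (hasDerivAt_sin θ).rpow_const (p := p) (Or.inr hp)
  refine (hq.mul hsin).congr_deriv ?_
  have hpow : sin θ ^ p = sin θ ^ (p - 1) * sin θ := by
    rw [← rpow_add_one' hθ (by linarith), sub_add_cancel]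
  simp only [sinWeighted, sinWeightedDeriv, Function.comp_apply, eval_sub, eval_mul, eval_C,
    eval_X, eval_one, eval_pow, hpow]
  linear_combination -(sin θ ^ (p - 1) * (derivative q).eval (cos θ)) * sin_sq θ

/-- Integration against the ultraspherical weight, as a linear functional on polynomials. -/
noncomputable def gegenbauerIntegral {l : ℝ} (hl : 0 < l) : ℝ[X] →ₗ[ℝ] ℝ where
  toFun q := ∫ θ in (0 : ℝ)..π, sinWeighted (2 * l) q θ
  map_add' q r := by
    rw [← intervalIntegral.integral_add (intervalIntegrable_sinWeighted (by positivity) q _ _)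
      (intervalIntegrable_sinWeighted (by positivity) r _ _)]
    simp only [sinWeighted, eval_add, add_mul]
  map_smul' c q := by
    simp only [sinWeighted, eval_smul, smul_eq_mul, mul_assoc, RingHom.id_apply,
      intervalIntegral.integral_const_mul]

variable {l : ℝ} (hl : 0 < l)

lemma gegenbauerIntegral_apply (q : ℝ[X]) :
    gegenbauerIntegral hl q = ∫ θ in (0 : ℝ)..π, sinWeighted (2 * l) q θ := rfl

lemma gegenbauerIntegral_C_mul (c : ℝ) (q : ℝ[X]) :
    gegenbauerIntegral hl (C c * q) = c * gegenbauerIntegral hl q := by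
  rw [← smul_eq_C_mul, map_smul, smul_eq_mul]

lemma gegenbauerIntegral_sinWeightedDeriv (q : ℝ[X]) :
    gegenbauerIntegral hl (sinWeightedDeriv (2 * l + 1) q) = 0 := by
  have hderiv : ∀ θ ∈ uIcc 0 π, HasDerivAt (sinWeighted (2 * l + 1) q)
      (sinWeighted (2 * l) (sinWeightedDeriv (2 * l + 1) q) θ) θ := by
    intro θ hθ
    rw [uIcc_of_le pi_pos.le] at hθ
    simpa only [add_sub_cancel_right] using
      hasDerivAt_sinWeighted (p := 2 * l + 1) (by linarith) (sin_nonneg_of_mem_Icc hθ) q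
  rw [gegenbauerIntegral_apply, intervalIntegral.integral_eq_sub_of_hasDerivAt hderiv
    (intervalIntegrable_sinWeighted (by positivity) _ _ _)]
  simp [sinWeighted, zero_rpow (show 2 * l + 1 ≠ 0 by linarith)]

lemma gegenbauerIntegral_gegenbauerOp_mul (u v : ℝ[X]) :
    gegenbauerIntegral hl (gegenbauerOp l u * v) =
      gegenbauerIntegral hl (u * gegenbauerOp l v) := by
  have h := gegenbauerIntegral_sinWeightedDeriv hl (u * derivative v - derivative u * v)
  rw [← sub_eq_zero, ← map_sub, ← h]
  congr 1
  simp only [gegenbauerOp, sinWeightedDeriv, derivative_sub, derivative_mul, C_add, C_mul, C_1,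
    map_ofNat]
  ring

lemma gegenbauerIntegral_gegenbauerOp_mul_gegenbauer (u : ℝ[X]) (n : ℕ) :
    gegenbauerIntegral hl (gegenbauerOp l u * gegenbauer l n) =
      -(n * (n + 2 * l)) * gegenbauerIntegral hl (u * gegenbauer l n) := by
  rw [gegenbauerIntegral_gegenbauerOp_mul, gegenbauerOp_gegenbauer, ← gegenbauerIntegral_C_mul]
  congr 1
  simp only [C_neg, C_mul, C_add, map_natCast, map_ofNat]
  ring

lemma gegenbauerOp_X_pow (j : ℕ) :
    gegenbauerOp l (X ^ j) =
      C (j * (j - 1 : ℕ) : ℝ) * X ^ (j - 2) - C (j * (j + 2 * l) : ℝ) * X ^ j := by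
  rcases j with _ | _ | j
  · simp [gegenbauerOp]
  · simp only [gegenbauerOp, zero_add, pow_one, derivative_X, derivative_one, mul_zero, mul_one,
      zero_sub, Nat.cast_one, tsub_self, Nat.cast_zero, zero_mul, map_zero, one_mul, map_add,
      map_one, map_mul, map_ofNat C]
    ring
  · simp only [gegenbauerOp, derivative_X_pow_succ, derivative_mul, Nat.cast_add,
      Nat.cast_one, map_add, map_natCast, map_one, map_mul, map_ofNat C, derivative_natCast,
      derivative_one, add_zero, zero_mul, zero_add, add_tsub_cancel_right,
      Nat.reduceSubDiff]
    ring

lemma gegenbauerIntegral_X_pow_mul_gegenbauer_of_lt {j n : ℕ} (hj : j < n) :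
    gegenbauerIntegral hl (X ^ j * gegenbauer l n) = 0 := by
  induction j using Nat.strong_induction_on with
  | _ j ih =>
    have h := gegenbauerIntegral_gegenbauerOp_mul_gegenbauer hl (X ^ j) n
    have hlow : (j * (j - 1 : ℕ) : ℝ) *
        gegenbauerIntegral hl (X ^ (j - 2) * gegenbauer l n) = 0 := by
      rcases Nat.lt_or_ge j 2 with h2 | h2
      · interval_cases j <;> simp
      · rw [ih (j - 2) (by lia) (by lia), mul_zero]
    rw [gegenbauerOp_X_pow, sub_mul, mul_assoc, mul_assoc, map_sub, gegenbauerIntegral_C_mul,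
      gegenbauerIntegral_C_mul, hlow, zero_sub] at h
    have heigen : (j * (j + 2 * l) : ℝ) ≠ n * (n + 2 * l) := by
      have hjn : (j : ℝ) < n := by exact_mod_cast hj
      exact (mul_lt_mul'' hjn (by linarith) (by positivity) (by positivity)).ne
    exact (mul_eq_mul_right_iff.mp (show (j * (j + 2 * l) : ℝ) * _ = n * (n + 2 * l) * _ by
      linarith)).resolve_left heigen

lemma gegenbauerIntegral_mul_gegenbauer {q : ℝ[X]} {n : ℕ} (hq : q.natDegree ≤ n) :
    gegenbauerIntegral hl (q * gegenbauer l n) =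
      q.coeff n * gegenbauerIntegral hl (X ^ n * gegenbauer l n) := by
  conv_lhs => rw [q.as_sum_range_C_mul_X_pow' (Nat.lt_succ_of_le hq), Finset.sum_mul, map_sum]
  simp only [mul_assoc, gegenbauerIntegral_C_mul]
  rw [Finset.sum_range_succ, Finset.sum_eq_zero, zero_add]
  intro j hj
  rw [gegenbauerIntegral_X_pow_mul_gegenbauer_of_lt hl (Finset.mem_range.mp hj), mul_zero]

lemma gegenbauerIntegral_mul_self_pos {q : ℝ[X]} (hq : q ≠ 0) :
    0 < gegenbauerIntegral hl (q * q) := by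
  obtain ⟨y, ⟨hy₁, hy₂⟩, hroot⟩ : ∃ y ∈ Ioo (-1 : ℝ) 1, y ∉ (q.roots.toFinset : Set ℝ) :=
    ((Ioo_infinite (by norm_num)).sdiff (Finset.finite_toSet _)).nonempty
  have hy : q.eval y ≠ 0 := by simpa [hq] using hroot
  refine intervalIntegral.integral_pos pi_pos
    (continuous_sinWeighted (by positivity) _).continuousOn (fun θ hθ => ?_)
    ⟨arccos y, ⟨arccos_nonneg _, arccos_le_pi _⟩, ?_⟩
  · rw [sinWeighted, eval_mul]
    exact mul_nonneg (mul_self_nonneg _)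
      (rpow_nonneg (sin_nonneg_of_mem_Icc (Ioc_subset_Icc_self hθ)) _)
  · rw [sinWeighted, eval_mul, cos_arccos hy₁.le hy₂.le]
    exact mul_pos (mul_self_pos.mpr hy)
      (rpow_pos_of_pos (sin_pos_of_pos_of_lt_pi (arccos_pos.mpr hy₂) (arccos_lt_pi.mpr hy₁)) _)

lemma gegenbauerIntegral_X_pow_mul_gegenbauer_pos (n : ℕ) :
    0 < gegenbauerIntegral hl (X ^ n * gegenbauer l n) := by
  have hcoeff := coeff_gegenbauer_self_pos hl n
  have hne : gegenbauer l n ≠ 0 := fun h => by simp [h] at hcoeff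
  have h := gegenbauerIntegral_mul_self_pos hl hne
  rw [gegenbauerIntegral_mul_gegenbauer hl (natDegree_gegenbauer_le l n)] at h
  exact (pos_iff_pos_of_mul_pos h).mp hcoeff

end WeightedIntegral

section ConnectionCoefficients

open Polynomial

lemma gegenbauerOp_gegenbauer_succ {K : Type*} [Field K] [CharZero K] (l μ : K) (k : ℕ) :
    gegenbauerOp l (gegenbauer μ (k + 1)) =
      C (2 * (μ - l)) * derivative (gegenbauer μ k) -
        C ((k + 1) * (k + 1 + 2 * l)) * gegenbauer μ (k + 1) := by
  have hop := gegenbauerOp_gegenbauer μ (k + 1)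
  rw [gegenbauerOp] at hop ⊢
  simp only [C_mul, C_add, C_sub, C_1, map_natCast, map_ofNat]
  push_cast at hop
  linear_combination hop + 2 * (C μ - C l) * X_mul_derivative_gegenbauer_succ μ k

variable {l μ : ℝ} (hl : 0 < l)

lemma gegenbauerIntegral_gegenbauer_mul_self_pos (hμ : 0 < μ) (n : ℕ) :
    0 < gegenbauerIntegral hl (gegenbauer μ n * gegenbauer l n) := by
  rw [gegenbauerIntegral_mul_gegenbauer hl (natDegree_gegenbauer_le μ n)]
  exact mul_pos (coeff_gegenbauer_self_pos hμ n) (gegenbauerIntegral_X_pow_mul_gegenbauer_pos hl n)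

lemma gegenbauerIntegral_gegenbauer_mul_nonneg_of_le (hμ : 0 < μ) {k n : ℕ} (hk : k ≤ n) :
    0 ≤ gegenbauerIntegral hl (gegenbauer μ k * gegenbauer l n) := by
  rcases hk.eq_or_lt with rfl | hlt
  · exact (gegenbauerIntegral_gegenbauer_mul_self_pos hl hμ k).le
  · have hdeg := (natDegree_gegenbauer_le μ k).trans_lt hlt
    rw [gegenbauerIntegral_mul_gegenbauer hl hdeg.le, coeff_eq_zero_of_natDegree_lt hdeg, zero_mul]

lemma gegenbauerIntegral_gegenbauer_succ_mul (k n : ℕ) :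
    ((k + 1) * (k + 1 + 2 * l) - n * (n + 2 * l)) *
        gegenbauerIntegral hl (gegenbauer μ (k + 1) * gegenbauer l n) =
      2 * (μ - l) * gegenbauerIntegral hl (derivative (gegenbauer μ k) * gegenbauer l n) := by
  have h := gegenbauerIntegral_gegenbauerOp_mul_gegenbauer hl (gegenbauer μ (k + 1)) n
  rw [gegenbauerOp_gegenbauer_succ, sub_mul, mul_assoc, mul_assoc, map_sub,
    gegenbauerIntegral_C_mul, gegenbauerIntegral_C_mul] at h
  linear_combination -h

lemma gegenbauerIntegral_derivative_gegenbauer_add_two_mul (k n : ℕ) :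
    gegenbauerIntegral hl (derivative (gegenbauer μ (k + 2)) * gegenbauer l n) =
      gegenbauerIntegral hl (derivative (gegenbauer μ k) * gegenbauer l n) +
        2 * (k + 1 + μ) * gegenbauerIntegral hl (gegenbauer μ (k + 1) * gegenbauer l n) := by
  rw [derivative_gegenbauer_add_two, ← gegenbauerIntegral_C_mul, ← map_add]
  congr 1
  simp only [C_mul, C_add, C_1, map_natCast, map_ofNat]
  ring

lemma gegenbauerIntegral_gegenbauer_succ_mul_nonneg (hlμ : l ≤ μ) {k n : ℕ}
    (hk : 0 ≤ gegenbauerIntegral hl (derivative (gegenbauer μ k) * gegenbauer l n)) :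
    0 ≤ gegenbauerIntegral hl (gegenbauer μ (k + 1) * gegenbauer l n) := by
  rcases Nat.lt_or_ge n (k + 1) with hnk | hkn
  · have hnk' : (n : ℝ) < k + 1 := by exact_mod_cast hnk
    have heigen : 0 < ((k + 1) * (k + 1 + 2 * l) - n * (n + 2 * l) : ℝ) :=
      sub_pos.mpr (mul_lt_mul'' hnk' (by linarith) (by positivity) (by positivity))
    refine nonneg_of_mul_nonneg_right ?_ heigen
    rw [gegenbauerIntegral_gegenbauer_succ_mul]
    exact mul_nonneg (by linarith) hk
  · exact gegenbauerIntegral_gegenbauer_mul_nonneg_of_le hl (hl.trans_le hlμ) hkn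

lemma gegenbauerIntegral_derivative_gegenbauer_mul_nonneg (hlμ : l ≤ μ) (k n : ℕ) :
    0 ≤ gegenbauerIntegral hl (derivative (gegenbauer μ k) * gegenbauer l n) := by
  have hμ : 0 < μ := hl.trans_le hlμ
  induction k using Nat.twoStepInduction with
  | zero => simp
  | one =>
    have h : derivative (gegenbauer μ 1) = C (2 * μ) * gegenbauer μ 0 := by
      simp [map_ofNat C]
    rw [h, mul_assoc, gegenbauerIntegral_C_mul]
    exact mul_nonneg (by positivity)
      (gegenbauerIntegral_gegenbauer_mul_nonneg_of_le hl hμ n.zero_le)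
  | more k ih _ =>
    have hsucc := gegenbauerIntegral_gegenbauer_succ_mul_nonneg hl hlμ ih
    rw [gegenbauerIntegral_derivative_gegenbauer_add_two_mul]
    positivity

lemma gegenbauerIntegral_gegenbauer_mul_nonneg (hlμ : l ≤ μ) (k n : ℕ) :
    0 ≤ gegenbauerIntegral hl (gegenbauer μ k * gegenbauer l n) := by
  cases k with
  | zero => exact gegenbauerIntegral_gegenbauer_mul_nonneg_of_le hl (hl.trans_le hlμ) n.zero_le
  | succ k =>
    exact gegenbauerIntegral_gegenbauer_succ_mul_nonneg hl hlμ
      (gegenbauerIntegral_derivative_gegenbauer_mul_nonneg hl hlμ k n)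

end ConnectionCoefficients

section SineSeries

/-- The entire function `(x - sin x) / x³`, with its limit `1 / 6` as value at `0`. Up to a factor
`2 t³`, its values at the multiples of `t` are the cosine coefficients of `θ ↦ (t - θ)₊²`. -/
noncomputable def subSinDivCube (x : ℝ) : ℝ := if x = 0 then 1 / 6 else (x - sin x) / x ^ 3

lemma mul_cos_lt_sin {x : ℝ} (hx₀ : 0 < x) (hx : x < π / 2) : x * cos x < sin x := by
  have hcos : 0 < cos x := cos_pos_of_mem_Ioo ⟨by linarith, hx⟩
  have h := lt_tan hx₀ hx
  rwa [tan_eq_sin_div_cos, lt_div_iff₀ hcos] at h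

lemma three_mul_sin_lt_mul_two_add_cos {x : ℝ} (hx : 0 < x) : 3 * sin x < x * (2 + cos x) := by
  rcases le_or_gt π x with hπ | hπ
  · nlinarith [pi_gt_three, sin_le_one x, neg_one_le_cos x]
  have hderiv (y : ℝ) : HasDerivAt (fun y => y * (2 + cos y) - 3 * sin y)
      (4 * sin (y / 2) * (sin (y / 2) - y / 2 * cos (y / 2))) y := by
    refine (((hasDerivAt_id y).mul ((hasDerivAt_cos y).const_add 2)).sub
      ((hasDerivAt_sin y).const_mul 3)).congr_deriv ?_
    obtain ⟨z, rfl⟩ : ∃ z, y = 2 * z := ⟨y / 2, by ring⟩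
    rw [mul_div_cancel_left₀ z two_ne_zero, sin_two_mul, cos_two_mul, id]
    linear_combination -4 * sin_sq z
  have hmono : StrictMonoOn (fun y => y * (2 + cos y) - 3 * sin y) (Icc 0 π) := by
    refine strictMonoOn_of_deriv_pos (convex_Icc 0 π) (by fun_prop) fun y hy => ?_
    rw [interior_Icc] at hy
    rw [(hderiv y).deriv]
    have hsin : 0 < sin (y / 2) :=
      sin_pos_of_pos_of_lt_pi (by linarith [hy.1]) (by linarith [hy.2, pi_pos])
    have hlt := mul_cos_lt_sin (x := y / 2) (by linarith [hy.1]) (by linarith [hy.2])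
    exact mul_pos (by positivity) (by linarith)
  simpa using hmono ⟨le_rfl, pi_pos.le⟩ ⟨hx.le, hπ.le⟩ hx

lemma strictAntiOn_sub_sin_div_cube : StrictAntiOn (fun x : ℝ => (x - sin x) / x ^ 3) (Ioi 0) := by
  have hderiv {x : ℝ} (hx : 0 < x) : HasDerivAt (fun x : ℝ => (x - sin x) / x ^ 3)
      ((3 * sin x - x * (2 + cos x)) / x ^ 4) x := by
    refine (((hasDerivAt_id x).sub (hasDerivAt_sin x)).div (hasDerivAt_pow 3 x)
      (pow_pos hx 3).ne').congr_deriv ?_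
    simp only [Pi.sub_apply, id]
    field_simp
    ring
  refine strictAntiOn_of_deriv_neg (convex_Ioi 0)
    (fun x hx => (hderiv hx).continuousAt.continuousWithinAt) fun x hx => ?_
  rw [interior_Ioi] at hx
  rw [(hderiv hx).deriv]
  exact div_neg_of_neg_of_pos (sub_neg.mpr (three_mul_sin_lt_mul_two_add_cos hx)) (pow_pos hx 4)

lemma strictAntiOn_subSinDivCube : StrictAntiOn subSinDivCube (Ici 0) := by
  intro x hx y _ hxy
  have hy₀ : 0 < y := hx.trans_lt hxy
  rw [subSinDivCube, subSinDivCube, if_neg hy₀.ne']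
  split_ifs with hx₀
  · rw [div_lt_div_iff₀ (by positivity) (by norm_num)]
    linarith [sin_gt_sub_cube hy₀]
  · exact strictAntiOn_sub_sin_div_cube (lt_of_le_of_ne hx (Ne.symm hx₀)) hy₀ hxy

lemma two_mul_cube_mul_subSinDivCube {t : ℝ} (ht : t ≠ 0) (n : ℕ) :
    2 * t ^ 3 * subSinDivCube (n * t) =
      2 * t * (1 / (n : ℝ) ^ 2) - 2 * (1 / (n : ℝ) ^ 3 * sin (n * t)) +
        if n = 0 then t ^ 3 / 3 else 0 := by
  rcases eq_or_ne n 0 with rfl | hn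
  · simp only [subSinDivCube, Nat.cast_zero, zero_mul, ↓reduceIte, sin_zero, mul_zero, sub_self,
      ne_eq, OfNat.ofNat_ne_zero, not_false_eq_true, zero_pow, div_zero, zero_add]
    ring
  · rw [subSinDivCube, if_neg (by positivity), if_neg hn]
    field_simp
    ring

lemma summable_two_mul_cube_mul_subSinDivCube {t : ℝ} (ht : t ≠ 0) :
    Summable fun n : ℕ => 2 * t ^ 3 * subSinDivCube (n * t) := by
  have hsq : Summable fun n : ℕ => 1 / (n : ℝ) ^ 2 := summable_one_div_nat_pow.mpr (by norm_num)
  have hcube : Summable fun n : ℕ => 1 / (n : ℝ) ^ 3 := summable_one_div_nat_pow.mpr (by norm_num)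
  have hsin : Summable fun n : ℕ => 1 / (n : ℝ) ^ 3 * sin (n * t) := by
    refine hcube.of_norm_bounded fun n => ?_
    rw [norm_mul, norm_of_nonneg (by positivity)]
    exact mul_le_of_le_one_right (by positivity) (abs_sin_le_one _)
  simp only [two_mul_cube_mul_subSinDivCube ht]
  exact ((hsq.mul_left (2 * t)).sub (hsin.mul_left 2)).add (hasSum_ite_eq 0 (t ^ 3 / 3)).summable

lemma hasSum_one_div_sq_mul_cos {x : ℝ} (hx : x ∈ Icc 0 (2 * π)) :
    HasSum (fun n : ℕ => 1 / (n : ℝ) ^ 2 * cos (n * x)) (π ^ 2 / 6 - π * x / 2 + x ^ 2 / 4) := by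
  have h := hasSum_one_div_nat_pow_mul_cos one_ne_zero (x := x / (2 * π))
    ⟨div_nonneg hx.1 (by positivity), div_le_one_of_le₀ hx.2 (by positivity)⟩
  convert h using 1
  · funext n
    congr 2
    field_simp
  · simp only [Nat.reduceAdd, even_two, Even.neg_pow, one_pow, mul_one, one_mul,
      Nat.factorial_two, Nat.cast_ofNat, Polynomial.bernoulli_def, Finset.sum_range_succ,
      Finset.range_one, Finset.sum_singleton, tsub_zero, bernoulli_two, Nat.choose, Nat.cast_one,
      Nat.add_one_sub_one, bernoulli_one, add_zero, tsub_self, bernoulli_zero, Polynomial.map_add,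
      Polynomial.map_monomial, eq_ratCast, Polynomial.eval_add, Polynomial.eval_monomial, pow_zero,
      pow_one, Rat.cast_mul, Rat.cast_inv, Rat.cast_div, Rat.cast_neg, Rat.cast_one,
      Rat.cast_ofNat]
    field_simp
    ring

lemma hasSum_one_div_cube_mul_sin_of_nonneg {x : ℝ} (hx : x ∈ Icc 0 (2 * π)) :
    HasSum (fun n : ℕ => 1 / (n : ℝ) ^ 3 * sin (n * x))
      (π ^ 2 * x / 6 - π * x ^ 2 / 4 + x ^ 3 / 12) := by
  have h := hasSum_one_div_nat_pow_mul_sin one_ne_zero (x := x / (2 * π))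
    ⟨div_nonneg hx.1 (by positivity), div_le_one_of_le₀ hx.2 (by positivity)⟩
  have hbernoulli : bernoulli 3 = 0 := by
    rw [bernoulli_eq_bernoulli'_of_ne_one (by norm_num), bernoulli'_three]
  convert h using 1
  · funext n
    congr 2
    field_simp
  · simp only [Nat.reduceAdd, even_two, Even.neg_pow, one_pow, mul_one, one_mul, Nat.factorial,
      Nat.succ_eq_add_one, zero_add, Nat.reduceMul, Nat.cast_ofNat, Polynomial.bernoulli_def,
      Finset.sum_range_succ, Finset.range_one, Finset.sum_singleton, tsub_zero, hbernoulli,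
      Nat.choose, Nat.cast_one, Polynomial.monomial_zero_right, Nat.add_one_sub_one, bernoulli_two,
      add_zero, Nat.reduceSub, bernoulli_one, tsub_self, bernoulli_zero, Polynomial.map_add,
      Polynomial.map_monomial, eq_ratCast, Rat.cast_mul, Rat.cast_inv, Rat.cast_ofNat,
      Rat.cast_div, Rat.cast_neg, Rat.cast_one, Polynomial.eval_add, Polynomial.eval_monomial,
      pow_one]
    field_simp
    ring

lemma hasSum_one_div_cube_mul_sin {x : ℝ} (hx : |x| ≤ 2 * π) :
    HasSum (fun n : ℕ => 1 / (n : ℝ) ^ 3 * sin (n * x))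
      (π ^ 2 * x / 6 - π * (x * |x|) / 4 + x ^ 3 / 12) := by
  rcases le_total 0 x with h₀ | h₀
  · rw [abs_of_nonneg h₀] at hx ⊢
    simpa only [sq] using hasSum_one_div_cube_mul_sin_of_nonneg ⟨h₀, hx⟩
  · rw [abs_of_nonpos h₀] at hx ⊢
    have hneg := (hasSum_one_div_cube_mul_sin_of_nonneg ⟨neg_nonneg.mpr h₀, hx⟩).neg
    rw [show π ^ 2 * x / 6 - π * (x * -x) / 4 + x ^ 3 / 12 =
      -(π ^ 2 * -x / 6 - π * (-x) ^ 2 / 4 + (-x) ^ 3 / 12) by ring]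
    refine hneg.congr_fun fun n => ?_
    rw [mul_neg, sin_neg]
    ring

lemma hasSum_subSinDivCube_mul_cos {t θ : ℝ} (ht : t ∈ Ioc 0 π) (hθ : θ ∈ Icc 0 π) :
    HasSum (fun n : ℕ => 2 * t ^ 3 * subSinDivCube (n * t) * cos (n * θ))
      (π / 2 * max (t - θ) 0 ^ 2 + t ^ 3 / 6) := by
  obtain ⟨ht₀, htπ⟩ := ht
  obtain ⟨hθ₀, hθπ⟩ := hθ
  have hcos := hasSum_one_div_sq_mul_cos (x := θ) ⟨hθ₀, by linarith⟩
  have hadd := hasSum_one_div_cube_mul_sin (x := t + θ) (abs_le.mpr ⟨by linarith, by linarith⟩)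
  have hsub := hasSum_one_div_cube_mul_sin (x := t - θ) (abs_le.mpr ⟨by linarith, by linarith⟩)
  have hvalue : π / 2 * max (t - θ) 0 ^ 2 + t ^ 3 / 6 =
      2 * t * (π ^ 2 / 6 - π * θ / 2 + θ ^ 2 / 4) -
        ((π ^ 2 * (t + θ) / 6 - π * ((t + θ) * |t + θ|) / 4 + (t + θ) ^ 3 / 12) +
          (π ^ 2 * (t - θ) / 6 - π * ((t - θ) * |t - θ|) / 4 + (t - θ) ^ 3 / 12)) +
        t ^ 3 / 3 := by
    rw [abs_of_nonneg (by linarith : 0 ≤ t + θ)]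
    rcases le_total θ t with h | h
    · rw [abs_of_nonneg (by linarith), max_eq_left (by linarith)]
      ring
    · rw [abs_of_nonpos (by linarith), max_eq_right (by linarith)]
      ring
  rw [hvalue]
  refine (((hcos.mul_left (2 * t)).sub (hadd.add hsub)).add
    (hasSum_ite_eq 0 (t ^ 3 / 3))).congr_fun fun n => ?_
  rw [two_mul_cube_mul_subSinDivCube ht₀.ne', mul_add, mul_sub, sin_add, sin_sub]
  split_ifs with hn
  · simp [hn]
  · ring

lemma hasSum_sub_add_two_mul_sin {a : ℕ → ℝ} {S θ : ℝ} (ha : Summable a)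
    (hS : HasSum (fun n : ℕ => a n * cos (n * θ)) S) :
    HasSum (fun k : ℕ => (a k - a (k + 2)) * sin ((k + 1) * θ)) (2 * sin θ * S - a 0 * sin θ) := by
  have hsummable (x : ℕ → ℝ) : Summable fun n => a n * sin (x n) := by
    refine ha.abs.of_norm_bounded fun n => ?_
    rw [norm_mul]
    exact mul_le_of_le_one_right (norm_nonneg _) (abs_sin_le_one _)
  have hup := (hsummable fun n => (n + 1) * θ).hasSum
  have hdown := (hsummable fun n => (n - 1) * θ).hasSum
  have hdiff : (∑' n : ℕ, a n * sin ((n + 1) * θ)) - ∑' n : ℕ, a n * sin ((n - 1) * θ) =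
      2 * sin θ * S := by
    refine (hup.sub hdown).unique ((hS.mul_left (2 * sin θ)).congr_fun fun n => ?_)
    rw [add_mul, sub_mul, one_mul, sin_add, sin_sub]
    ring
  have hvalue : 2 * sin θ * S - a 0 * sin θ = (∑' n : ℕ, a n * sin ((n + 1) * θ)) -
      (∑' n : ℕ, a n * sin ((n - 1) * θ) - ∑ n ∈ Finset.range 2, a n * sin ((n - 1) * θ)) := by
    rw [← hdiff]
    simp only [Finset.sum_range_succ, Finset.range_one, Finset.sum_singleton, Nat.cast_zero,
      zero_sub, neg_mul, one_mul, sin_neg, mul_neg, Nat.cast_one, sub_self, zero_mul, sin_zero,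
      mul_zero, add_zero, sub_neg_eq_add]
    ring
  rw [hvalue]
  refine (hup.sub ((hasSum_nat_add_iff' 2).mpr hdown)).congr_fun fun k => ?_
  push_cast
  rw [show (k : ℝ) + 2 - 1 = k + 1 by ring]
  ring

/-- The sine coefficients of `θ ↦ π (t - θ)₊² sin θ`, indexed so that the `k`-th one belongs to
`sin ((k + 1) θ)`. -/
noncomputable def truncSqSineCoeff (t : ℝ) (k : ℕ) : ℝ :=
  2 * t ^ 3 * subSinDivCube (k * t) - 2 * t ^ 3 * subSinDivCube ((k + 2 : ℕ) * t)

lemma truncSqSineCoeff_pos {t : ℝ} (ht : 0 < t) (k : ℕ) : 0 < truncSqSineCoeff t k := by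
  have hlt : (k : ℝ) * t < (k + 2 : ℕ) * t := by
    push_cast
    linarith
  have hk : (0 : ℝ) ≤ k * t := by positivity
  exact sub_pos.mpr (mul_lt_mul_of_pos_left
    (strictAntiOn_subSinDivCube hk (hk.trans hlt.le) hlt) (by positivity))

lemma summable_truncSqSineCoeff {t : ℝ} (ht : t ≠ 0) : Summable (truncSqSineCoeff t) :=
  (summable_two_mul_cube_mul_subSinDivCube ht).sub
    ((summable_nat_add_iff 2).mpr (summable_two_mul_cube_mul_subSinDivCube ht))

lemma hasSum_truncSqSineCoeff_mul_sin {t θ : ℝ} (ht : t ∈ Ioc 0 π) (hθ : θ ∈ Icc 0 π) :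
    HasSum (fun k : ℕ => truncSqSineCoeff t k * sin ((k + 1) * θ))
      (π * (max (t - θ) 0 ^ 2 * sin θ)) := by
  have h := hasSum_sub_add_two_mul_sin (summable_two_mul_cube_mul_subSinDivCube ht.1.ne')
    (hasSum_subSinDivCube_mul_cos ht hθ)
  rw [Nat.cast_zero, zero_mul, subSinDivCube, if_pos rfl] at h
  have hvalue : π * (max (t - θ) 0 ^ 2 * sin θ) =
      2 * sin θ * (π / 2 * max (t - θ) 0 ^ 2 + t ^ 3 / 6) - 2 * t ^ 3 * (1 / 6) * sin θ := by ring
  rw [hvalue]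
  exact h

lemma integral_max_sub_sq_mul {t T : ℝ} (ht : t ∈ Icc 0 T) {g : ℝ → ℝ}
    (hg : IntervalIntegrable g volume 0 T) :
    ∫ θ in (0 : ℝ)..T, max (t - θ) 0 ^ 2 * g θ = ∫ θ in (0 : ℝ)..t, (t - θ) ^ 2 * g θ := by
  have hmem : t ∈ uIcc 0 T := by rwa [uIcc_of_le (ht.1.trans ht.2)]
  have hint : IntervalIntegrable (fun θ => max (t - θ) 0 ^ 2 * g θ) volume 0 T :=
    hg.continuousOn_mul (by fun_prop)
  rw [← intervalIntegral.integral_add_adjacent_intervals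
    (hint.mono_set (uIcc_subset_uIcc_left hmem)) (hint.mono_set (uIcc_subset_uIcc_right hmem))]
  have hleft : ∫ θ in (0 : ℝ)..t, max (t - θ) 0 ^ 2 * g θ =
      ∫ θ in (0 : ℝ)..t, (t - θ) ^ 2 * g θ := by
    refine intervalIntegral.integral_congr fun θ hθ => ?_
    rw [uIcc_of_le ht.1] at hθ
    simp only [max_eq_left (sub_nonneg.mpr hθ.2)]
  have hright : ∫ θ in t..T, max (t - θ) 0 ^ 2 * g θ = ∫ _ in t..T, (0 : ℝ) := by
    refine intervalIntegral.integral_congr fun θ hθ => ?_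
    rw [uIcc_of_le ht.2] at hθ
    simp only [max_eq_right (sub_nonpos.mpr hθ.1), ne_eq, OfNat.ofNat_ne_zero,
      not_false_eq_true, zero_pow, zero_mul]
  rw [hleft, hright, intervalIntegral.integral_zero, add_zero]

lemma hasSum_truncSqSineCoeff_mul_integral {t : ℝ} (ht : t ∈ Ioc 0 π) {g : ℝ → ℝ}
    (hg : IntervalIntegrable g volume 0 π) :
    HasSum (fun k : ℕ => truncSqSineCoeff t k * ∫ θ in (0 : ℝ)..π, sin ((k + 1) * θ) * g θ)
      (π * ∫ θ in (0 : ℝ)..t, (t - θ) ^ 2 * (sin θ * g θ)) := by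
  have hsin : IntervalIntegrable (fun θ => sin θ * g θ) volume 0 π :=
    hg.continuousOn_mul (by fun_prop)
  rw [← integral_max_sub_sq_mul (Ioc_subset_Icc_self ht) hsin,
    ← intervalIntegral.integral_const_mul]
  simp only [← intervalIntegral.integral_const_mul]
  refine intervalIntegral.hasSum_integral_of_dominated_convergence
    (fun k θ => truncSqSineCoeff t k * |g θ|) (fun k => ?_)
    (fun k => ae_of_all _ fun θ _ => ?_)
    (ae_of_all _ fun θ _ => (summable_truncSqSineCoeff ht.1.ne').mul_right _) ?_
    (ae_of_all _ fun θ hθ => ?_)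
  · exact ((hg.continuousOn_mul (by fun_prop)).const_mul _).def'.aestronglyMeasurable
  · rw [norm_mul, norm_mul, norm_of_nonneg (truncSqSineCoeff_pos ht.1 k).le]
    exact mul_le_mul_of_nonneg_left
      (mul_le_of_le_one_left (abs_nonneg _) (abs_sin_le_one _)) (truncSqSineCoeff_pos ht.1 k).le
  · simp only [tsum_mul_right]
    exact hg.abs.const_mul _
  · rw [uIoc_of_le pi_pos.le] at hθ
    have h := (hasSum_truncSqSineCoeff_mul_sin ht (Ioc_subset_Icc_self hθ)).mul_right (g θ)
    simpa only [mul_assoc] using h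

lemma integral_sub_sq_mul_sin_mul_pos {t : ℝ} (ht : t ∈ Ioc 0 π) {g : ℝ → ℝ}
    (hg : IntervalIntegrable g volume 0 π)
    (hnonneg : ∀ k : ℕ, 0 ≤ ∫ θ in (0 : ℝ)..π, sin ((k + 1) * θ) * g θ)
    (hpos : ∃ n : ℕ, 0 < ∫ θ in (0 : ℝ)..π, sin ((n + 1) * θ) * g θ) :
    0 < ∫ θ in (0 : ℝ)..t, (t - θ) ^ 2 * (sin θ * g θ) := by
  obtain ⟨n, hn⟩ := hpos
  have hle := le_hasSum (hasSum_truncSqSineCoeff_mul_integral ht hg) n fun k _ =>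
    mul_nonneg (truncSqSineCoeff_pos ht.1 k).le (hnonneg k)
  exact pos_of_mul_pos_right ((mul_pos (truncSqSineCoeff_pos ht.1 n) hn).trans_le hle) pi_pos.le

end SineSeries

section SecondOrderKernel

lemma intervalIntegrable_sin_rpow {q : ℝ} (hq : -1 < q) :
    IntervalIntegrable (fun θ => sin θ ^ q) volume 0 π := by
  rcases le_or_gt 0 q with h₀ | h₀
  · exact (continuous_sin.rpow_const fun _ => Or.inr h₀).intervalIntegrable _ _
  have hleft : IntervalIntegrable (fun θ => sin θ ^ q) volume 0 (π / 2) := by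
    have hdom : IntervalIntegrable (fun θ : ℝ => (2 / π) ^ q * θ ^ q) volume 0 (π / 2) :=
      (intervalIntegral.intervalIntegrable_rpow' hq).const_mul _
    refine hdom.mono_fun (measurable_sin.pow_const q).aestronglyMeasurable ?_
    rw [uIoc_of_le (by positivity)]
    refine ae_restrict_of_forall_mem measurableSet_Ioc fun θ hθ => ?_
    have hlin : 0 < 2 / π * θ := mul_pos (by positivity) hθ.1
    have hle : 2 / π * θ ≤ sin θ := mul_le_sin hθ.1.le hθ.2
    dsimp only
    rw [← mul_rpow (by positivity) hθ.1.le, norm_of_nonneg (rpow_nonneg (hlin.le.trans hle) _),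
      norm_of_nonneg (rpow_nonneg hlin.le _)]
    exact rpow_le_rpow_of_nonpos hlin hle h₀.le
  have hright := (hleft.comp_sub_left π).symm
  simp only [sin_pi_sub, sub_zero, sub_half] at hright
  exact hleft.trans hright

lemma integral_sin_mul_sinWeighted {l : ℝ} (hl : 0 < l) (k n : ℕ) :
    ∫ θ in (0 : ℝ)..π, sin ((k + 1) * θ) * sinWeighted (2 * l - 1) (gegenbauer l n) θ =
      gegenbauerIntegral hl (gegenbauer 1 k * gegenbauer l n) := by
  rw [gegenbauerIntegral_apply]
  refine intervalIntegral.integral_congr fun θ hθ => ?_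
  rw [uIcc_of_le pi_pos.le] at hθ
  have hweight := sin_mul_sinWeighted (p := 2 * l - 1) (by linarith) (sin_nonneg_of_mem_Icc hθ)
    (gegenbauer l n)
  rw [sub_add_cancel] at hweight
  have hU := Polynomial.Chebyshev.U_real_cos θ k
  push_cast at hU
  rw [← hU, mul_assoc, hweight, sinWeighted, sinWeighted, Polynomial.eval_mul,
    gegenbauer_one_eq_chebyshevU, mul_assoc]

lemma integral_sub_sq_mul_sinWeighted_pos {l : ℝ} (hl : 0 < l) (hl₁ : l ≤ 1) (n : ℕ) {t : ℝ}
    (ht : t ∈ Ioc 0 π) :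
    0 < ∫ θ in (0 : ℝ)..t, (t - θ) ^ 2 * sinWeighted (2 * l) (gegenbauer l n) θ := by
  have hint : IntervalIntegrable (sinWeighted (2 * l - 1) (gegenbauer l n)) volume 0 π :=
    (intervalIntegrable_sin_rpow (by linarith)).continuousOn_mul (by fun_prop)
  have hpos := integral_sub_sq_mul_sin_mul_pos ht hint
    (fun k => by
      rw [integral_sin_mul_sinWeighted hl]
      exact gegenbauerIntegral_gegenbauer_mul_nonneg hl hl₁ k n)
    ⟨n, by
      rw [integral_sin_mul_sinWeighted hl]
      exact gegenbauerIntegral_gegenbauer_mul_self_pos hl one_pos n⟩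
  refine hpos.trans_eq (intervalIntegral.integral_congr fun θ hθ => ?_)
  rw [uIcc_of_le ht.1.le] at hθ
  rw [sin_mul_sinWeighted (by linarith) (sin_nonneg_of_mem_Icc ⟨hθ.1, hθ.2.trans ht.2⟩),
    sub_add_cancel]

end SecondOrderKernel

section LaplaceConvolution

/-- The convolution `∫₀ᵗ f (t - s) g s ds` of functions on the half-line; for `f = (· ^ δ)` it is,
up to a constant, the Riemann–Liouville fractional integral of `g` of order `δ + 1`. -/
noncomputable def laplaceConv (f g : ℝ → ℝ) (t : ℝ) : ℝ := ∫ s in (0 : ℝ)..t, f (t - s) * g s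

lemma laplaceConv_congr {f₁ f₂ g₁ g₂ : ℝ → ℝ} {t : ℝ} (ht : 0 ≤ t) (hf : EqOn f₁ f₂ (Icc 0 t))
    (hg : EqOn g₁ g₂ (Icc 0 t)) : laplaceConv f₁ g₁ t = laplaceConv f₂ g₂ t := by
  refine intervalIntegral.integral_congr fun s hs => ?_
  rw [uIcc_of_le ht] at hs
  rw [hf ⟨sub_nonneg.mpr hs.2, sub_le_self t hs.1⟩, hg hs]

lemma laplaceConv_const_mul_left (c : ℝ) (f g : ℝ → ℝ) (t : ℝ) :
    laplaceConv (fun x => c * f x) g t = c * laplaceConv f g t := by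
  simp only [laplaceConv, mul_assoc, intervalIntegral.integral_const_mul]

lemma laplaceConv_const_mul_right (c : ℝ) (f g : ℝ → ℝ) (t : ℝ) :
    laplaceConv f (fun x => c * g x) t = c * laplaceConv f g t := by
  simp only [laplaceConv, mul_left_comm _ c, intervalIntegral.integral_const_mul]

lemma laplaceConv_comm (f g : ℝ → ℝ) (t : ℝ) : laplaceConv f g t = laplaceConv g f t := by
  have h := intervalIntegral.integral_comp_sub_left (a := 0) (b := t)
    (fun s => g (t - s) * f s) t
  rw [sub_self, sub_zero] at h
  rw [laplaceConv, laplaceConv, ← h]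
  simp only [sub_sub_cancel, mul_comm]

lemma intervalIntegrable_comp_sub_left {f : ℝ → ℝ} {t : ℝ}
    (hf : IntervalIntegrable f volume 0 t) :
    IntervalIntegrable (fun s => f (t - s)) volume 0 t := by
  simpa only [sub_self, sub_zero] using (hf.comp_sub_left t).symm

lemma continuous_laplaceConv {f g : ℝ → ℝ} (hf : Continuous f) (hg : Continuous g) :
    Continuous (laplaceConv f g) :=
  intervalIntegral.continuous_parametric_intervalIntegral_of_continuous
    (f := fun t s => f (t - s) * g s) (by fun_prop) continuous_id

lemma laplaceConv_pos {f g : ℝ → ℝ} {t : ℝ} (ht : 0 < t) (hf : IntervalIntegrable f volume 0 t)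
    (hg : Continuous g) (hf_pos : ∀ s ∈ Ioo 0 t, 0 < f s) (hg_pos : ∀ s ∈ Ioo 0 t, 0 < g s) :
    0 < laplaceConv f g t :=
  intervalIntegral.intervalIntegral_pos_of_pos_on
    ((intervalIntegrable_comp_sub_left hf).mul_continuousOn hg.continuousOn)
    (fun s hs => mul_pos (hf_pos _ ⟨sub_pos.mpr hs.2, sub_lt_self t hs.1⟩) (hg_pos s hs)) ht

lemma integral_integral_triangle_swap {a b : ℝ} (hab : a ≤ b) {F : ℝ → ℝ → ℝ}
    (hF : IntegrableOn (Function.uncurry F) (Ioc a b ×ˢ Ioc a b)) :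
    ∫ s in a..b, ∫ θ in a..s, F s θ = ∫ θ in a..b, ∫ s in θ..b, F s θ := by
  have hmeas : MeasurableSet {z : ℝ × ℝ | z.2 ≤ z.1} :=
    measurableSet_le measurable_snd measurable_fst
  have hswap := intervalIntegral_intervalIntegral_swap (a := a) (b := b) (c := a) (d := b)
    (F := fun s θ => {z : ℝ × ℝ | z.2 ≤ z.1}.indicator (Function.uncurry F) (s, θ))
    (by rw [uIoc_of_le hab]; exact hF.indicator hmeas)
  have hleft {s : ℝ} (hs : s ∈ uIcc a b) :
      ∫ θ in a..b, {z : ℝ × ℝ | z.2 ≤ z.1}.indicator (Function.uncurry F) (s, θ) =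
        ∫ θ in a..s, F s θ := by
    rw [uIcc_of_le hab] at hs
    have hset : Ioc a b ∩ Iic s = Ioc a s := by rw [Ioc_inter_Iic, min_eq_right hs.2]
    rw [intervalIntegral.integral_of_le hab, intervalIntegral.integral_of_le hs.1, ← hset]
    exact setIntegral_indicator (f := F s) measurableSet_Iic
  have hright {θ : ℝ} (hθ : θ ∈ uIcc a b) :
      ∫ s in a..b, {z : ℝ × ℝ | z.2 ≤ z.1}.indicator (Function.uncurry F) (s, θ) =
        ∫ s in θ..b, F s θ := by
    rw [uIcc_of_le hab] at hθ
    have hset : Icc a b ∩ Ici θ = Icc θ b := by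
      rw [← Ici_inter_Iic, inter_right_comm, Ici_inter_Ici, sup_eq_right.mpr hθ.1, Ici_inter_Iic]
    rw [intervalIntegral.integral_of_le hab, intervalIntegral.integral_of_le hθ.2,
      ← integral_Icc_eq_integral_Ioc, ← integral_Icc_eq_integral_Ioc, ← hset]
    exact setIntegral_indicator (f := fun s => F s θ) measurableSet_Ici
  rwa [intervalIntegral.integral_congr fun s hs => hleft hs,
    intervalIntegral.integral_congr fun θ hθ => hright hθ] at hswap

lemma laplaceConv_assoc {f g h : ℝ → ℝ} {t : ℝ} (ht : 0 ≤ t)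
    (hf : IntervalIntegrable f volume 0 t) (hg : Continuous g)
    (hh : IntervalIntegrable h volume 0 t) :
    laplaceConv f (laplaceConv g h) t = laplaceConv (laplaceConv f g) h t := by
  have hprod : IntegrableOn (fun z : ℝ × ℝ => f (t - z.1) * h z.2) (Icc 0 t ×ˢ Icc 0 t) := by
    rw [IntegrableOn, Measure.volume_eq_prod, ← Measure.prod_restrict]
    exact ((intervalIntegrable_iff_integrableOn_Icc_of_le ht).mp
      (intervalIntegrable_comp_sub_left hf)).mul_prod
      ((intervalIntegrable_iff_integrableOn_Icc_of_le ht).mp hh)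
  have hint : IntegrableOn (Function.uncurry fun s θ => g (s - θ) * (f (t - s) * h θ))
      (Ioc 0 t ×ˢ Ioc 0 t) :=
    (hprod.continuousOn_mul (Continuous.continuousOn (by fun_prop))
      (isCompact_Icc.prod isCompact_Icc)).mono_set
      (prod_mono Ioc_subset_Icc_self Ioc_subset_Icc_self)
  have hinner (s : ℝ) : ∫ θ in (0 : ℝ)..s, g (s - θ) * (f (t - s) * h θ) =
      f (t - s) * laplaceConv g h s := by
    simp only [laplaceConv, mul_left_comm _ (f (t - s)), intervalIntegral.integral_const_mul]
  have houter (θ : ℝ) : ∫ s in θ..t, g (s - θ) * (f (t - s) * h θ) =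
      laplaceConv f g (t - θ) * h θ := by
    have hshift := intervalIntegral.integral_comp_sub_right (a := θ) (b := t)
      (fun u => f (t - θ - u) * g u) θ
    rw [sub_self] at hshift
    rw [laplaceConv, ← hshift, ← intervalIntegral.integral_mul_const]
    refine intervalIntegral.integral_congr fun s _ => ?_
    rw [sub_sub_sub_cancel_right]
    ring
  have hswap := integral_integral_triangle_swap ht hint
  simp only [hinner, houter] at hswap
  exact hswap

lemma laplaceConv_one_left (g : ℝ → ℝ) (t : ℝ) :
    laplaceConv (fun _ => 1) g t = ∫ s in (0 : ℝ)..t, g s := by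
  simp only [laplaceConv, one_mul]

lemma laplaceConv_rpow_rpow {a b u : ℝ} (ha : 0 ≤ a) (hb : -1 < b) (hu : 0 ≤ u) :
    laplaceConv (· ^ b) (· ^ a) u = laplaceConv (· ^ b) (· ^ a) 1 * u ^ (a + b + 1) := by
  rcases hu.eq_or_lt with rfl | hu₀
  · rw [laplaceConv, intervalIntegral.integral_same, zero_rpow (by linarith), mul_zero]
  have hscale := intervalIntegral.smul_integral_comp_mul_left (a := 0) (b := 1)
    (fun s => (u - s) ^ b * s ^ a) u
  have hhom : ∫ x in (0 : ℝ)..1, (u - u * x) ^ b * (u * x) ^ a =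
      u ^ (a + b) * laplaceConv (· ^ b) (· ^ a) 1 := by
    rw [laplaceConv, ← intervalIntegral.integral_const_mul]
    refine intervalIntegral.integral_congr fun x hx => ?_
    rw [uIcc_of_le zero_le_one] at hx
    rw [show u - u * x = u * (1 - x) by ring, mul_rpow hu (sub_nonneg.mpr hx.2),
      mul_rpow hu hx.1, rpow_add hu₀]
    ring
  rw [hhom, mul_zero, mul_one, smul_eq_mul] at hscale
  rw [laplaceConv, ← hscale, rpow_add_one hu₀.ne']
  ring

lemma laplaceConv_rpow_rpow_pos {a b u : ℝ} (ha : 0 ≤ a) (hb : -1 < b) (hu : 0 < u) :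
    0 < laplaceConv (· ^ b) (· ^ a) u :=
  laplaceConv_pos hu (intervalIntegral.intervalIntegrable_rpow' hb)
    (continuous_rpow_const ha) (fun _ hs => rpow_pos_of_pos hs.1 _)
    (fun _ hs => rpow_pos_of_pos hs.1 _)

lemma laplaceConv_rpow_laplaceConv_rpow {a b t : ℝ} (ha : 0 ≤ a) (hb : -1 < b) (ht : 0 ≤ t)
    {g : ℝ → ℝ} (hg : IntervalIntegrable g volume 0 t) :
    laplaceConv (· ^ b) (laplaceConv (· ^ a) g) t =
      laplaceConv (· ^ b) (· ^ a) 1 * laplaceConv (· ^ (a + b + 1)) g t := by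
  rw [laplaceConv_assoc ht (intervalIntegral.intervalIntegrable_rpow' hb)
    (continuous_rpow_const ha) hg, ← laplaceConv_const_mul_left]
  exact laplaceConv_congr ht (fun u hu => laplaceConv_rpow_rpow ha hb hu.1) fun _ _ => rfl

lemma laplaceConv_rpow_pos_of_lt {a δ t : ℝ} (ha : 0 ≤ a) (haδ : a < δ) (ht : 0 < t) {g : ℝ → ℝ}
    (hg : Continuous g) (hpos : ∀ s ∈ Ioc 0 t, 0 < laplaceConv (· ^ a) g s) :
    0 < laplaceConv (· ^ δ) g t := by
  have hb : -1 < δ - a - 1 := by linarith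
  have hconv : 0 < laplaceConv (· ^ (δ - a - 1)) (laplaceConv (· ^ a) g) t :=
    laplaceConv_pos ht (intervalIntegral.intervalIntegrable_rpow' hb)
      (continuous_laplaceConv (continuous_rpow_const ha) hg)
      (fun _ hs => rpow_pos_of_pos hs.1 _) fun s hs => hpos s (Ioo_subset_Ioc_self hs)
  rw [laplaceConv_rpow_laplaceConv_rpow ha hb ht.le (hg.intervalIntegrable _ _),
    show a + (δ - a - 1) + 1 = δ by ring] at hconv
  exact pos_of_mul_pos_right hconv (laplaceConv_rpow_rpow_pos ha hb one_pos).le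

end LaplaceConvolution

section Oscillator

lemma laplaceConv_one_sub_cos_pos {N t : ℝ} (hN : 0 < N) (ht : 0 < t) {g : ℝ → ℝ}
    (hg : Continuous g) (hpos : ∀ s ∈ Ioc 0 t, 0 < g s) :
    0 < laplaceConv (fun x => 1 - cos (N * x)) g t := by
  have hx₀ : 0 < min t (π / N) / 2 := half_pos (lt_min ht (div_pos pi_pos hN))
  have hxt : min t (π / N) / 2 < t := by linarith [min_le_left t (π / N)]
  have hxN : N * (min t (π / N) / 2) < π := by
    have h := (le_div_iff₀' hN).mp (min_le_right t (π / N))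
    linarith [pi_pos]
  refine intervalIntegral.integral_pos ht (by fun_prop)
    (fun s hs => mul_nonneg (sub_nonneg.mpr (cos_le_one _)) (hpos s hs).le)
    ⟨t - min t (π / N) / 2, ⟨sub_nonneg.mpr hxt.le, sub_le_self t hx₀.le⟩,
      mul_pos (sub_pos.mpr ?_) (hpos _ ⟨sub_pos.mpr hxt, sub_le_self t hx₀.le⟩)⟩
  rw [sub_sub_cancel, ← cos_zero]
  exact cos_lt_cos_of_nonneg_of_le_pi le_rfl hxN.le (mul_pos hN hx₀)

/- With zero initial data, `w'' + N² w = v` has Laplace transform `(p² + N²) ŵ = v̂`, and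
`N² / (p (p² + N²))` is the transform of `1 - cos (N x)`. -/
lemma laplaceConv_one_sub_cos_of_oscillator {N t : ℝ} {w w' v : ℝ → ℝ} (ht : 0 ≤ t)
    (hw : ∀ s ∈ Icc 0 t, HasDerivAt w (w' s) s)
    (hw' : ∀ s ∈ Icc 0 t, HasDerivAt w' (v s - N ^ 2 * w s) s)
    (hw_zero : w 0 = 0) (hw'_zero : w' 0 = 0) (hw_cont : Continuous w) (hv : Continuous v) :
    laplaceConv (fun x => 1 - cos (N * x)) v t = N ^ 2 * laplaceConv (fun _ => 1) w t := by
  have hderiv : ∀ s ∈ uIcc 0 t,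
      HasDerivAt (fun s => w' s * (1 - cos (N * (t - s))) + N * w s * sin (N * (t - s)))
        ((1 - cos (N * (t - s))) * v s - N ^ 2 * w s) s := by
    intro s hs
    rw [uIcc_of_le ht] at hs
    have hphase : HasDerivAt (fun s => N * (t - s)) (-N) s := by
      simpa only [mul_neg, mul_one] using ((hasDerivAt_id' s).const_sub t).const_mul N
    refine (((hw' s hs).mul (hphase.cos.const_sub 1)).add
      (((hw s hs).const_mul N).mul hphase.sin)).congr_deriv ?_
    ring
  have hint : IntervalIntegrable (fun s => (1 - cos (N * (t - s))) * v s) volume 0 t :=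
    Continuous.intervalIntegrable (by fun_prop) _ _
  have hint' : IntervalIntegrable (fun s => N ^ 2 * w s) volume 0 t :=
    Continuous.intervalIntegrable (by fun_prop) _ _
  have hftc := intervalIntegral.integral_eq_sub_of_hasDerivAt hderiv (hint.sub hint')
  rw [intervalIntegral.integral_sub hint hint', intervalIntegral.integral_const_mul, hw_zero,
    hw'_zero, sub_self, mul_zero, cos_zero, sin_zero, sub_self] at hftc
  rw [laplaceConv_one_left, laplaceConv]
  linarith

lemma laplaceConv_rpow_add_one_pos_of_oscillator {N δ t : ℝ} {w w' v : ℝ → ℝ} (hN : 0 < N)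
    (hδ : 0 ≤ δ) (ht : 0 < t) (hw : ∀ s ∈ Icc 0 t, HasDerivAt w (w' s) s)
    (hw' : ∀ s ∈ Icc 0 t, HasDerivAt w' (v s - N ^ 2 * w s) s)
    (hw_zero : w 0 = 0) (hw'_zero : w' 0 = 0) (hw_cont : Continuous w) (hv : Continuous v)
    (hpos : ∀ s ∈ Ioc 0 t, 0 < laplaceConv (· ^ δ) v s) :
    0 < laplaceConv (· ^ (δ + 1)) w t := by
  have hrpow : Continuous fun x : ℝ => x ^ δ := continuous_rpow_const hδ
  have hcos : Continuous fun x => 1 - cos (N * x) := by fun_prop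
  have hosc : EqOn (laplaceConv (fun x => 1 - cos (N * x)) v)
      (fun s => N ^ 2 * laplaceConv (· ^ (0 : ℝ)) w s) (Icc 0 t) := fun s hs => by
    simp only [rpow_zero]
    exact laplaceConv_one_sub_cos_of_oscillator hs.1
      (fun x hx => hw x ⟨hx.1, hx.2.trans hs.2⟩) (fun x hx => hw' x ⟨hx.1, hx.2.trans hs.2⟩)
      hw_zero hw'_zero hw_cont hv
  have hkey : laplaceConv (fun x => 1 - cos (N * x)) (laplaceConv (· ^ δ) v) t =
      N ^ 2 * (laplaceConv (· ^ δ) (· ^ (0 : ℝ)) 1 * laplaceConv (· ^ (δ + 1)) w t) :=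
    calc laplaceConv (fun x => 1 - cos (N * x)) (laplaceConv (· ^ δ) v) t
        = laplaceConv (laplaceConv (fun x => 1 - cos (N * x)) (· ^ δ)) v t :=
          laplaceConv_assoc ht.le (hcos.intervalIntegrable _ _) hrpow (hv.intervalIntegrable _ _)
      _ = laplaceConv (laplaceConv (· ^ δ) fun x => 1 - cos (N * x)) v t := by
          rw [funext (laplaceConv_comm (fun x => 1 - cos (N * x)) (· ^ δ))]
      _ = laplaceConv (· ^ δ) (laplaceConv (fun x => 1 - cos (N * x)) v) t :=
          (laplaceConv_assoc ht.le (hrpow.intervalIntegrable _ _) hcos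
            (hv.intervalIntegrable _ _)).symm
      _ = N ^ 2 * laplaceConv (· ^ δ) (laplaceConv (· ^ (0 : ℝ)) w) t := by
          rw [laplaceConv_congr ht.le (fun _ _ => rfl) hosc, laplaceConv_const_mul_right]
      _ = _ := by
          rw [laplaceConv_rpow_laplaceConv_rpow le_rfl (by linarith) ht.le
            (hw_cont.intervalIntegrable _ _), zero_add]
  have hconv := laplaceConv_one_sub_cos_pos hN ht (continuous_laplaceConv hrpow hv) hpos
  rw [hkey] at hconv
  exact pos_of_mul_pos_right (pos_of_mul_pos_right hconv (sq_nonneg N))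
    (laplaceConv_rpow_rpow_pos le_rfl (by linarith) one_pos).le

end Oscillator

section Gegenbauer

open Polynomial

lemma sinWeightedDeriv_gegenbauer_add_one {l : ℝ} (hl : l ≠ 0) (n : ℕ) :
    sinWeightedDeriv (2 * l + 1) (sinWeightedDeriv (2 * l + 2) (gegenbauer (l + 1) n)) =
      C ((l + 1) * (n + 2 * l + 1) * (n + 2 * l) / l) * gegenbauer l n -
        C ((n + 2 * l + 2) ^ 2) * ((1 - X ^ 2) * gegenbauer (l + 1) n) := by
  have hode := gegenbauerOp_gegenbauer (l + 1) n
  have hode_succ := gegenbauerOp_gegenbauer l (n + 1)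
  have hrel := one_sub_X_sq_mul_derivative_gegenbauer_succ l n
  have hconst : (C l : ℝ[X]) * C ((l + 1) * (n + 2 * l + 1) * (n + 2 * l) / l) =
      (C l + 1) * (n + 2 * C l + 1) * (n + 2 * C l) := by
    rw [← C_mul, mul_div_cancel₀ _ hl]
    simp only [C_mul, C_add, C_1, map_natCast, map_ofNat]
  rw [gegenbauerOp] at hode hode_succ
  simp only [derivative_gegenbauer_succ, derivative_mul, derivative_C, derivative_ofNat, C_add, C_1,
    Nat.cast_add, Nat.cast_one, zero_mul, mul_zero, zero_add] at hode hode_succ hrel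
  refine mul_left_cancel₀ (C_ne_zero.mpr hl) ?_
  simp only [sinWeightedDeriv, derivative_mul, derivative_sub, derivative_one, derivative_X,
    derivative_X_pow, derivative_add, derivative_C, derivative_ofNat, C_add, C_mul, C_1, C_pow,
    map_natCast, map_ofNat]
  linear_combination C l * (1 - X ^ 2) * hode - (C l + 1) * X * hode_succ +
    (C l + 1) * (n + 2 * C l + 1) * hrel - gegenbauer l n * hconst

lemma hasDerivAt_sinWeighted_sinWeightedDeriv_gegenbauer {l θ : ℝ} (hl : 0 < l)
    (hθ : 0 ≤ sin θ) (n : ℕ) :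
    HasDerivAt
      (sinWeighted (2 * l + 1) (sinWeightedDeriv (2 * l + 2) (gegenbauer (l + 1) n)))
      ((l + 1) * (n + 2 * l + 1) * (n + 2 * l) / l * sinWeighted (2 * l) (gegenbauer l n) θ -
        (n + 2 * l + 2) ^ 2 * sinWeighted (2 * l + 2) (gegenbauer (l + 1) n) θ) θ := by
  refine (hasDerivAt_sinWeighted (by linarith) hθ _).congr_deriv ?_
  rw [add_sub_cancel_right, sinWeightedDeriv_gegenbauer_add_one hl.ne',
    sinWeighted_add_two (by positivity) hθ]
  simp only [sinWeighted, eval_sub, eval_mul, eval_C]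
  ring

lemma FG_eq_laplaceConv {l : ℝ} (hl : 0 < l) (n : ℕ) (δ t : ℝ) :
    FG n l δ t = laplaceConv (· ^ δ) (sinWeighted (2 * l) (gegenbauer l n)) t := by
  simp only [FG, laplaceConv, sinWeighted, gegenbauerC_eq_eval_gegenbauer hl, mul_assoc]

lemma FG_two_pos {l t : ℝ} (hl : 0 < l) (hl₁ : l ≤ 1) (n : ℕ) (ht : t ∈ Ioc 0 π) :
    0 < FG n l 2 t := by
  have h := integral_sub_sq_mul_sinWeighted_pos hl hl₁ n ht
  simpa only [FG_eq_laplaceConv hl, laplaceConv, rpow_two] using h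

lemma FG_pos_of_lt {l a δ t : ℝ} (hl : 0 < l) (ha : 0 ≤ a) (haδ : a < δ) (n : ℕ) (ht : 0 < t)
    (hpos : ∀ s ∈ Ioc 0 t, 0 < FG n l a s) : 0 < FG n l δ t := by
  simp only [FG_eq_laplaceConv hl] at hpos ⊢
  exact laplaceConv_rpow_pos_of_lt ha haδ ht (continuous_sinWeighted (by positivity) _) hpos

lemma FG_add_one_pos {l δ t : ℝ} (hl : 0 < l) (hδ : 0 ≤ δ) (n : ℕ) (ht : t ∈ Ioc 0 π)
    (hpos : ∀ s ∈ Ioc 0 t, 0 < FG n l δ s) : 0 < FG n (l + 1) (δ + 1) t := by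
  have hsin {s : ℝ} (hs : s ∈ Icc 0 t) : 0 ≤ sin s := sin_nonneg_of_mem_Icc ⟨hs.1, hs.2.trans ht.2⟩
  have hw : ∀ s ∈ Icc 0 t, HasDerivAt (sinWeighted (2 * l + 2) (gegenbauer (l + 1) n))
      (sinWeighted (2 * l + 1) (sinWeightedDeriv (2 * l + 2) (gegenbauer (l + 1) n)) s) s :=
    fun s hs => by
      convert hasDerivAt_sinWeighted (p := 2 * l + 2) (by linarith) (hsin hs) _ using 2
      ring
  rw [FG_eq_laplaceConv (by positivity), show 2 * (l + 1) = 2 * l + 2 by ring]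
  refine laplaceConv_rpow_add_one_pos_of_oscillator (N := n + 2 * l + 2) (by positivity) hδ ht.1
    hw (fun s hs => hasDerivAt_sinWeighted_sinWeightedDeriv_gegenbauer hl (hsin hs) n) ?_ ?_
    (continuous_sinWeighted (by positivity) _)
    ((continuous_sinWeighted (by positivity) _).const_mul _) fun s hs => ?_
  · rw [sinWeighted, sin_zero, zero_rpow (by positivity), mul_zero]
  · rw [sinWeighted, sin_zero, zero_rpow (by positivity), mul_zero]
  · rw [laplaceConv_const_mul_right, ← FG_eq_laplaceConv hl]
    exact mul_pos (by positivity) (hpos s hs)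

lemma FG_natCast_add_two_pos (j : ℕ) {l t : ℝ} (hjl : j < l) (hlj : l ≤ j + 1) (n : ℕ)
    (ht : t ∈ Ioc 0 π) : 0 < FG n l (j + 2) t := by
  induction j generalizing l t with
  | zero =>
    rw [Nat.cast_zero] at hjl hlj ⊢
    rw [zero_add] at hlj ⊢
    exact FG_two_pos hjl hlj n ht
  | succ j ih =>
    push_cast at hjl hlj ⊢
    have hl : 0 < l - 1 := by linarith [j.cast_nonneg (α := ℝ)]
    have hstep := FG_add_one_pos (δ := j + 2) hl (by positivity) n ht
      fun s hs => ih (by linarith) (by linarith) ⟨hs.1, hs.2.trans ht.2⟩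
    rwa [sub_add_cancel, add_right_comm] at hstep

end Gegenbauer

theorem FG_pos_of_real_lambda (lam : ℝ) (hlam : 0 < lam) (δ : ℝ)
    (hδ : ((⌈lam⌉ : ℤ) : ℝ) + 1 ≤ δ) (n : ℕ) (t : ℝ) (ht : t ∈ Set.Ioc (0:ℝ) π) :
    0 < FG n lam δ t := by
  obtain ⟨j, hj⟩ : ∃ j : ℕ, ⌈lam⌉ = (j : ℤ) + 1 :=
    ⟨(⌈lam⌉ - 1).toNat, by have := Int.ceil_pos.mpr hlam; lia⟩
  obtain ⟨hlt, hle⟩ : (j : ℝ) < lam ∧ lam ≤ j + 1 := by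
    simpa using Int.ceil_eq_iff.mp hj
  have hpos (s : ℝ) (hs : s ∈ Ioc 0 π) : 0 < FG n lam (j + 2) s :=
    FG_natCast_add_two_pos j hlt hle n hs
  rw [hj] at hδ
  push_cast at hδ
  rcases (show (j : ℝ) + 2 ≤ δ by linarith).eq_or_lt with rfl | hlt_δ
  · exact hpos t ht
  · exact FG_pos_of_lt hlam (by positivity) hlt_δ n ht.1
      fun s hs => hpos s ⟨hs.1, hs.2.trans ht.2⟩
end

section
/- Let α > 0 be real, let β ∈ ℕ (a nonnegative integer), and let δ be a real number with δ ≥ ⌈α⌉ + 2. Then F_n^{(α,β),δ}(t) > F_n^{(α,β+1),δ}(t) for all t ∈ (0, π] and all n ∈ ℕ (n ≥ 0). -/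
open MeasureTheory Real Set

/-!
Splitting `P_n^{(a,b)}` as `(1-x)/2 P_n^{(a+1,b)} + (1+x)/2 P_n^{(a,b+1)}` turns the difference
`F_n^{(α,β),δ} - F_n^{(α,β+1),δ}` into `F_n^{(α+1,β),δ}`, so the point is that `F_n^{(α,β),δ}` is
positive for `α > 0`, `β ∈ ℕ` and `δ ≥ ⌈α⌉ + 1`. A contiguous relation writes a positive multiple of
`F_n^{(α,β+1),δ}` as a positive combination of `F_n^{(α,β),δ}` and `F_{n+1}^{(α,β),δ}`, which leaves
`β = 0`: there `F` is a positive multiple of the fractional integral of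
`w_{n,α}(θ) = sin(θ/2)^{2α} P_n^{(α-1/2,-1/2)}(cos θ) / P_n^{(α-1/2,-1/2)}(1)`.

These functions solve the forced oscillator `w_{n,α}'' + n² w_{n,α} = α (α - 1/2) w_{n+1,α-1}`,
whose Duhamel kernel, after one more integration, is the nonnegative function
`(1 - cos (n s)) / n²`. Hence positivity passes from `(n + 1, α - 1, δ - 1)` to `(n, α, δ)`, and
only `0 < α ≤ 1`, `δ ≥ 2` remains. In that range the cosine coefficients of `(t - θ)₊^δ` are
summable and strictly decreasing, and the integrals of `w_{n,α}` against the Dirichlet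
kernels are nonnegative by a two-term recursion, so summation by parts in Parseval's identity gives
positivity.
-/

section RingChoose

variable {R : Type*} [CommRing R] [BinomialRing R]

theorem succ_mul_ringChoose_succ (r : R) (k : ℕ) :
    (k + 1) * Ring.choose r (k + 1) = (r - k) * Ring.choose r k := by
  have h := Ring.choose_smul_choose r (Nat.le_succ k)
  simp only [Nat.succ_eq_add_one, Nat.choose_succ_self_right, Nat.add_sub_cancel_left,
    Ring.choose_one_right, nsmul_eq_mul, Nat.cast_add, Nat.cast_one] at h
  rw [h, mul_comm]

theorem succ_mul_ringChoose_succ_succ (r : R) (k : ℕ) :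
    (k + 1) * Ring.choose (r + 1) (k + 1) = (r + 1) * Ring.choose r k := by
  rw [Ring.choose_succ_succ, mul_add, succ_mul_ringChoose_succ]
  ring

end RingChoose

theorem ringChoose_pos {r : ℝ} {n : ℕ} (h : n < r + 1) : 0 < Ring.choose r n := by
  induction n with
  | zero => simp
  | succ n ih =>
    push_cast at h
    have hprod : 0 < ((n : ℝ) + 1) * Ring.choose r (n + 1) := by
      rw [succ_mul_ringChoose_succ]
      exact mul_pos (by linarith) (ih (by linarith))
    exact pos_of_mul_pos_right hprod (by positivity)

theorem genBinom_natCast {u : ℝ} {k : ℕ} (h : k < u + 1) : genBinom u k = Ring.choose u k := by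
  induction k with
  | zero =>
    have hΓ : Real.Gamma (u + 1) ≠ 0 := (Real.Gamma_pos_of_pos (by simpa using h)).ne'
    simp [genBinom, hΓ]
  | succ k ih =>
    push_cast at h
    have hk : 0 < u - k := by linarith
    have hΓ := (Real.Gamma_pos_of_pos hk).ne'
    have hΓ' := (Real.Gamma_pos_of_pos (by positivity : (0 : ℝ) < k + 1)).ne'
    have hk' : (k : ℝ) + 1 ≠ 0 := by positivity
    refine mul_left_cancel₀ hk' ?_
    rw [succ_mul_ringChoose_succ, ← ih (by linarith)]
    simp only [genBinom, Nat.cast_add, Nat.cast_one,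
      show u - (k + 1) + 1 = u - k by ring, Real.Gamma_add_one hk.ne', Real.Gamma_add_one hk']
    field_simp

section GeneratingFunction

open PowerSeries

/-- The formal power series `(1 + c T) ^ r`. -/
noncomputable def scaledBinomialSeries (r c : ℝ) : PowerSeries ℝ :=
  rescale c (PowerSeries.binomialSeries ℝ r)

theorem coeff_scaledBinomialSeries (r c : ℝ) (n : ℕ) :
    coeff n (scaledBinomialSeries r c) = Ring.choose r n * c ^ n := by
  simp [scaledBinomialSeries, coeff_rescale, mul_comm]

theorem scaledBinomialSeries_add_one (r c : ℝ) :
    scaledBinomialSeries (r + 1) c = (1 + C c * X) * scaledBinomialSeries r c := by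
  have h : PowerSeries.binomialSeries ℝ (1 : ℝ) = 1 + X := by
    simpa using binomialSeries_nat (R := ℝ) (A := ℝ) 1
  rw [scaledBinomialSeries, binomialSeries_add, h, map_mul, mul_comm]
  simp [scaledBinomialSeries, rescale_X]

theorem derivative_scaledBinomialSeries_add_one (r c : ℝ) :
    d⁄dX ℝ (scaledBinomialSeries (r + 1) c) = C ((r + 1) * c) * scaledBinomialSeries r c := by
  ext n
  rw [coeff_derivative, coeff_C_mul, coeff_scaledBinomialSeries, coeff_scaledBinomialSeries]
  linear_combination c ^ (n + 1) * succ_mul_ringChoose_succ_succ r n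

theorem jacobiP_eq_coeff (n : ℕ) {a b : ℝ} (ha : -1 < a) (hb : -1 < b) (x : ℝ) :
    jacobiP n a b x = coeff n (scaledBinomialSeries (n + b) ((x - 1) / 2) *
      scaledBinomialSeries (n + a) ((x + 1) / 2)) := by
  rw [coeff_mul, Finset.Nat.sum_antidiagonal_eq_sum_range_succ_mk, jacobiP]
  refine Finset.sum_congr rfl fun k hk => ?_
  have hkn : k ≤ n := Finset.mem_range_succ_iff.mp hk
  have hkn' : (k : ℝ) ≤ n := by exact_mod_cast hkn
  rw [← Nat.cast_sub hkn, genBinom_natCast, genBinom_natCast, coeff_scaledBinomialSeries,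
    coeff_scaledBinomialSeries]
  · ring
  · linarith
  · rw [Nat.cast_sub hkn]
    linarith [k.cast_nonneg (α := ℝ)]

theorem C_add_one_div_two (x : ℝ) : (C ((x + 1) / 2) : ℝ⟦X⟧) = 1 + C ((x - 1) / 2) := by
  rw [← map_one C, ← map_add]
  congr 1
  ring

theorem jacobiP_eq_add_jacobiP_succ (n : ℕ) {a b : ℝ} (ha : -1 < a) (hb : -1 < b) (x : ℝ) :
    jacobiP n a b x =
      (1 - x) / 2 * jacobiP n (a + 1) b x + (1 + x) / 2 * jacobiP n a (b + 1) x := by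
  have ha' : -1 < a + 1 := by linarith
  have hb' : -1 < b + 1 := by linarith
  rw [jacobiP_eq_coeff n ha hb, jacobiP_eq_coeff n ha' hb, jacobiP_eq_coeff n ha hb', ← coeff_C_mul,
    ← coeff_C_mul, ← map_add, ← add_assoc, ← add_assoc, scaledBinomialSeries_add_one,
    scaledBinomialSeries_add_one]
  congr 1
  rw [show (1 - x) / 2 = -((x - 1) / 2) by ring, add_comm 1 x, map_neg,
    C_add_one_div_two]
  ring

theorem mul_jacobiP_add_one_right (n : ℕ) {a b : ℝ} (ha : -1 < a) (hb : -1 < b) (x : ℝ) :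
    (2 * n + a + b + 2) * ((1 + x) / 2 * jacobiP n a (b + 1) x) =
      (n + 1) * jacobiP (n + 1) a b x + (n + b + 1) * jacobiP n a b x := by
  have hb' : -1 < b + 1 := by linarith
  rw [jacobiP_eq_coeff n ha hb, jacobiP_eq_coeff n ha hb', jacobiP_eq_coeff (n + 1) ha hb,
    mul_comm ((n : ℝ) + 1), ← coeff_derivative, Derivation.leibniz, Nat.cast_add_one,
    add_right_comm (n : ℝ) 1 a, add_right_comm (n : ℝ) 1 b, ← add_assoc (n : ℝ) b 1,
    derivative_scaledBinomialSeries_add_one, derivative_scaledBinomialSeries_add_one]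
  simp only [← coeff_C_mul, ← map_add]
  congr 1
  simp only [scaledBinomialSeries_add_one, smul_eq_mul, map_mul, map_add, add_comm 1 x,
    C_add_one_div_two, map_one, map_natCast, map_ofNat]
  ring

end GeneratingFunction

section Hypergeometric

open Nat

theorem ordinaryHypergeometricCoefficient_succ {𝕂 : Type*} [Field 𝕂] (a b c : 𝕂) (j : ℕ) :
    ordinaryHypergeometricCoefficient a b c (j + 1) =
      ordinaryHypergeometricCoefficient a b c j * ((a + j) * (b + j) / ((c + j) * (j + 1))) := by
  simp only [ordinaryHypergeometricCoefficient, ascPochhammer_succ_eval, factorial_succ, cast_mul,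
    cast_add, cast_one, mul_inv, div_eq_mul_inv]
  ring

theorem ringChoose_mul_ringChoose_eq_sum (r s : ℝ) {n j : ℕ} (hj : j ≤ n) :
    Ring.choose r (n - j) * Ring.choose (s + (r - (n - j))) j = ∑ k ∈ Finset.range (j + 1),
      Ring.choose s k * (Ring.choose r (n - k) * (n - k).choose (j - k)) := by
  rw [Ring.add_choose_eq j (Commute.all _ _), Finset.Nat.sum_antidiagonal_eq_sum_range_succ_mk,
    Finset.mul_sum]
  refine Finset.sum_congr rfl fun k hk => ?_
  have hkj : k ≤ j := Finset.mem_range_succ_iff.mp hk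
  have hchoose := Ring.choose_smul_choose r (show n - j ≤ n - k by omega)
  rw [← choose_symm (by omega), show n - k - (n - j) = j - k by omega, nsmul_eq_mul,
    cast_sub hj] at hchoose
  linear_combination -Ring.choose s k * hchoose

theorem ringChoose_mul_ringChoose_eq_hypergeometric (n : ℕ) {a : ℝ} (ha : -1 < a) (b : ℝ) {j : ℕ}
    (hj : j ≤ n) :
    Ring.choose (n + a) (n - j) * Ring.choose (n + b + (n + a - (n - j))) j = (-1) ^ j *
      (Ring.choose (n + a) n *
        ordinaryHypergeometricCoefficient (-(n : ℝ)) (n + a + b + 1) (a + 1) j) := by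
  induction j with
  | zero => simp [ordinaryHypergeometricCoefficient]
  | succ j ih =>
    obtain ⟨d, rfl⟩ := Nat.exists_eq_add_of_le' hj
    have ih := ih (by omega)
    rw [show d + (j + 1) - j = d + 1 by omega] at ih
    rw [Nat.add_sub_cancel, ordinaryHypergeometricCoefficient_succ, pow_succ]
    push_cast at ih ⊢
    have hchooseₐ := succ_mul_ringChoose_succ ((d : ℝ) + (j + 1) + a) d
    set D := Ring.choose ((d : ℝ) + (j + 1) + a) d
    set s : ℝ := d + (j + 1) + b + (d + (j + 1) + a - (d + (j + 1) - j)) with hs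
    have hchooseₛ := succ_mul_ringChoose_succ_succ s j
    rw [show s + 1 = d + (j + 1) + b + (d + (j + 1) + a - (d + (j + 1) - (j + 1))) by
      rw [hs]; ring] at hchooseₛ
    have haj : a + 1 + j ≠ 0 := ne_of_gt (by linarith [j.cast_nonneg (α := ℝ)])
    have hj1 : (j : ℝ) + 1 ≠ 0 := by positivity
    rw [mul_div_assoc', mul_div_assoc', mul_div_assoc', eq_div_iff (mul_ne_zero haj hj1)]
    linear_combination (d + 1) * (d + a + b + 2 * j + 2) * ih + (a + 1 + j) * D * hchooseₛ -
      (d + a + b + 2 * j + 2) * Ring.choose s j * hchooseₐ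

theorem jacobiP_eq_sum_hypergeometric (n : ℕ) {a b : ℝ} (ha : -1 < a) (hb : -1 < b) (x : ℝ) :
    jacobiP n a b x = Ring.choose (n + a) n * ∑ j ∈ Finset.range (n + 1),
      ordinaryHypergeometricCoefficient (-(n : ℝ)) (n + a + b + 1) (a + 1) j *
        ((1 - x) / 2) ^ j := by
  have hexpand : jacobiP n a b x = ∑ k ∈ Finset.range (n + 1), ∑ i ∈ Finset.range (n + 1 - k),
      Ring.choose (n + b) k * (Ring.choose (n + a) (n - k) * (n - k).choose (k + i - k)) *
        ((x - 1) / 2) ^ (k + i) := by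
    refine Finset.sum_congr rfl fun k hk => ?_
    have hkn : k ≤ n := Finset.mem_range_succ_iff.mp hk
    have hkn' : (k : ℝ) ≤ n := by exact_mod_cast hkn
    rw [← Nat.cast_sub hkn, genBinom_natCast (by rw [Nat.cast_sub hkn]; linarith),
      genBinom_natCast (by linarith), show (x + 1) / 2 = (x - 1) / 2 + 1 by ring, add_pow,
      Finset.mul_sum, Nat.succ_sub hkn]
    refine Finset.sum_congr rfl fun i _ => ?_
    rw [Nat.add_sub_cancel_left, pow_add]
    ring
  rw [hexpand, ← Finset.sum_range_diag_flip (n + 1) fun k i => Ring.choose ((n : ℝ) + b) k *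
    (Ring.choose ((n : ℝ) + a) (n - k) * (n - k).choose (k + i - k)) *
      ((x - 1) / 2) ^ (k + i), Finset.mul_sum]
  refine Finset.sum_congr rfl fun j hj => ?_
  have hjn : j ≤ n := Finset.mem_range_succ_iff.mp hj
  have hsum := ringChoose_mul_ringChoose_eq_sum ((n : ℝ) + a) (n + b) hjn
  rw [ringChoose_mul_ringChoose_eq_hypergeometric n ha b hjn] at hsum
  have hgoal : Ring.choose ((n : ℝ) + a) n * (ordinaryHypergeometricCoefficient (-(n : ℝ))
      (n + a + b + 1) (a + 1) j * ((1 - x) / 2) ^ j) = (∑ k ∈ Finset.range (j + 1),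
        Ring.choose ((n : ℝ) + b) k * (Ring.choose ((n : ℝ) + a) (n - k) *
          (n - k).choose (j - k))) * ((x - 1) / 2) ^ j := by
    rw [← hsum, show (1 - x) / 2 = -1 * ((x - 1) / 2) by ring, mul_pow]
    ring
  rw [hgoal, Finset.sum_mul]
  refine Finset.sum_congr rfl fun k hk => ?_
  rw [Nat.add_sub_cancel' (Finset.mem_range_succ_iff.mp hk)]

end Hypergeometric

section FractionalIntegral

theorem posPart_rpow_of_nonpos {δ x : ℝ} (hδ : 0 < δ) (hx : x ≤ 0) : x⁺ ^ δ = 0 := by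
  rw [posPart_eq_zero.mpr hx, Real.zero_rpow hδ.ne']

theorem continuous_posPart_rpow {δ : ℝ} (hδ : 0 ≤ δ) : Continuous fun x : ℝ => x⁺ ^ δ :=
  continuous_posPart.rpow_const fun _ => Or.inr hδ

theorem hasDerivAt_posPart_rpow {δ : ℝ} (hδ : 1 < δ) (x : ℝ) :
    HasDerivAt (fun x : ℝ => x⁺ ^ δ) (δ * x⁺ ^ (δ - 1)) x := by
  have hleft : ∀ y ∈ Iic (0 : ℝ), y⁺ ^ δ = 0 := fun y hy => posPart_rpow_of_nonpos (by linarith) hy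
  have hright : ∀ y ∈ Ici (0 : ℝ), y⁺ ^ δ = y ^ δ := fun y hy => by rw [posPart_eq_self.mpr hy]
  have hrpow := Real.hasDerivAt_rpow_const (x := x) (Or.inr hδ.le)
  rcases lt_trichotomy x 0 with hx | rfl | hx
  · rw [posPart_rpow_of_nonpos (by linarith) hx.le, mul_zero]
    exact (hasDerivAt_const x 0).congr_of_eventuallyEq
      (Filter.eventually_of_mem (Iic_mem_nhds hx) hleft)
  · rw [Real.zero_rpow (by linarith), mul_zero] at hrpow
    rw [posPart_rpow_of_nonpos (by linarith) le_rfl, mul_zero, ← hasDerivWithinAt_univ,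
      ← Iic_union_Ici (a := (0 : ℝ))]
    exact ((hasDerivWithinAt_const 0 _ 0).congr hleft (hleft 0 self_mem_Iic)).union
      (hrpow.hasDerivWithinAt.congr hright (hright 0 self_mem_Ici))
  · rw [posPart_eq_self.mpr hx.le]
    exact hrpow.congr_of_eventuallyEq (Filter.eventually_of_mem (Ici_mem_nhds hx) hright)

/-- The Riemann–Liouville fractional integral of `u` of order `δ + 1` based at `0`, without its
normalizing factor `1 / Γ(δ + 1)`. -/
noncomputable def fracInt (δ : ℝ) (u : ℝ → ℝ) (s : ℝ) : ℝ :=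
  ∫ θ in 0..s, (s - θ) ^ δ * u θ

variable {δ s : ℝ} {u v : ℝ → ℝ}

@[simp]
theorem fracInt_zero_right (δ : ℝ) (u : ℝ → ℝ) : fracInt δ u 0 = 0 :=
  intervalIntegral.integral_same

theorem fracInt_const_mul (δ c : ℝ) (u : ℝ → ℝ) (s : ℝ) :
    fracInt δ (fun θ => c * u θ) s = c * fracInt δ u s := by
  simp only [fracInt, mul_left_comm _ c, intervalIntegral.integral_const_mul]

theorem intervalIntegrable_sub_rpow (hδ : -1 < δ) (s : ℝ) :
    IntervalIntegrable (fun θ => (s - θ) ^ δ) volume 0 s := by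
  simpa using (intervalIntegral.intervalIntegrable_rpow' hδ (a := s) (b := 0)).comp_sub_left s

theorem intervalIntegrable_sub_rpow_mul (hδ : -1 < δ) (hu : Continuous u) (s : ℝ) :
    IntervalIntegrable (fun θ => (s - θ) ^ δ * u θ) volume 0 s :=
  (intervalIntegrable_sub_rpow hδ s).mul_continuousOn hu.continuousOn

theorem fracInt_add (hδ : -1 < δ) (hu : Continuous u) (hv : Continuous v) (s : ℝ) :
    fracInt δ (fun θ => u θ + v θ) s = fracInt δ u s + fracInt δ v s := by
  simp only [fracInt, mul_add]
  exact intervalIntegral.integral_add (intervalIntegrable_sub_rpow_mul hδ hu s)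
    (intervalIntegrable_sub_rpow_mul hδ hv s)

theorem fracInt_nonneg (hs : 0 ≤ s) (hu : ∀ θ ∈ Icc 0 s, 0 ≤ u θ) : 0 ≤ fracInt δ u s :=
  intervalIntegral.integral_nonneg hs fun θ hθ =>
    mul_nonneg (Real.rpow_nonneg (sub_nonneg.mpr hθ.2) δ) (hu θ hθ)

theorem fracInt_mono (hδ : -1 < δ) (hs : 0 ≤ s) (hu : Continuous u) (hv : Continuous v)
    (huv : ∀ θ ∈ Icc 0 s, u θ ≤ v θ) : fracInt δ u s ≤ fracInt δ v s :=
  intervalIntegral.integral_mono_on hs (intervalIntegrable_sub_rpow_mul hδ hu s)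
    (intervalIntegrable_sub_rpow_mul hδ hv s) fun θ hθ =>
      mul_le_mul_of_nonneg_left (huv θ hθ) (Real.rpow_nonneg (sub_nonneg.mpr hθ.2) δ)

theorem fracInt_pos (hδ : -1 < δ) (hs : 0 < s) (hu : Continuous u) (hpos : ∀ θ ∈ Ioo 0 s, 0 < u θ) :
    0 < fracInt δ u s :=
  intervalIntegral.intervalIntegral_pos_of_pos_on (intervalIntegrable_sub_rpow_mul hδ hu s)
    (fun θ hθ => mul_pos (Real.rpow_pos_of_pos (sub_pos.mpr hθ.2) δ) (hpos θ hθ)) hs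

theorem fracInt_deriv {u' : ℝ → ℝ} (hδ : 0 < δ) (hs : 0 ≤ s) (hu : Continuous u)
    (hu' : Continuous u') (hderiv : ∀ θ ∈ Ioo 0 s, HasDerivAt u (u' θ) θ) (hu0 : u 0 = 0) :
    fracInt δ u' s = δ * fracInt (δ - 1) u s := by
  have hpow : ContinuousOn (fun θ => (s - θ) ^ δ) (uIcc 0 s) :=
    ((continuous_const.sub continuous_id).rpow_const fun _ => Or.inr hδ.le).continuousOn
  have hpow' : ∀ θ ∈ Ioo (min 0 s) (max 0 s),
      HasDerivAt (fun θ => (s - θ) ^ δ) (-(δ * (s - θ) ^ (δ - 1))) θ := fun θ hθ => by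
    rw [min_eq_left hs, max_eq_right hs] at hθ
    simpa using ((hasDerivAt_id' θ).const_sub s).rpow_const (Or.inl (sub_pos.mpr hθ.2).ne')
  have hparts := intervalIntegral.integral_mul_deriv_eq_deriv_mul_of_hasDerivAt hpow
    hu.continuousOn hpow' (by rwa [min_eq_left hs, max_eq_right hs])
    ((intervalIntegrable_sub_rpow (by linarith) s).const_mul δ).neg (hu'.intervalIntegrable 0 s)
  simpa [fracInt, hu0, Real.zero_rpow hδ.ne', mul_assoc] using hparts

theorem fracInt_eq_integral_posPart {T : ℝ} (hδ : 0 < δ) (hu : Continuous u) (hs : s ∈ Icc 0 T) :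
    fracInt δ u s = ∫ θ in 0..T, (s - θ)⁺ ^ δ * u θ := by
  have hcont : Continuous fun θ => (s - θ)⁺ ^ δ * u θ :=
    ((continuous_posPart_rpow hδ.le).comp (continuous_const.sub continuous_id)).mul hu
  have htail : ∫ θ in s..T, (s - θ)⁺ ^ δ * u θ = 0 := by
    refine (intervalIntegral.integral_congr (g := fun _ => 0) fun θ hθ => ?_).trans (by simp)
    rw [uIcc_of_le hs.2] at hθ
    simp only [posPart_rpow_of_nonpos hδ (sub_nonpos.mpr hθ.1), zero_mul]
  rw [← intervalIntegral.integral_add_adjacent_intervals (hcont.intervalIntegrable 0 s)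
    (hcont.intervalIntegrable s T), htail, add_zero]
  refine intervalIntegral.integral_congr fun θ hθ => ?_
  rw [uIcc_of_le hs.1] at hθ
  simp only [posPart_eq_self.mpr (sub_nonneg.mpr hθ.2)]

theorem continuousOn_fracInt (hδ : 0 < δ) (hu : Continuous u) (T : ℝ) :
    ContinuousOn (fracInt δ u) (Icc 0 T) := by
  refine ContinuousOn.congr (f := fun s => ∫ θ in 0..T, (s - θ)⁺ ^ δ * u θ) ?_
    fun s hs => fracInt_eq_integral_posPart hδ hu hs
  refine Continuous.continuousOn <|
    intervalIntegral.continuous_parametric_intervalIntegral_of_continuous' ?_ 0 T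
  exact ((continuous_posPart_rpow hδ.le).comp (continuous_fst.sub continuous_snd)).mul
    (hu.comp continuous_snd)

theorem hasDerivAt_fracInt (hδ : 1 < δ) (hu : Continuous u) (hs : 0 < s) :
    HasDerivAt (fracInt δ u) (δ * fracInt (δ - 1) u s) s := by
  have hcont : ∀ η : ℝ, 0 ≤ η → ∀ x, Continuous fun θ => (x - θ)⁺ ^ η * u θ := fun η hη x =>
    ((continuous_posPart_rpow hη).comp (continuous_const.sub continuous_id)).mul hu
  have hderiv := (intervalIntegral.hasDerivAt_integral_of_dominated_loc_of_deriv_le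
    (μ := volume) (a := 0) (b := s + 1) (F := fun x θ => (x - θ)⁺ ^ δ * u θ)
    (F' := fun x θ => δ * ((x - θ)⁺ ^ (δ - 1) * u θ)) (x₀ := s)
    (bound := fun θ => δ * ((s + 1) ^ (δ - 1) * ‖u θ‖)) (Ioo_mem_nhds hs (lt_add_one s))
    (Filter.Eventually.of_forall fun x => (hcont δ (by linarith) x).aestronglyMeasurable)
    ((hcont δ (by linarith) s).intervalIntegrable _ _)
    ((hcont (δ - 1) (by linarith) s).const_mul δ).aestronglyMeasurable
    (Filter.Eventually.of_forall fun θ hθ x hx => ?_)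
    ((hu.norm.const_mul _).const_mul δ |>.intervalIntegrable _ _)
    (Filter.Eventually.of_forall fun θ _ x _ => ?_)).2
  · rw [intervalIntegral.integral_const_mul, ← fracInt_eq_integral_posPart (by linarith) hu
      ⟨hs.le, by linarith⟩] at hderiv
    refine hderiv.congr_of_eventuallyEq (Filter.eventually_of_mem
      (Ioo_mem_nhds hs (lt_add_one s)) fun x hx => ?_)
    exact fracInt_eq_integral_posPart (by linarith) hu ⟨hx.1.le, hx.2.le⟩
  · rw [uIoc_of_le (by linarith)] at hθ
    have hle : (x - θ)⁺ ≤ s + 1 := by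
      rw [posPart_def]
      exact max_le (by linarith [hθ.1, hx.2]) (by linarith)
    rw [norm_mul, norm_mul, Real.norm_of_nonneg (by linarith : 0 ≤ δ),
      Real.norm_of_nonneg (Real.rpow_nonneg (posPart_nonneg _) _)]
    have := Real.rpow_le_rpow (posPart_nonneg _) hle (by linarith : 0 ≤ δ - 1)
    gcongr
  · have := ((hasDerivAt_posPart_rpow hδ (x - θ)).comp x
      ((hasDerivAt_id x).sub_const θ)).mul_const (u θ)
    simpa [mul_assoc] using this

end FractionalIntegral

section Oscillator

open scoped Topology

theorem eqOn_zero_of_hasDerivAt {f f' : ℝ → ℝ} {U : Set ℝ} (hU : IsOpen U)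
    (hderiv : ∀ x ∈ U, HasDerivAt f (f' x) x) (hf : EqOn f 0 U) : EqOn f' 0 U := fun x hx =>
  (hderiv x hx).unique ((hasDerivAt_const x 0).congr_of_eventuallyEq
    (hf.eventuallyEq_of_mem (hU.mem_nhds hx)))

theorem exists_oscillator_kernel (ω : ℝ) : ∃ k S : ℝ → ℝ, (∀ x, HasDerivAt k (S x) x) ∧
    (∀ x, HasDerivAt S (1 - ω ^ 2 * k x) x) ∧ k 0 = 0 ∧ S 0 = 0 ∧ ∀ x, 0 ≤ k x := by
  rcases eq_or_ne ω 0 with rfl | hω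
  · refine ⟨fun x => x ^ 2 / 2, id, fun x => ?_, fun x => ?_, by simp, rfl, fun x => by positivity⟩
    · simpa using (hasDerivAt_pow 2 x).div_const 2
    · simpa using hasDerivAt_id x
  · refine ⟨fun x => (1 - cos (ω * x)) / ω ^ 2, fun x => sin (ω * x) / ω, fun x => ?_, fun x => ?_,
      by simp, by simp, fun x => div_nonneg (sub_nonneg.mpr (cos_le_one _)) (sq_nonneg ω)⟩
    · refine ((((hasDerivAt_id' x).const_mul ω).cos.const_sub 1).div_const _).congr_deriv ?_
      field_simp
    · refine (((hasDerivAt_id' x).const_mul ω).sin.div_const ω).congr_deriv ?_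
      field_simp
      ring

theorem exists_oscillator_kernel_ne_zero {ω : ℝ} {k S : ℝ → ℝ} (hk : ∀ x, HasDerivAt k (S x) x)
    (hS : ∀ x, HasDerivAt S (1 - ω ^ 2 * k x) x) {a b : ℝ} (hab : a < b) :
    ∃ x ∈ Ioo a b, k x ≠ 0 := by
  by_contra! hkzero
  have hSzero := eqOn_zero_of_hasDerivAt isOpen_Ioo (fun x _ => hk x) hkzero
  have hforce := eqOn_zero_of_hasDerivAt isOpen_Ioo (fun x _ => hS x) hSzero
  obtain ⟨x, hx⟩ : (Ioo a b).Nonempty := nonempty_Ioo.mpr hab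
  simpa [hkzero x hx] using hforce hx

theorem oscillator_pos {ω t : ℝ} (ht : 0 < t) {R R' h h' : ℝ → ℝ}
    (hRcont : ContinuousOn R (Icc 0 t)) (hR'cont : ContinuousOn R' (Icc 0 t))
    (hhcont : ContinuousOn h (Icc 0 t)) (hR : ∀ s ∈ Ioo 0 t, HasDerivAt R (R' s) s)
    (hR' : ∀ s ∈ Ioo 0 t, HasDerivAt R' (h s - ω ^ 2 * R s) s)
    (hh : ∀ s ∈ Ioo 0 t, HasDerivAt h (h' s) s) (hR0 : R 0 = 0) (hR'0 : R' 0 = 0) (hh0 : h 0 = 0)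
    (hnonneg : ∀ s ∈ Ioo 0 t, 0 ≤ h' s) (hpos : ∀ᶠ s in 𝓝[>] 0, 0 < h' s) : 0 < R t := by
  obtain ⟨k, S, hk, hS, hk0, hS0, hknonneg⟩ := exists_oscillator_kernel ω
  have hkcont : Continuous k := continuous_iff_continuousAt.mpr fun x => (hk x).continuousAt
  have hScont : Continuous S := continuous_iff_continuousAt.mpr fun x => (hS x).continuousAt
  -- Duhamel's formula `R t = ∫ s in 0..t, k (t - s) * h' s` in differential form.
  set E : ℝ → ℝ := fun s => k (t - s) * h s + S (t - s) * R' s + (1 - ω ^ 2 * k (t - s)) * R s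
  have hE : ∀ s ∈ Ioo 0 t, HasDerivAt E (k (t - s) * h' s) s := fun s hs => by
    have hsub := (hasDerivAt_id' s).const_sub t
    have hkts := (hk (t - s)).comp s hsub
    have hSts := (hS (t - s)).comp s hsub
    refine (((hkts.mul (hh s hs)).add (hSts.mul (hR' s hs))).add
      (((hkts.const_mul (ω ^ 2)).const_sub 1).mul (hR s hs))).congr_deriv ?_
    simp only [Function.comp]
    ring
  have hE0 : E 0 = 0 := by simp [E, hh0, hR'0, hR0]
  have hEt : E t = R t := by simp [E, hk0, hS0]
  have hmono : MonotoneOn E (Icc 0 t) := by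
    refine monotoneOn_of_hasDerivWithinAt_nonneg (convex_Icc 0 t) (by fun_prop) ?_ ?_
      (f' := fun s => k (t - s) * h' s)
    · simpa only [interior_Icc] using fun s hs => (hE s hs).hasDerivWithinAt
    · simpa only [interior_Icc] using fun s hs => mul_nonneg (hknonneg _) (hnonneg s hs)
  by_contra! hRt
  have hEzero : EqOn E 0 (Ioo 0 t) := fun s hs => le_antisymm
    ((hmono ⟨hs.1.le, hs.2.le⟩ ⟨ht.le, le_rfl⟩ hs.2.le).trans (hEt.trans_le hRt))
    (hE0.symm.trans_le (hmono ⟨le_rfl, ht.le⟩ ⟨hs.1.le, hs.2.le⟩ hs.1.le))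
  have hE'zero := eqOn_zero_of_hasDerivAt isOpen_Ioo hE hEzero
  obtain ⟨ε, hε, hposε⟩ := mem_nhdsGT_iff_exists_Ioo_subset.mp hpos
  obtain ⟨x, hx, hkx⟩ :=
    exists_oscillator_kernel_ne_zero hk hS (sub_lt_self t (lt_min hε ht))
  have hmin : t - x < min ε t := by linarith [hx.1]
  have hx0 : 0 < t - x := sub_pos.mpr hx.2
  have hh'x : 0 < h' (t - x) := hposε ⟨hx0, hmin.trans_le (min_le_left _ _)⟩
  have hprod := hE'zero ⟨hx0, hmin.trans_le (min_le_right _ _)⟩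
  simp [hkx, hh'x.ne'] at hprod

theorem fracInt_pos_of_oscillator {δ ω t : ℝ} (hδ : 1 < δ) (ht : 0 < t) {u u' u'' : ℝ → ℝ}
    (hu : Continuous u) (hu' : Continuous u') (hu'' : Continuous u'')
    (hderiv : ∀ θ ∈ Ioo 0 t, HasDerivAt u (u' θ) θ)
    (hderiv' : ∀ θ ∈ Ioo 0 t, HasDerivAt u' (u'' θ) θ) (hu0 : u 0 = 0) (hu'0 : u' 0 = 0)
    (hnonneg : ∀ s ∈ Ioo 0 t, 0 ≤ fracInt (δ - 1) (fun θ => u'' θ + ω ^ 2 * u θ) s)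
    (hpos : ∀ᶠ s in 𝓝[>] 0, 0 < fracInt (δ - 1) (fun θ => u'' θ + ω ^ 2 * u θ) s) :
    0 < fracInt δ u t := by
  have hδ0 : 0 < δ := by linarith
  have hv : Continuous fun θ => u'' θ + ω ^ 2 * u θ := hu''.add (hu.const_mul _)
  have hparts : ∀ {f f' : ℝ → ℝ}, Continuous f → Continuous f' →
      (∀ θ ∈ Ioo 0 t, HasDerivAt f (f' θ) θ) → f 0 = 0 → ∀ s ∈ Ioo 0 t,
        HasDerivAt (fracInt δ f) (fracInt δ f' s) s := fun hf hf' hff' hf0 s hs => by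
    rw [fracInt_deriv hδ0 hs.1.le hf hf' (fun θ hθ => hff' θ ⟨hθ.1, hθ.2.trans hs.2⟩) hf0]
    exact hasDerivAt_fracInt hδ hf hs.1
  refine oscillator_pos ht (continuousOn_fracInt hδ0 hu t) (continuousOn_fracInt hδ0 hu' t)
    (continuousOn_fracInt hδ0 hv t) (hparts hu hu' hderiv hu0) (fun s hs => ?_)
    (fun s hs => hasDerivAt_fracInt hδ hv hs.1) (by simp) (by simp) (by simp) (ω := ω)
    (fun s hs => mul_nonneg hδ0.le (hnonneg s hs)) (hpos.mono fun s hs => mul_pos hδ0 hs)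
  rw [fracInt_add (by linarith) hu'' (hu.const_mul _), fracInt_const_mul, add_sub_cancel_right]
  exact hparts hu' hu'' hderiv' hu'0 s hs

end Oscillator

section CosineCoefficients

open scoped Topology

theorem eventually_fracInt_pos {δ : ℝ} (hδ : -1 < δ) {u : ℝ → ℝ} (hu : Continuous u)
    (hu0 : 0 < u 0) : ∀ᶠ s in 𝓝[>] 0, 0 < fracInt δ u s := by
  obtain ⟨ε, hε, hpos⟩ := mem_nhdsGT_iff_exists_Ioo_subset.mp
    (nhdsWithin_le_nhds (hu.continuousAt.eventually (lt_mem_nhds hu0)) : ∀ᶠ θ in 𝓝[>] 0, 0 < u θ)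
  filter_upwards [Ioo_mem_nhdsGT hε] with s hs
  exact fracInt_pos hδ hs.1 hu fun θ hθ => hpos ⟨hθ.1, hθ.2.trans hs.2⟩

variable {δ s ω : ℝ}

theorem hasDerivAt_sin_const_mul_div (hω : ω ≠ 0) (x : ℝ) :
    HasDerivAt (fun x => sin (ω * x) / ω) (cos (ω * x)) x :=
  (((hasDerivAt_id' x).const_mul ω).sin.div_const ω).congr_deriv (by field_simp)

theorem hasDerivAt_one_sub_cos_const_mul_div (hω : ω ≠ 0) (x : ℝ) :
    HasDerivAt (fun x => (1 - cos (ω * x)) / ω) (sin (ω * x)) x :=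
  ((((hasDerivAt_id' x).const_mul ω).cos.const_sub 1).div_const ω).congr_deriv (by field_simp)

theorem fracInt_cos (hδ : 0 < δ) (hω : ω ≠ 0) (hs : 0 ≤ s) :
    fracInt δ (fun θ => cos (ω * θ)) s = δ / ω * fracInt (δ - 1) (fun θ => sin (ω * θ)) s := by
  rw [fracInt_deriv hδ hs (by fun_prop) (by fun_prop)
    (fun θ _ => hasDerivAt_sin_const_mul_div hω θ) (by simp)]
  simp only [div_eq_inv_mul, fracInt_const_mul]
  ring

theorem fracInt_sin (hδ : 0 < δ) (hω : ω ≠ 0) (hs : 0 ≤ s) :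
    fracInt δ (fun θ => sin (ω * θ)) s = δ / ω * fracInt (δ - 1) (fun θ => 1 - cos (ω * θ)) s := by
  rw [fracInt_deriv hδ hs (by fun_prop) (by fun_prop)
    (fun θ _ => hasDerivAt_one_sub_cos_const_mul_div hω θ) (by simp)]
  simp only [div_eq_inv_mul, fracInt_const_mul]
  ring

theorem fracInt_zero_sin (hω : ω ≠ 0) (s : ℝ) :
    fracInt 0 (fun θ => sin (ω * θ)) s = (1 - cos (ω * s)) / ω := by
  have hint : IntervalIntegrable (fun θ => sin (ω * θ)) volume 0 s :=
    Continuous.intervalIntegrable (by fun_prop) 0 s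
  simp [fracInt, intervalIntegral.integral_eq_sub_of_hasDerivAt
    (fun θ _ => hasDerivAt_one_sub_cos_const_mul_div hω θ) hint]

theorem fracInt_cos_nonneg (hδ : 1 ≤ δ) (hω : 0 < ω) (hs : 0 ≤ s) :
    0 ≤ fracInt δ (fun θ => cos (ω * θ)) s := by
  rw [fracInt_cos (by linarith) hω.ne' hs]
  refine mul_nonneg (by positivity) ?_
  rcases hδ.eq_or_lt with rfl | hδ
  · rw [sub_self, fracInt_zero_sin hω.ne']
    exact div_nonneg (sub_nonneg.mpr (cos_le_one _)) hω.le
  · rw [fracInt_sin (by linarith) hω.ne' hs]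
    exact mul_nonneg (div_nonneg (by linarith) hω.le)
      (fracInt_nonneg hs fun θ _ => sub_nonneg.mpr (cos_le_one _))

theorem fracInt_cos_le (hδ : 2 ≤ δ) (hω : 0 < ω) (hs : 0 ≤ s) :
    fracInt δ (fun θ => cos (ω * θ)) s ≤
      δ * (δ - 1) * fracInt (δ - 2) (fun _ => 2) s * (ω ^ 2)⁻¹ := by
  rw [fracInt_cos (by linarith) hω.ne' hs, fracInt_sin (by linarith) hω.ne' hs,
    show δ - 1 - 1 = δ - 2 by ring]
  have hmono : fracInt (δ - 2) (fun θ => 1 - cos (ω * θ)) s ≤ fracInt (δ - 2) (fun _ => 2) s :=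
    fracInt_mono (by linarith) hs (by fun_prop) continuous_const fun θ _ => by
      linarith [neg_one_le_cos (ω * θ)]
  have hδ1 : 0 ≤ δ * (δ - 1) := mul_nonneg (by linarith) (by linarith)
  calc δ / ω * ((δ - 1) / ω * fracInt (δ - 2) (fun θ => 1 - cos (ω * θ)) s)
      = δ * (δ - 1) * fracInt (δ - 2) (fun θ => 1 - cos (ω * θ)) s * (ω ^ 2)⁻¹ := by field_simp
    _ ≤ _ := by gcongr

theorem summable_fracInt_cos (hδ : 2 ≤ δ) (hs : 0 ≤ s) :
    Summable fun n : ℕ => fracInt δ (fun θ => cos (n * θ)) s := by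
  rw [← summable_nat_add_iff 1]
  refine Summable.of_nonneg_of_le
    (fun n => fracInt_cos_nonneg (by linarith) (by positivity) hs)
    (fun n => fracInt_cos_le hδ (by positivity) hs) (Summable.mul_left _ ?_)
  exact (summable_nat_add_iff 1).mpr (Real.summable_nat_pow_inv.mpr one_lt_two)

theorem strictAnti_fracInt_cos (hδ : 2 ≤ δ) (hs : 0 < s) :
    StrictAnti fun n : ℕ => fracInt δ (fun θ => cos (n * θ)) s := by
  refine strictAnti_nat_of_succ_lt fun n => ?_
  have hδ1 : -1 < δ := by linarith
  have hn : (0 : ℝ) < n + 1 := by positivity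
  have hcos : ∀ ω θ : ℝ, HasDerivAt (fun θ => cos (ω * θ)) (-(ω * sin (ω * θ))) θ := fun ω θ =>
    ((hasDerivAt_id' θ).const_mul ω).cos.congr_deriv (by ring)
  have hsin : ∀ ω θ : ℝ, HasDerivAt (fun θ => ω * sin (ω * θ)) (ω ^ 2 * cos (ω * θ)) θ :=
    fun ω θ => (((hasDerivAt_id' θ).const_mul ω).sin.const_mul ω).congr_deriv (by ring)
  -- `cos (n θ) - cos ((n + 1) θ)` solves `u'' + n² u = (2 n + 1) cos ((n + 1) θ)`.
  have hforce : (fun θ : ℝ => ((n + 1) ^ 2 * cos ((n + 1) * θ) - n ^ 2 * cos (n * θ)) +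
      (n : ℝ) ^ 2 * (cos (n * θ) + -1 * cos ((n + 1) * θ))) =
        fun θ => (2 * n + 1) * cos ((n + 1) * θ) := by
    ext θ
    ring
  have hpos : 0 < fracInt δ (fun θ => cos (n * θ) + -1 * cos ((n + 1) * θ)) s := by
    refine fracInt_pos_of_oscillator (by linarith) hs (by fun_prop) (by fun_prop) (by fun_prop)
      (u' := fun θ => (n + 1) * sin ((n + 1) * θ) - n * sin (n * θ)) (fun θ _ => ?_)
      (fun θ _ => ((hsin (n + 1) θ).sub (hsin n θ))) (by simp) (by simp) (ω := n)
      (fun x hx => ?_) ?_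
    · exact ((hcos n θ).add ((hcos (n + 1) θ).const_mul (-1))).congr_deriv (by ring)
    · rw [hforce, fracInt_const_mul]
      exact mul_nonneg (by positivity) (fracInt_cos_nonneg (by linarith) hn hx.1.le)
    · rw [hforce]
      exact eventually_fracInt_pos (by linarith) (by fun_prop) (by simpa using by positivity)
  rw [fracInt_add hδ1 (by fun_prop) (by fun_prop), fracInt_const_mul] at hpos
  push_cast
  linarith

end CosineCoefficients

section Haversine

/-- The haversine `(1 - cos θ) / 2`, the variable in which Jacobi polynomials are hypergeometric. -/
noncomputable def hav (θ : ℝ) : ℝ := sin (θ / 2) ^ 2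

theorem sin_half_pos {θ : ℝ} (hθ : θ ∈ Ioc 0 π) : 0 < sin (θ / 2) :=
  sin_pos_of_mem_Ioo ⟨by linarith [hθ.1], by linarith [hθ.1, hθ.2]⟩

theorem cos_half_pos {θ : ℝ} (hθ : θ ∈ Ioo 0 π) : 0 < cos (θ / 2) :=
  cos_pos_of_mem_Ioo ⟨by linarith [hθ.1, hθ.2], by linarith [hθ.2]⟩

theorem hav_nonneg (θ : ℝ) : 0 ≤ hav θ := sq_nonneg _

theorem hav_pos {θ : ℝ} (hθ : θ ∈ Ioc 0 π) : 0 < hav θ := pow_pos (sin_half_pos hθ) 2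

@[simp]
theorem hav_zero : hav 0 = 0 := by simp [hav]

@[fun_prop]
theorem continuous_hav : Continuous hav := by
  unfold hav
  fun_prop

theorem cos_eq_one_sub_two_mul_hav (θ : ℝ) : cos θ = 1 - 2 * hav θ := by
  have h := cos_two_mul (θ / 2)
  rw [mul_div_cancel₀ θ two_ne_zero, cos_sq'] at h
  rw [hav, h]
  ring

theorem one_sub_cos_div_two (θ : ℝ) : (1 - cos θ) / 2 = sin (θ / 2) ^ 2 := by
  rw [cos_eq_one_sub_two_mul_hav, hav]
  ring

theorem one_add_cos_div_two (θ : ℝ) : (1 + cos θ) / 2 = cos (θ / 2) ^ 2 := by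
  rw [cos_eq_one_sub_two_mul_hav, hav, cos_sq']
  ring

theorem sin_sq_eq_hav (θ : ℝ) : sin θ ^ 2 = 4 * hav θ * (1 - hav θ) := by
  rw [sin_sq, cos_eq_one_sub_two_mul_hav]
  ring

theorem hasDerivAt_hav (θ : ℝ) : HasDerivAt hav (sin θ / 2) θ := by
  rw [show hav = fun θ => (1 - cos θ) / 2 from funext fun θ => (one_sub_cos_div_two θ).symm]
  simpa using ((hasDerivAt_cos θ).const_sub 1).div_const 2

theorem hasDerivAt_hav_rpow {θ : ℝ} (hθ : hav θ ≠ 0) (r : ℝ) :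
    HasDerivAt (fun θ => hav θ ^ r) (r * (hav θ ^ (r - 1) * (sin θ / 2))) θ :=
  ((hasDerivAt_hav θ).rpow_const (Or.inl hθ)).congr_deriv (by ring)

theorem hasDerivAt_hav_rpow_mul_sin {θ : ℝ} (hθ : hav θ ≠ 0) (r : ℝ) :
    HasDerivAt (fun θ => hav θ ^ r * (sin θ / 2))
      ((r + 1 / 2) * hav θ ^ r - (r + 1) * hav θ ^ (r + 1)) θ := by
  refine ((hasDerivAt_hav_rpow hθ r).mul ((hasDerivAt_sin θ).div_const 2)).congr_deriv ?_
  have hr : hav θ ^ r = hav θ ^ (r - 1) * hav θ := by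
    rw [← Real.rpow_add_one hθ, sub_add_cancel]
  rw [Real.rpow_add_one hθ, hr, cos_eq_one_sub_two_mul_hav]
  linear_combination r / 4 * hav θ ^ (r - 1) * sin_sq_eq_hav θ

theorem continuous_hav_rpow {r : ℝ} (hr : 0 ≤ r) : Continuous fun θ => hav θ ^ r :=
  continuous_hav.rpow_const fun _ => Or.inr hr

end Haversine

section HavCoeff

/-- The coefficients of `P_n^{(α-1/2,-1/2)}(cos θ) / P_n^{(α-1/2,-1/2)}(1)` in powers of `hav θ`. -/
noncomputable def havCoeff (n : ℕ) (α : ℝ) (j : ℕ) : ℝ :=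
  ordinaryHypergeometricCoefficient (-(n : ℝ)) (n + α) (α + 1 / 2) j

@[simp]
theorem havCoeff_zero (n : ℕ) (α : ℝ) : havCoeff n α 0 = 1 := by
  simp [havCoeff, ordinaryHypergeometricCoefficient]

theorem havCoeff_succ (n : ℕ) {α : ℝ} (hα : -1 / 2 < α) (j : ℕ) :
    (α + 1 / 2 + j) * (j + 1) * havCoeff n α (j + 1) =
      (j - n) * (n + α + j) * havCoeff n α j := by
  have hαj : α + 1 / 2 + j ≠ 0 := ne_of_gt (by linarith [j.cast_nonneg (α := ℝ)])
  have hj : (j : ℝ) + 1 ≠ 0 := by positivity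
  rw [havCoeff, ordinaryHypergeometricCoefficient_succ, ← havCoeff, mul_left_comm,
    mul_div_cancel₀ _ (mul_ne_zero hαj hj)]
  ring

theorem havCoeff_self_add_one (n : ℕ) (α : ℝ) : havCoeff n α (n + 1) = 0 := by
  simp [havCoeff, ordinaryHypergeometricCoefficient_succ]

theorem havCoeff_add_one_sub_one (n : ℕ) {α : ℝ} (hα : 1 / 2 < α) (j : ℕ) :
    (α - 1 / 2) * (j + 1) * havCoeff (n + 1) (α - 1) (j + 1) =
      -((n + 1) * (n + α + j) * havCoeff n α j) := by
  have hrec := havCoeff_succ (n + 1) (show -1 / 2 < α - 1 by linarith)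
  induction j with
  | zero =>
    have h := hrec 0
    push_cast [havCoeff_zero] at h ⊢
    linear_combination h
  | succ j ih =>
    have hαj : (α + 1 / 2 + j) * (j + 1) ≠ 0 :=
      ne_of_gt (mul_pos (by linarith [j.cast_nonneg (α := ℝ)]) (by positivity))
    have h := hrec (j + 1)
    refine mul_left_cancel₀ hαj ?_
    push_cast at h ⊢
    linear_combination (α - 1 / 2) * (j + 1) * h + (j - n) * (n + α + j + 1) * ih +
      (n + 1) * (n + α + j + 1) * havCoeff_succ n (show -1 / 2 < α by linarith) j

theorem neg_one_pow_mul_havCoeff_pos {n j : ℕ} (hj : j ≤ n) {α : ℝ} (hα : 0 < α) :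
    0 < (-1) ^ j * havCoeff n α j := by
  induction j with
  | zero => simp
  | succ j ih =>
    have hjn : 0 < (n : ℝ) - j := sub_pos.mpr (by exact_mod_cast hj)
    have hprod : 0 < (α + 1 / 2 + j) * (j + 1) * ((-1) ^ (j + 1) * havCoeff n α (j + 1)) :=
      calc 0 < (n - j) * (n + α + j) * ((-1) ^ j * havCoeff n α j) :=
            mul_pos (mul_pos hjn (by positivity)) (ih (by omega))
        _ = _ := by
            rw [pow_succ]
            linear_combination (-1) ^ j * havCoeff_succ n (show -1 / 2 < α by linarith) j
    exact pos_of_mul_pos_right hprod (by positivity)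

end HavCoeff

section WeightedJacobi

variable {n : ℕ} {α θ : ℝ}

/-- `hav θ ^ α` times the normalized Jacobi polynomial `P_n^{(α-1/2,-1/2)}(cos θ)`. -/
noncomputable def weightedJacobi (n : ℕ) (α θ : ℝ) : ℝ :=
  ∑ j ∈ Finset.range (n + 1), havCoeff n α j * hav θ ^ (α + j)

/-- The derivative of `weightedJacobi n α` wherever `hav` does not vanish. -/
noncomputable def weightedJacobiDeriv (n : ℕ) (α θ : ℝ) : ℝ :=
  ∑ j ∈ Finset.range (n + 1),
    havCoeff n α j * ((α + j) * (hav θ ^ (α + j - 1) * (sin θ / 2)))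

theorem continuous_weightedJacobi (n : ℕ) (hα : 0 ≤ α) : Continuous (weightedJacobi n α) :=
  continuous_finsetSum _ fun _ _ => continuous_const.mul (continuous_hav_rpow (by positivity))

theorem weightedJacobi_zero_right (n : ℕ) (hα : 0 < α) : weightedJacobi n α 0 = 0 :=
  Finset.sum_eq_zero fun _ _ => by rw [hav_zero, Real.zero_rpow (by positivity), mul_zero]

theorem hasDerivAt_weightedJacobi (n : ℕ) (α : ℝ) (hθ : hav θ ≠ 0) :
    HasDerivAt (weightedJacobi n α) (weightedJacobiDeriv n α θ) θ :=
  HasDerivAt.fun_sum fun _ _ => (hasDerivAt_hav_rpow hθ _).const_mul _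

theorem continuous_weightedJacobiDeriv (n : ℕ) (hα : 1 ≤ α) :
    Continuous (weightedJacobiDeriv n α) :=
  continuous_finsetSum _ fun j _ => continuous_const.mul <| continuous_const.mul <|
    (continuous_hav_rpow (by linarith [j.cast_nonneg (α := ℝ)])).mul (by fun_prop)

theorem weightedJacobiDeriv_zero_right (n : ℕ) (α : ℝ) : weightedJacobiDeriv n α 0 = 0 := by
  simp [weightedJacobiDeriv]

theorem havCoeff_oscillator (n : ℕ) (hα : 1 / 2 < α) (j : ℕ) :
    havCoeff n α (j + 1) * ((α + (j + 1)) * (α + j + 1 / 2)) +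
      havCoeff n α j * (n ^ 2 - (α + j) ^ 2) =
    α * (α - 1 / 2) * havCoeff (n + 1) (α - 1) (j + 1) := by
  have hj : (j : ℝ) + 1 ≠ 0 := by positivity
  refine mul_left_cancel₀ hj ?_
  linear_combination (α + (j + 1)) * havCoeff_succ n (show -1 / 2 < α by linarith) j -
    α * havCoeff_add_one_sub_one n hα j

theorem weightedJacobi_succ_sub_one (n : ℕ) (α θ : ℝ) :
    weightedJacobi (n + 1) (α - 1) θ = hav θ ^ (α - 1) + ∑ j ∈ Finset.range (n + 1),
      havCoeff (n + 1) (α - 1) (j + 1) * hav θ ^ (α + j) := by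
  rw [weightedJacobi, Finset.sum_range_succ', add_comm]
  simp [← add_assoc, sub_add_eq_add_sub]

theorem hasDerivAt_weightedJacobiDeriv (n : ℕ) (hα : 1 / 2 < α) (hθ : hav θ ≠ 0) :
    HasDerivAt (weightedJacobiDeriv n α)
      (α * (α - 1 / 2) * weightedJacobi (n + 1) (α - 1) θ - n ^ 2 * weightedJacobi n α θ) θ := by
  refine (HasDerivAt.fun_sum fun (j : ℕ) _ =>
    ((hasDerivAt_hav_rpow_mul_sin hθ (α + j - 1)).const_mul (α + j)).const_mul
      (havCoeff n α j)).congr_deriv ?_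
  have hlow : ∑ j ∈ Finset.range (n + 1),
      havCoeff n α j * ((α + j) * (α + j - 1 / 2)) * hav θ ^ (α + j - 1) =
        α * (α - 1 / 2) * hav θ ^ (α - 1) + ∑ j ∈ Finset.range (n + 1),
          havCoeff n α (j + 1) * ((α + (j + 1)) * (α + j + 1 / 2)) * hav θ ^ (α + j) := by
    rw [Finset.sum_range_succ', Finset.sum_range_succ _ n, havCoeff_self_add_one,
      zero_mul, zero_mul, add_zero, add_comm]
    congr 1
    · simp
    · refine Finset.sum_congr rfl fun j _ => ?_
      rw [Nat.cast_add_one, show α + ((j : ℝ) + 1) - 1 = α + j by ring]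
      ring
  calc
    _ = (∑ j ∈ Finset.range (n + 1),
          havCoeff n α j * ((α + j) * (α + j - 1 / 2)) * hav θ ^ (α + j - 1)) -
        ∑ j ∈ Finset.range (n + 1), havCoeff n α j * (α + j) ^ 2 * hav θ ^ (α + j) := by
      rw [← Finset.sum_sub_distrib]
      refine Finset.sum_congr rfl fun j _ => ?_
      rw [sub_add_cancel]
      ring
    _ = _ := by
      rw [hlow, weightedJacobi_succ_sub_one, weightedJacobi, mul_add, Finset.mul_sum,
        Finset.mul_sum, add_sub_assoc, add_sub_assoc, ← Finset.sum_sub_distrib,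
        ← Finset.sum_sub_distrib]
      congr 1
      refine Finset.sum_congr rfl fun j _ => ?_
      linear_combination hav θ ^ (α + j) * havCoeff_oscillator n hα j

theorem weightedJacobi_eq_hav_rpow_mul (n : ℕ) (α : ℝ) (hθ : hav θ ≠ 0) :
    weightedJacobi n α θ =
      hav θ ^ α * ∑ j ∈ Finset.range (n + 1), havCoeff n α j * hav θ ^ j := by
  rw [weightedJacobi, Finset.mul_sum]
  refine Finset.sum_congr rfl fun j _ => ?_
  rw [Real.rpow_add_natCast hθ]
  ring

end WeightedJacobi

section Moments

open scoped Topology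

variable {n : ℕ} {α θ : ℝ}

/-- The flux turning the Jacobi equation into divergence form: a primitive of
`-n (n + α) * weightedJacobi n α`. -/
noncomputable def weightedJacobiFlux (n : ℕ) (α θ : ℝ) : ℝ :=
  ∑ j ∈ Finset.range n, (j + 1) * havCoeff n α (j + 1) * (hav θ ^ (α + j) * (sin θ / 2))

theorem continuous_weightedJacobiFlux (n : ℕ) (hα : 0 ≤ α) :
    Continuous (weightedJacobiFlux n α) :=
  continuous_finsetSum _ fun _ _ => continuous_const.mul <|
    (continuous_hav_rpow (by positivity)).mul (by fun_prop)

theorem weightedJacobiFlux_eq_zero (n : ℕ) (α : ℝ) (hθ : sin θ = 0) :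
    weightedJacobiFlux n α θ = 0 := by
  simp [weightedJacobiFlux, hθ]

theorem hasDerivAt_weightedJacobiFlux (n : ℕ) (hα : -1 / 2 < α) (hθ : hav θ ≠ 0) :
    HasDerivAt (weightedJacobiFlux n α) (-(n * (n + α) * weightedJacobi n α θ)) θ := by
  refine (HasDerivAt.fun_sum fun (j : ℕ) _ => (hasDerivAt_hav_rpow_mul_sin hθ (α + j)).const_mul
    ((j + 1) * havCoeff n α (j + 1))).congr_deriv ?_
  have hshift : ∑ j ∈ Finset.range n,
      (j + 1) * (α + j + 1) * havCoeff n α (j + 1) * hav θ ^ (α + j + 1) =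
        ∑ j ∈ Finset.range (n + 1), j * (α + j) * havCoeff n α j * hav θ ^ (α + j) := by
    simp [Finset.sum_range_succ', add_assoc]
  have hextend : ∑ j ∈ Finset.range n,
      (j + 1) * (α + j + 1 / 2) * havCoeff n α (j + 1) * hav θ ^ (α + j) =
        ∑ j ∈ Finset.range (n + 1),
          (j + 1) * (α + j + 1 / 2) * havCoeff n α (j + 1) * hav θ ^ (α + j) := by
    simp [Finset.sum_range_succ, havCoeff_self_add_one]
  calc
    _ = (∑ j ∈ Finset.range n,
          (j + 1) * (α + j + 1 / 2) * havCoeff n α (j + 1) * hav θ ^ (α + j)) -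
        ∑ j ∈ Finset.range n,
          (j + 1) * (α + j + 1) * havCoeff n α (j + 1) * hav θ ^ (α + j + 1) := by
      rw [← Finset.sum_sub_distrib]
      exact Finset.sum_congr rfl fun j _ => by ring
    _ = _ := by
      rw [hextend, hshift, ← Finset.sum_sub_distrib, weightedJacobi, Finset.mul_sum,
        ← Finset.sum_neg_distrib]
      refine Finset.sum_congr rfl fun j _ => ?_
      linear_combination hav θ ^ (α + j) * havCoeff_succ n hα j

theorem hav_mul_weightedJacobiDeriv_sub_flux (n : ℕ) (α : ℝ) (hθ : hav θ ≠ 0) :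
    hav θ * (weightedJacobiDeriv n α θ - weightedJacobiFlux n α θ) =
      α * (sin θ / 2) * weightedJacobi n α θ := by
  have hflux : hav θ * weightedJacobiFlux n α θ = ∑ j ∈ Finset.range (n + 1),
      j * havCoeff n α j * (hav θ ^ (α + j) * (sin θ / 2)) := by
    rw [weightedJacobiFlux, Finset.mul_sum, Finset.sum_range_succ']
    simp only [Nat.cast_zero, zero_mul, add_zero, Nat.cast_add_one, ← add_assoc,
      Real.rpow_add_one hθ]
    exact Finset.sum_congr rfl fun j _ => by ring
  rw [mul_sub, hflux, weightedJacobiDeriv, weightedJacobi, Finset.mul_sum, Finset.mul_sum,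
    ← Finset.sum_sub_distrib]
  refine Finset.sum_congr rfl fun j _ => ?_
  have hpow : hav θ ^ (α + j) = hav θ ^ (α + j - 1) * hav θ := by
    rw [← Real.rpow_add_one hθ, sub_add_cancel]
  rw [hpow]
  ring

theorem integral_mul_weightedJacobi_of_jacobi_operator (n : ℕ) (hα : 0 < α) {φ φ' φ'' ψ : ℝ → ℝ}
    (hφ : Continuous φ) (hφ' : Continuous φ') (hψ : Continuous ψ)
    (hderiv : ∀ θ ∈ Ioo 0 π, HasDerivAt φ (φ' θ) θ)
    (hderiv' : ∀ θ ∈ Ioo 0 π, HasDerivAt φ' (φ'' θ) θ) (hπ : φ' π = 0)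
    (hop : ∀ θ ∈ Ioo 0 π, hav θ * φ'' θ + α * (sin θ / 2) * φ' θ = hav θ * ψ θ) :
    ∫ θ in 0..π, ψ θ * weightedJacobi n α θ =
      -(n * (n + α) * ∫ θ in 0..π, φ θ * weightedJacobi n α θ) := by
  have hw := continuous_weightedJacobi n hα.le
  have hflux := continuous_weightedJacobiFlux n hα.le
  have hFTC := intervalIntegral.integral_eq_sub_of_hasDerivAt_of_le pi_nonneg
    (f := fun θ => φ' θ * weightedJacobi n α θ - φ θ * weightedJacobiFlux n α θ)
    (f' := fun θ => ψ θ * weightedJacobi n α θ + n * (n + α) * (φ θ * weightedJacobi n α θ))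
    (by fun_prop) (fun θ hθ => ?_) (Continuous.intervalIntegrable (by fun_prop) 0 π)
  · rw [intervalIntegral.integral_add (Continuous.intervalIntegrable (by fun_prop) 0 π)
      (Continuous.intervalIntegrable (by fun_prop) 0 π), intervalIntegral.integral_const_mul, hπ,
      weightedJacobi_zero_right n hα, weightedJacobiFlux_eq_zero n α sin_pi,
      weightedJacobiFlux_eq_zero n α sin_zero] at hFTC
    linear_combination hFTC
  · have hhav : hav θ ≠ 0 := (hav_pos (Ioo_subset_Ioc_self hθ)).ne'
    refine (((hderiv' θ hθ).mul (hasDerivAt_weightedJacobi n α hhav)).sub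
      ((hderiv θ hθ).mul (hasDerivAt_weightedJacobiFlux n (by linarith) hhav))).congr_deriv ?_
    refine mul_left_cancel₀ hhav ?_
    linear_combination weightedJacobi n α θ * hop θ hθ +
      φ' θ * hav_mul_weightedJacobiDeriv_sub_flux n α hhav

theorem integral_hav_pow_succ_mul_weightedJacobi (n : ℕ) (hα : 0 < α) (j : ℕ) :
    (j + 1) * (j + 1 / 2 + α) * ∫ θ in 0..π, hav θ ^ j * weightedJacobi n α θ =
      ((j + 1) * (j + 1 + α) - n * (n + α)) *
        ∫ θ in 0..π, hav θ ^ (j + 1) * weightedJacobi n α θ := by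
  have hw := continuous_weightedJacobi n hα.le
  have hgreen := integral_mul_weightedJacobi_of_jacobi_operator n hα
    (φ := fun θ => hav θ ^ (j + 1)) (φ' := fun θ => (j + 1) * (hav θ ^ j * (sin θ / 2)))
    (φ'' := fun θ => (j + 1) * ((j + 1 / 2) * hav θ ^ j - (j + 1) * hav θ ^ (j + 1)))
    (ψ := fun θ => (j + 1) * (j + 1 / 2 + α) * hav θ ^ j - (j + 1) * (j + 1 + α) * hav θ ^ (j + 1))
    (by fun_prop) (by fun_prop) (by fun_prop)
    (fun θ _ => ((hasDerivAt_hav θ).pow (j + 1)).congr_deriv (by push_cast; ring))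
    (fun θ hθ => ?_) (by simp) (fun θ _ => ?_)
  · simp only [sub_mul, mul_assoc _ (hav _ ^ _)] at hgreen
    rw [intervalIntegral.integral_sub (Continuous.intervalIntegrable (by fun_prop) 0 π)
      (Continuous.intervalIntegrable (by fun_prop) 0 π), intervalIntegral.integral_const_mul,
      intervalIntegral.integral_const_mul] at hgreen
    linear_combination hgreen
  · have hhav := (hav_pos (Ioo_subset_Ioc_self hθ)).ne'
    exact_mod_cast (hasDerivAt_hav_rpow_mul_sin hhav j).const_mul ((j : ℝ) + 1)
  · linear_combination α * (j + 1) * hav θ ^ j * sin_sq_eq_hav θ / 4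

theorem integral_hav_pow_mul_weightedJacobi_eq_zero (hα : 0 < α) {j : ℕ} (hj : j < n) :
    ∫ θ in 0..π, hav θ ^ j * weightedJacobi n α θ = 0 := by
  obtain ⟨m, rfl⟩ := Nat.exists_eq_add_of_lt hj
  induction m generalizing j with
  | zero =>
    have h := integral_hav_pow_succ_mul_weightedJacobi (j + 0 + 1) hα j
    push_cast at h
    exact (mul_eq_zero.mp (h.trans (by ring))).resolve_left (by positivity)
  | succ m ih =>
    have h := integral_hav_pow_succ_mul_weightedJacobi (j + (m + 1) + 1) hα j
    rw [show j + (m + 1) + 1 = j + 1 + m + 1 by ring] at h ⊢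
    rw [ih (by omega), mul_zero] at h
    exact (mul_eq_zero.mp h).resolve_left (by positivity)

theorem integral_sum_hav_pow_mul_weightedJacobi_pos (n : ℕ) (hα : 0 < α) :
    0 < ∫ θ in 0..π,
      (∑ j ∈ Finset.range (n + 1), havCoeff n α j * hav θ ^ j) * weightedJacobi n α θ := by
  have hw := continuous_weightedJacobi n hα.le
  set p : ℝ → ℝ := fun θ => ∑ j ∈ Finset.range (n + 1), havCoeff n α j * hav θ ^ j with hp
  have hp0 : p 0 = 1 := by simp [hp, Finset.sum_range_succ']
  have hpcont : Continuous p := by fun_prop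
  have hmul : ∀ θ ∈ Ioc 0 π, p θ * weightedJacobi n α θ = hav θ ^ α * p θ ^ 2 := fun θ hθ => by
    rw [weightedJacobi_eq_hav_rpow_mul n α (hav_pos hθ).ne', hp]
    ring
  have hnear : ∀ᶠ θ in 𝓝[>] 0, 0 < p θ :=
    nhdsWithin_le_nhds (hpcont.continuousAt.eventually (lt_mem_nhds (hp0 ▸ one_pos)))
  obtain ⟨θ₀, hpθ₀, hθ₀⟩ := (hnear.and (Ioc_mem_nhdsGT pi_pos)).exists
  refine intervalIntegral.integral_pos pi_pos (hpcont.mul hw).continuousOn (fun θ hθ => ?_)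
    ⟨θ₀, Ioc_subset_Icc_self hθ₀, ?_⟩
  · rw [hmul θ hθ]
    exact mul_nonneg (Real.rpow_nonneg (hav_nonneg θ) α) (sq_nonneg _)
  · rw [hmul θ₀ hθ₀]
    exact mul_pos (Real.rpow_pos_of_pos (hav_pos hθ₀) α) (pow_pos hpθ₀ 2)

theorem neg_one_pow_mul_integral_hav_pow_mul_weightedJacobi_pos (n : ℕ) (hα : 0 < α) :
    0 < (-1) ^ n * ∫ θ in 0..π, hav θ ^ n * weightedJacobi n α θ := by
  have hw := continuous_weightedJacobi n hα.le
  have hsum : ∫ θ in 0..π,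
      (∑ j ∈ Finset.range (n + 1), havCoeff n α j * hav θ ^ j) * weightedJacobi n α θ =
        havCoeff n α n * ∫ θ in 0..π, hav θ ^ n * weightedJacobi n α θ := by
    simp only [Finset.sum_mul, mul_assoc]
    rw [intervalIntegral.integral_finsetSum fun j _ =>
      Continuous.intervalIntegrable (by fun_prop) 0 π]
    simp only [intervalIntegral.integral_const_mul]
    refine (Finset.sum_eq_single_of_mem n (Finset.self_mem_range_succ n) fun j hj hjn => ?_)
    rw [integral_hav_pow_mul_weightedJacobi_eq_zero hα
      (lt_of_le_of_ne (Finset.mem_range_succ_iff.mp hj) hjn), mul_zero]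
  have hpos := integral_sum_hav_pow_mul_weightedJacobi_pos n hα
  rw [hsum] at hpos
  refine pos_of_mul_pos_right (a := (-1) ^ n * havCoeff n α n) ?_
    (neg_one_pow_mul_havCoeff_pos le_rfl hα).le
  rwa [mul_mul_mul_comm, ← mul_pow, neg_one_mul, neg_neg, one_pow, one_mul]

end Moments

section DirichletKernel

/-- The Dirichlet kernel `∑_{|k| ≤ n} e^{ikθ}`. -/
noncomputable def dirichletKernel (n : ℕ) (θ : ℝ) : ℝ :=
  1 + 2 * ∑ k ∈ Finset.range n, cos ((k + 1) * θ)

@[simp]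
theorem dirichletKernel_zero (θ : ℝ) : dirichletKernel 0 θ = 1 := by simp [dirichletKernel]

theorem dirichletKernel_succ (n : ℕ) (θ : ℝ) :
    dirichletKernel (n + 1) θ = dirichletKernel n θ + 2 * cos ((n + 1) * θ) := by
  rw [dirichletKernel, dirichletKernel, Finset.sum_range_succ]
  ring

@[fun_prop]
theorem continuous_dirichletKernel (n : ℕ) : Continuous (dirichletKernel n) := by
  unfold dirichletKernel
  fun_prop

theorem four_mul_hav_mul_cos_add (x θ : ℝ) :
    4 * hav θ * cos (x + θ) = 2 * cos (x + θ) - cos x - cos (x + θ + θ) := by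
  have h : cos x = cos (x + θ - θ) := by rw [add_sub_cancel_right]
  rw [h, cos_sub, cos_add (x + θ), cos_eq_one_sub_two_mul_hav θ]
  ring

theorem two_mul_hav_mul_dirichletKernel (n : ℕ) (θ : ℝ) :
    2 * hav θ * dirichletKernel n θ = cos (n * θ) - cos ((n + 1) * θ) := by
  induction n with
  | zero =>
    rw [dirichletKernel_zero, Nat.cast_zero, zero_mul, zero_add, one_mul, cos_zero,
      cos_eq_one_sub_two_mul_hav]
    ring
  | succ n ih =>
    have h := four_mul_hav_mul_cos_add (n * θ) θ
    rw [show n * θ + θ = (n + 1) * θ by ring,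
      show (n + 1) * θ + θ = (n + 1 + 1) * θ by ring] at h
    rw [dirichletKernel_succ, Nat.cast_add_one]
    linear_combination ih + h

theorem dirichletKernel_add_two (n : ℕ) (θ : ℝ) :
    dirichletKernel (n + 2) θ =
      2 * dirichletKernel (n + 1) θ - 4 * (hav θ * dirichletKernel (n + 1) θ) -
        dirichletKernel n θ := by
  have h := two_mul_hav_mul_dirichletKernel (n + 1) θ
  have h₁ := dirichletKernel_succ n θ
  have h₂ := dirichletKernel_succ (n + 1) θ
  push_cast at h h₂
  linear_combination h₂ - h₁ + 2 * h

theorem sin_mul_sin_eq_hav_mul_dirichletKernel (n : ℕ) (θ : ℝ) :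
    sin θ * sin ((n + 1) * θ) =
      hav θ * (dirichletKernel n θ + dirichletKernel (n + 1) θ) := by
  have h := two_mul_hav_mul_dirichletKernel n θ
  have h' := two_mul_hav_mul_dirichletKernel (n + 1) θ
  rw [Nat.cast_add_one, show ((n : ℝ) + 1 + 1) * θ = (n + 1) * θ + θ by ring, cos_add] at h'
  rw [show (n : ℝ) * θ = (n + 1) * θ - θ by ring, cos_sub] at h
  linear_combination -(h + h') / 2

variable {n : ℕ} {α : ℝ}

theorem integral_dirichletKernel_mul_hav_pow_mul_weightedJacobi (hα : 0 < α) {k j : ℕ}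
    (hkj : k + j ≤ n) :
    ∫ θ in 0..π, dirichletKernel k θ * (hav θ ^ j * weightedJacobi n α θ) =
      (-4) ^ k * ∫ θ in 0..π, hav θ ^ (k + j) * weightedJacobi n α θ := by
  have hw := continuous_weightedJacobi n hα.le
  induction k using Nat.twoStepInduction generalizing j with
  | zero => simp
  | one =>
    have hexpand : ∀ θ, dirichletKernel 1 θ * (hav θ ^ j * weightedJacobi n α θ) =
        3 * (hav θ ^ j * weightedJacobi n α θ) - 4 * (hav θ ^ (1 + j) * weightedJacobi n α θ) :=
      fun θ => by
        rw [dirichletKernel_succ 0, dirichletKernel_zero, Nat.cast_zero, zero_add, one_mul,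
          cos_eq_one_sub_two_mul_hav]
        ring
    simp only [hexpand]
    rw [intervalIntegral.integral_sub (Continuous.intervalIntegrable (by fun_prop) 0 π)
      (Continuous.intervalIntegrable (by fun_prop) 0 π), intervalIntegral.integral_const_mul,
      intervalIntegral.integral_const_mul,
      integral_hav_pow_mul_weightedJacobi_eq_zero hα (by omega)]
    ring
  | more k ih₀ ih₁ =>
    have hexpand : ∀ θ, dirichletKernel (k + 2) θ * (hav θ ^ j * weightedJacobi n α θ) =
        2 * (dirichletKernel (k + 1) θ * (hav θ ^ j * weightedJacobi n α θ)) -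
          4 * (dirichletKernel (k + 1) θ * (hav θ ^ (j + 1) * weightedJacobi n α θ)) -
            dirichletKernel k θ * (hav θ ^ j * weightedJacobi n α θ) := fun θ => by
      rw [dirichletKernel_add_two]
      ring
    simp only [hexpand]
    rw [intervalIntegral.integral_sub (Continuous.intervalIntegrable (by fun_prop) 0 π)
      (Continuous.intervalIntegrable (by fun_prop) 0 π),
      intervalIntegral.integral_sub (Continuous.intervalIntegrable (by fun_prop) 0 π)
      (Continuous.intervalIntegrable (by fun_prop) 0 π), intervalIntegral.integral_const_mul,
      intervalIntegral.integral_const_mul, ih₀ (by omega), ih₁ (by omega), ih₁ (by omega),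
      integral_hav_pow_mul_weightedJacobi_eq_zero hα (show k + j < n by omega),
      integral_hav_pow_mul_weightedJacobi_eq_zero hα (show k + 1 + j < n by omega),
      show k + 1 + (j + 1) = k + 2 + j by ring]
    ring

theorem integral_dirichletKernel_mul_weightedJacobi_of_lt (hα : 0 < α) {k : ℕ} (hk : k < n) :
    ∫ θ in 0..π, dirichletKernel k θ * weightedJacobi n α θ = 0 := by
  have h := integral_dirichletKernel_mul_hav_pow_mul_weightedJacobi hα (j := 0) hk.le
  simpa [integral_hav_pow_mul_weightedJacobi_eq_zero hα hk] using h

theorem integral_dirichletKernel_self_mul_weightedJacobi_pos (n : ℕ) (hα : 0 < α) :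
    0 < ∫ θ in 0..π, dirichletKernel n θ * weightedJacobi n α θ := by
  have h := integral_dirichletKernel_mul_hav_pow_mul_weightedJacobi hα (j := 0) le_rfl (n := n)
  simp only [pow_zero, one_mul, add_zero] at h
  rw [h, show (-4 : ℝ) = 4 * -1 by norm_num, mul_pow, mul_assoc]
  exact mul_pos (by positivity) (neg_one_pow_mul_integral_hav_pow_mul_weightedJacobi_pos n hα)

theorem integral_dirichletKernel_succ_mul_weightedJacobi (n : ℕ) (hα : 0 < α) (k : ℕ) :
    (k + 1 - n) * (k + 1 + n + α) *
        ∫ θ in 0..π, dirichletKernel (k + 1) θ * weightedJacobi n α θ =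
      (k + 1 + n) * (k + 1 - n - α) *
        ∫ θ in 0..π, dirichletKernel k θ * weightedJacobi n α θ := by
  have hw := continuous_weightedJacobi n hα.le
  have hcos : ∀ θ, cos ((k + 1) * θ) = 1 / 2 * dirichletKernel (k + 1) θ +
      -1 / 2 * dirichletKernel k θ := fun θ => by
    rw [dirichletKernel_succ]
    ring
  have hlin : ∀ a b : ℝ, ∫ θ in 0..π,
      (a * dirichletKernel (k + 1) θ + b * dirichletKernel k θ) * weightedJacobi n α θ =
        a * (∫ θ in 0..π, dirichletKernel (k + 1) θ * weightedJacobi n α θ) +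
          b * ∫ θ in 0..π, dirichletKernel k θ * weightedJacobi n α θ := fun a b => by
    simp only [add_mul, mul_assoc]
    rw [intervalIntegral.integral_add (Continuous.intervalIntegrable (by fun_prop) 0 π)
      (Continuous.intervalIntegrable (by fun_prop) 0 π), intervalIntegral.integral_const_mul,
      intervalIntegral.integral_const_mul]
  have hgreen := integral_mul_weightedJacobi_of_jacobi_operator n hα
    (φ := fun θ => cos ((k + 1) * θ)) (φ' := fun θ => -((k + 1) * sin ((k + 1) * θ)))
    (φ'' := fun θ => -((k + 1) ^ 2 * cos ((k + 1) * θ)))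
    (ψ := fun θ => -((k + 1) * (k + 1 + α) / 2) * dirichletKernel (k + 1) θ +
      (k + 1) * (k + 1 - α) / 2 * dirichletKernel k θ)
    (by fun_prop) (by fun_prop) (by fun_prop)
    (fun θ _ => ((hasDerivAt_const_mul ((k : ℝ) + 1)).cos).congr_deriv (by ring))
    (fun θ _ => (((hasDerivAt_const_mul ((k : ℝ) + 1)).sin.const_mul _).neg).congr_deriv (by ring))
    (by simpa using Or.inr (sin_nat_mul_pi (k + 1))) (fun θ _ => ?_)
  · simp only [hcos, hlin] at hgreen
    linear_combination -2 * hgreen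
  · linear_combination -((k + 1) ^ 2 * hav θ) * hcos θ -
      α * (k + 1) / 2 * sin_mul_sin_eq_hav_mul_dirichletKernel k θ

theorem integral_dirichletKernel_mul_weightedJacobi_nonneg (n : ℕ) (hα : 0 < α) (hα1 : α ≤ 1)
    (k : ℕ) : 0 ≤ ∫ θ in 0..π, dirichletKernel k θ * weightedJacobi n α θ := by
  rcases lt_or_ge k n with hk | hk
  · exact (integral_dirichletKernel_mul_weightedJacobi_of_lt hα hk).ge
  · induction k, hk using Nat.le_induction with
    | base => exact (integral_dirichletKernel_self_mul_weightedJacobi_pos n hα).le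
    | succ k hk ih =>
      have hkn : (n : ℝ) ≤ k := by exact_mod_cast hk
      refine nonneg_of_mul_nonneg_right (a := (k + 1 - n) * (k + 1 + n + α)) ?_
        (mul_pos (by linarith) (by positivity))
      rw [integral_dirichletKernel_succ_mul_weightedJacobi n hα]
      exact mul_nonneg (mul_nonneg (by positivity) (by linarith)) ih

end DirichletKernel

section CosineSeries

/-- The `n`-th cosine coefficient of `g` on `[0, π]`, unnormalized. -/
noncomputable def cosCoeff (g : ℝ → ℝ) (n : ℕ) : ℝ := ∫ θ in 0..π, g θ * cos (n * θ)

variable {g w : ℝ → ℝ}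

theorem integral_neg_eq_integral_comp_neg_add {E : Type*} [NormedAddCommGroup E]
    [NormedSpace ℝ E] {f : ℝ → E} (hf : Continuous f) (a : ℝ) :
    ∫ x in -a..a, f x = ∫ x in 0..a, (f (-x) + f x) := by
  have hneg : Continuous fun x => f (-x) := hf.comp continuous_neg
  rw [← intervalIntegral.integral_add_adjacent_intervals (hf.intervalIntegrable (-a) 0)
    (hf.intervalIntegrable 0 a), intervalIntegral.integral_add (hneg.intervalIntegrable 0 a)
    (hf.intervalIntegrable 0 a), intervalIntegral.integral_comp_neg, neg_zero]

theorem fourier_two_pi_apply (n : ℤ) (x : ℝ) :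
    fourier n (x : AddCircle (2 * π)) = Complex.exp ((n * x : ℝ) * Complex.I) := by
  rw [fourier_coe_apply]
  congr 1
  push_cast
  field_simp

theorem fourier_add_fourier_neg (n : ℤ) (x : ℝ) :
    fourier n (x : AddCircle (2 * π)) + fourier (-n) (x : AddCircle (2 * π)) =
      ((2 * cos (n.natAbs * x) : ℝ) : ℂ) := by
  have hcos : cos (n.natAbs * x) = cos (n * x) := by
    rw [Nat.cast_natAbs, Int.cast_abs]
    rcases abs_choice (n : ℝ) with h | h <;> rw [h]
    rw [neg_mul, cos_neg]
  rw [fourier_two_pi_apply, fourier_two_pi_apply, hcos, Int.cast_neg, neg_mul]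
  push_cast [Complex.cos]
  ring

section

variable [Fact (0 < 2 * π)]

theorem fourierCoeff_liftIco_abs (hg : Continuous g) (n : ℤ) :
    fourierCoeff (AddCircle.liftIco (2 * π) (-π) fun x => (g |x| : ℂ)) n =
      ((π⁻¹ * cosCoeff g n.natAbs : ℝ) : ℂ) := by
  set h : ℝ → ℂ := fun x => fourier (-n) (x : AddCircle (2 * π)) * g |x| with hh
  have hcont : Continuous h := by
    simp only [hh, fourier_two_pi_apply]
    fun_prop
  have hfold : ∀ x ∈ uIcc 0 π, h (-x) + h x = ((2 * (g x * cos (n.natAbs * x)) : ℝ) : ℂ) := by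
    intro x hx
    rw [uIcc_of_le pi_nonneg] at hx
    have hneg : fourier (-n) ((-x : ℝ) : AddCircle (2 * π)) =
        fourier n (x : AddCircle (2 * π)) := by
      simp only [fourier_two_pi_apply, Int.cast_neg, neg_mul_neg]
    simp only [hh]
    rw [abs_neg, abs_of_nonneg hx.1, hneg, ← add_mul, fourier_add_fourier_neg]
    push_cast
    ring
  calc fourierCoeff (AddCircle.liftIco (2 * π) (-π) fun x => (g |x| : ℂ)) n
      = (1 / (2 * π)) • ∫ x in -π..π, h x := by
        rw [fourierCoeff_eq_intervalIntegral _ _ (-π), show -π + 2 * π = π by ring]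
        congr 1
        refine intervalIntegral.integral_congr_Ioo_of_le (by linarith [pi_pos]) fun x hx => ?_
        rw [AddCircle.liftIco_coe_apply ⟨hx.1.le, by linarith [hx.2]⟩, smul_eq_mul]
    _ = _ := by
        rw [integral_neg_eq_integral_comp_neg_add hcont, intervalIntegral.integral_congr hfold,
          intervalIntegral.integral_ofReal, intervalIntegral.integral_const_mul, ← cosCoeff,
          Complex.real_smul, ← Complex.ofReal_mul]
        congr 1
        field_simp

theorem hasSum_cosCoeff_mul_cos (hg : Continuous g) (hsum : Summable (cosCoeff g)) {θ : ℝ}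
    (hθ : θ ∈ Ico 0 π) :
    HasSum (fun n : ℕ => 2 * cosCoeff g n * cos (n * θ)) (π * g θ + cosCoeff g 0) := by
  let F : C(AddCircle (2 * π), ℂ) := ⟨AddCircle.liftIco (2 * π) (-π) fun x => (g |x| : ℂ),
    AddCircle.liftIco_continuous (by rw [show -π + 2 * π = π by ring, abs_neg]) (by fun_prop)⟩
  have hcoeff : ∀ n, fourierCoeff F n = ((π⁻¹ * cosCoeff g n.natAbs : ℝ) : ℂ) :=
    fourierCoeff_liftIco_abs hg
  have hF : F (θ : AddCircle (2 * π)) = g θ := by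
    rw [ContinuousMap.coe_mk, AddCircle.liftIco_coe_apply
      ⟨by linarith [hθ.1, pi_pos], by linarith [hθ.2]⟩, abs_of_nonneg hθ.1]
  have hsummable : Summable (fourierCoeff F) := by
    rw [funext hcoeff, Complex.summable_ofReal]
    exact Summable.of_nat_of_neg (by simpa using hsum.mul_left π⁻¹)
      (by simpa using hsum.mul_left π⁻¹)
  have hseries := (has_pointwise_sum_fourier_series_of_summable hsummable
    (θ : AddCircle (2 * π))).nat_add_neg.mul_left (π : ℂ)
  have hπ : (π : ℂ) ≠ 0 := by exact_mod_cast pi_ne_zero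
  have hvalue : ((π * g θ + cosCoeff g 0 : ℝ) : ℂ) =
      π * (F (θ : AddCircle (2 * π)) + fourierCoeff F 0 • fourier 0 (θ : AddCircle (2 * π))) := by
    rw [hF, hcoeff, fourier_zero, smul_eq_mul, Int.natAbs_zero]
    push_cast
    field_simp
  rw [← Complex.hasSum_ofReal, hvalue]
  refine hseries.congr_fun fun n => ?_
  rw [hcoeff, hcoeff, Int.natAbs_neg, ← smul_add, fourier_add_fourier_neg, Int.natAbs_natCast]
  push_cast
  rw [smul_eq_mul]
  field_simp

end

theorem hasSum_cosCoeff_mul_integral (hg : Continuous g) (hw : Continuous w)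
    (hsum : Summable (cosCoeff g)) :
    HasSum (fun n : ℕ => 2 * cosCoeff g n * cosCoeff w n)
      (π * (∫ θ in 0..π, g θ * w θ) + cosCoeff g 0 * cosCoeff w 0) := by
  have : Fact (0 < 2 * π) := ⟨two_pi_pos⟩
  obtain ⟨M, hM⟩ := isCompact_Icc.exists_bound_of_continuousOn (s := Icc 0 π) hw.continuousOn
  have hbound : ∀ n : ℕ, ∀ θ ∈ uIoc 0 π,
      ‖2 * cosCoeff g n * cos (n * θ) * w θ‖ ≤ 2 * |cosCoeff g n| * M := fun n θ hθ => by
    rw [uIoc_of_le pi_nonneg] at hθ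
    rw [norm_mul, norm_mul, norm_mul, Real.norm_two, Real.norm_eq_abs, Real.norm_eq_abs]
    calc 2 * |cosCoeff g n| * |cos (n * θ)| * ‖w θ‖ ≤ 2 * |cosCoeff g n| * 1 * M := by
          gcongr
          · exact abs_cos_le_one _
          · exact hM θ (Ioc_subset_Icc_self hθ)
      _ = 2 * |cosCoeff g n| * M := by rw [mul_one]
  have hpointwise : ∀ᵐ θ, θ ∈ uIoc 0 π → HasSum (fun n : ℕ => 2 * cosCoeff g n * cos (n * θ) * w θ)
      ((π * g θ + cosCoeff g 0) * w θ) := by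
    filter_upwards [Measure.ae_ne volume π] with θ hθπ hθ
    rw [uIoc_of_le pi_nonneg] at hθ
    exact (hasSum_cosCoeff_mul_cos hg hsum ⟨hθ.1.le, lt_of_le_of_ne hθ.2 hθπ⟩).mul_right _
  have hintegral := intervalIntegral.hasSum_integral_of_dominated_convergence _
    (fun n => Continuous.aestronglyMeasurable (by fun_prop))
    (fun n => Filter.Eventually.of_forall (hbound n))
    (Filter.Eventually.of_forall fun θ _ => (hsum.abs.mul_left 2).mul_right M)
    intervalIntegrable_const hpointwise
  have hvalue : π * (∫ θ in 0..π, g θ * w θ) + cosCoeff g 0 * cosCoeff w 0 =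
      ∫ θ in 0..π, (π * g θ + cosCoeff g 0) * w θ := by
    simp only [add_mul, mul_assoc]
    rw [intervalIntegral.integral_add (Continuous.intervalIntegrable (by fun_prop) 0 π)
      (Continuous.intervalIntegrable (by fun_prop) 0 π)]
    simp [cosCoeff]
  rw [hvalue]
  refine hintegral.congr_fun fun n => ?_
  simp only [mul_assoc, intervalIntegral.integral_const_mul, cosCoeff, mul_comm (w _)]

theorem two_mul_cosCoeff_succ (hw : Continuous w) (n : ℕ) :
    2 * cosCoeff w (n + 1) =
      (∫ θ in 0..π, dirichletKernel (n + 1) θ * w θ) - ∫ θ in 0..π, dirichletKernel n θ * w θ := by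
  rw [← intervalIntegral.integral_sub (Continuous.intervalIntegrable (by fun_prop) 0 π)
      (Continuous.intervalIntegrable (by fun_prop) 0 π), cosCoeff,
    ← intervalIntegral.integral_const_mul]
  congr 1 with θ
  rw [dirichletKernel_succ, Nat.cast_add_one]
  ring

theorem sum_cosCoeff_mul_cosCoeff (hw : Continuous w) (a : ℕ → ℝ) (N : ℕ) :
    ∑ n ∈ Finset.range (N + 1), 2 * a n * cosCoeff w n =
      a 0 * cosCoeff w 0 +
        ∑ n ∈ Finset.range N, (a n - a (n + 1)) * (∫ θ in 0..π, dirichletKernel n θ * w θ) +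
          a N * ∫ θ in 0..π, dirichletKernel N θ * w θ := by
  induction N with
  | zero =>
    simp [cosCoeff]
    ring
  | succ N ih =>
    rw [Finset.sum_range_succ, ih, Finset.sum_range_succ _ N]
    linear_combination a (N + 1) * two_mul_cosCoeff_succ hw N

theorem integral_mul_pos_of_strictAnti_cosCoeff (hg : Continuous g) (hw : Continuous w)
    (hsum : Summable (cosCoeff g)) (hanti : StrictAnti (cosCoeff g))
    (hnonneg : ∀ n, 0 ≤ ∫ θ in 0..π, dirichletKernel n θ * w θ) {m : ℕ}
    (hpos : 0 < ∫ θ in 0..π, dirichletKernel m θ * w θ) : 0 < ∫ θ in 0..π, g θ * w θ := by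
  set a := cosCoeff g
  set B : ℕ → ℝ := fun n => ∫ θ in 0..π, dirichletKernel n θ * w θ
  have ha_nonneg : ∀ n, 0 ≤ a n := hanti.antitone.le_of_tendsto hsum.tendsto_atTop_zero
  have hterm : ∀ n, 0 ≤ (a n - a (n + 1)) * B n := fun n =>
    mul_nonneg (sub_nonneg.mpr (hanti n.lt_succ_self).le) (hnonneg n)
  have hlower : ∀ N ≥ m + 2, a 0 * cosCoeff w 0 + (a m - a (m + 1)) * B m ≤
      ∑ n ∈ Finset.range N, 2 * a n * cosCoeff w n := fun N hN => by
    obtain ⟨N, rfl⟩ := Nat.exists_eq_add_one_of_ne_zero (show N ≠ 0 by omega)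
    rw [sum_cosCoeff_mul_cosCoeff hw]
    have h := Finset.single_le_sum (fun n _ => hterm n) (Finset.mem_range.mpr (show m < N by omega))
    linarith [mul_nonneg (ha_nonneg N) (hnonneg N)]
  have hlim := ge_of_tendsto (hasSum_cosCoeff_mul_integral hg hw hsum).tendsto_sum_nat
    (Filter.eventually_atTop.mpr ⟨m + 2, hlower⟩)
  have hgap : 0 < (a m - a (m + 1)) * B m := mul_pos (sub_pos.mpr (hanti m.lt_succ_self)) hpos
  exact pos_of_mul_pos_right (a := π) (by linarith) pi_nonneg

end CosineSeries

section Positivity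

variable {α δ t : ℝ}

theorem fracInt_weightedJacobi_pos_of_le_one (hα : 0 < α) (hα1 : α ≤ 1) (hδ : 2 ≤ δ)
    (ht : t ∈ Ioc 0 π) (n : ℕ) : 0 < fracInt δ (weightedJacobi n α) t := by
  have hδ0 : 0 < δ := by linarith
  have htπ : t ∈ Icc 0 π := Ioc_subset_Icc_self ht
  have hw := continuous_weightedJacobi n hα.le
  have hg : Continuous fun θ => (t - θ)⁺ ^ δ :=
    (continuous_posPart_rpow hδ0.le).comp (continuous_const.sub continuous_id)
  have hcoeff : cosCoeff (fun θ => (t - θ)⁺ ^ δ) =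
      fun k : ℕ => fracInt δ (fun θ => cos (k * θ)) t :=
    funext fun k => (fracInt_eq_integral_posPart hδ0 (by fun_prop) htπ).symm
  rw [fracInt_eq_integral_posPart hδ0 hw htπ]
  exact integral_mul_pos_of_strictAnti_cosCoeff hg hw
    (hcoeff ▸ summable_fracInt_cos hδ ht.1.le) (hcoeff ▸ strictAnti_fracInt_cos hδ ht.1)
    (integral_dirichletKernel_mul_weightedJacobi_nonneg n hα hα1)
    (integral_dirichletKernel_self_mul_weightedJacobi_pos n hα)

theorem fracInt_weightedJacobi_pos_of_sub_one (hα : 1 < α) (hδ : 1 < δ) {n : ℕ}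
    (hpos : ∀ s ∈ Ioc 0 π, 0 < fracInt (δ - 1) (weightedJacobi (n + 1) (α - 1)) s)
    (ht : t ∈ Ioc 0 π) : 0 < fracInt δ (weightedJacobi n α) t := by
  have hhav : ∀ θ ∈ Ioo 0 t, hav θ ≠ 0 := fun θ hθ => (hav_pos ⟨hθ.1, hθ.2.le.trans ht.2⟩).ne'
  have hw := continuous_weightedJacobi n (show 0 ≤ α by linarith)
  have hw' := continuous_weightedJacobi (n + 1) (show 0 ≤ α - 1 by linarith)
  have hforce : ∀ s ∈ Ioo 0 t, 0 < fracInt (δ - 1) (fun θ =>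
      α * (α - 1 / 2) * weightedJacobi (n + 1) (α - 1) θ - n ^ 2 * weightedJacobi n α θ +
        (n : ℝ) ^ 2 * weightedJacobi n α θ) s := fun s hs => by
    simp only [sub_add_cancel, fracInt_const_mul]
    exact mul_pos (mul_pos (by linarith) (by linarith)) (hpos s ⟨hs.1, hs.2.le.trans ht.2⟩)
  exact fracInt_pos_of_oscillator hδ ht.1 hw (continuous_weightedJacobiDeriv n hα.le)
    ((hw'.const_mul _).sub (hw.const_mul _))
    (fun θ hθ => hasDerivAt_weightedJacobi n α (hhav θ hθ))
    (fun θ hθ => hasDerivAt_weightedJacobiDeriv n (by linarith) (hhav θ hθ))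
    (weightedJacobi_zero_right n (by linarith)) (weightedJacobiDeriv_zero_right n α)
    (fun s hs => (hforce s hs).le)
    (Filter.eventually_of_mem (Ioo_mem_nhdsGT ht.1) hforce)

theorem fracInt_weightedJacobi_pos (hα : 0 < α) (hδ : (⌈α⌉ : ℝ) + 1 ≤ δ) (ht : t ∈ Ioc 0 π)
    (n : ℕ) : 0 < fracInt δ (weightedJacobi n α) t := by
  obtain ⟨k, hk⟩ : ∃ k : ℕ, ⌈α⌉ = k + 1 :=
    ⟨(⌈α⌉ - 1).toNat, by have := Int.ceil_pos.mpr hα; omega⟩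
  induction k generalizing α δ n t with
  | zero =>
    have hα1 : α ≤ 1 := by simpa [hk] using Int.le_ceil α
    exact fracInt_weightedJacobi_pos_of_le_one hα hα1 (by norm_num [hk] at hδ; linarith) ht n
  | succ k ih =>
    have hα1 : 1 < α := by exact_mod_cast Int.lt_ceil.mp (show 1 < ⌈α⌉ by omega)
    have hceil : ⌈α - 1⌉ = ⌈α⌉ - 1 := Int.ceil_sub_one α
    have hδ1 : 1 < δ := by linarith [Int.le_ceil α]
    refine fracInt_weightedJacobi_pos_of_sub_one hα1 hδ1 (fun s hs => ?_) ht
    exact ih (sub_pos.mpr hα1) (by push_cast [hceil]; linarith) hs (n + 1) (by omega)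

end Positivity

section Integrability

@[fun_prop]
theorem continuous_jacobiP (n : ℕ) (a b : ℝ) : Continuous (jacobiP n a b) := by
  unfold jacobiP
  fun_prop

theorem intervalIntegrable_sin_rpow_mul_cos_rpow_quarter {p q : ℝ} (hp : -1 < p) :
    IntervalIntegrable (fun x => sin x ^ p * cos x ^ q) volume 0 (π / 4) := by
  have hcos : ∀ x ∈ uIcc 0 (π / 4), 0 < cos x := fun x hx => by
    rw [uIcc_of_le (by positivity)] at hx
    exact cos_pos_of_mem_Ioo ⟨by linarith [hx.1, pi_pos], by linarith [hx.2, pi_pos]⟩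
  have hsinc : ∀ x ∈ uIcc 0 (π / 4), sinc x ≠ 0 := fun x hx => by
    rw [uIcc_of_le (by positivity)] at hx
    rcases hx.1.eq_or_lt with rfl | hx0
    · simp
    · rw [sinc_of_ne_zero hx0.ne']
      exact (div_pos (sin_pos_of_mem_Ioo ⟨hx0, by linarith [hx.2, pi_pos]⟩) hx0).ne'
  have hcont : ContinuousOn (fun x => sinc x ^ p * cos x ^ q) (uIcc 0 (π / 4)) :=
    (continuous_sinc.continuousOn.rpow_const fun x hx => Or.inl (hsinc x hx)).mul
      (continuous_cos.continuousOn.rpow_const fun x hx => Or.inl (hcos x hx).ne')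
  refine ((intervalIntegral.intervalIntegrable_rpow' hp).mul_continuousOn hcont).congr_uIoo
    fun x hx => ?_
  rw [uIoo_of_le (by positivity)] at hx
  have hsin : 0 < sin x := sin_pos_of_mem_Ioo ⟨hx.1, by linarith [hx.2, pi_pos]⟩
  simp only [sinc_of_ne_zero hx.1.ne', Real.div_rpow hsin.le hx.1.le]
  have := Real.rpow_pos_of_pos hx.1 p
  field_simp

theorem intervalIntegrable_sin_rpow_mul_cos_rpow {p q : ℝ} (hp : -1 < p) (hq : -1 < q) :
    IntervalIntegrable (fun x => sin x ^ p * cos x ^ q) volume 0 (π / 2) := by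
  refine (intervalIntegrable_sin_rpow_mul_cos_rpow_quarter hp).trans ?_
  have h := (intervalIntegrable_sin_rpow_mul_cos_rpow_quarter (q := p) hq).comp_sub_left (π / 2)
  simp only [sin_pi_div_two_sub, cos_pi_div_two_sub, sub_zero,
    show π / 2 - π / 4 = π / 4 by ring] at h
  simpa only [mul_comm] using h.symm

theorem intervalIntegrable_FJ_integrand {α β δ t : ℝ} (hα : -1 / 2 < α) (hβ : -1 / 2 < β)
    (hδ : 0 ≤ δ) (ht : t ∈ Icc 0 π) (n : ℕ) (a b : ℝ) :
    IntervalIntegrable (fun θ => (t - θ) ^ δ * jacobiP n a b (cos θ) * sin (θ / 2) ^ (2 * α) *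
      cos (θ / 2) ^ (2 * β)) volume 0 t := by
  have hweight : IntervalIntegrable
      (fun θ => sin (θ / 2) ^ (2 * α) * cos (θ / 2) ^ (2 * β)) volume 0 t := by
    have h := (intervalIntegrable_sin_rpow_mul_cos_rpow (p := 2 * α) (q := 2 * β) (by linarith)
      (by linarith)).comp_mul_right (c := (2 : ℝ)⁻¹)
    simp only [← div_eq_mul_inv, div_inv_eq_mul, zero_mul, div_mul_cancel₀ π two_ne_zero] at h
    refine h.mono_set ?_
    rw [uIcc_of_le ht.1, uIcc_of_le pi_nonneg]
    exact Icc_subset_Icc_right ht.2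
  have hcont : Continuous fun θ => (t - θ) ^ δ * jacobiP n a b (cos θ) :=
    ((continuous_const.sub continuous_id).rpow_const fun _ => Or.inr hδ).mul (by fun_prop)
  simpa only [mul_assoc] using hweight.continuousOn_mul hcont.continuousOn

end Integrability

section Contiguous

variable {α β δ t : ℝ}

theorem rpow_two_mul_add_one {x : ℝ} (hx : 0 < x) (r : ℝ) :
    x ^ (2 * (r + 1)) = x ^ (2 * r) * x ^ 2 := by
  rw [mul_add_one, Real.rpow_add hx, Real.rpow_two]

theorem FJ_sub_FJ_add_one_right (hα : -1 / 2 < α) (hβ : -1 / 2 < β) (hδ : 0 ≤ δ)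
    (ht : t ∈ Icc 0 π) (n : ℕ) :
    FJ n α β δ t - FJ n α (β + 1) δ t = FJ n (α + 1) β δ t := by
  rw [FJ, FJ, ← intervalIntegral.integral_sub (intervalIntegrable_FJ_integrand hα hβ hδ ht _ _ _)
    (intervalIntegrable_FJ_integrand hα (by linarith) hδ ht _ _ _)]
  refine intervalIntegral.integral_congr_Ioo_of_le ht.1 fun θ hθ => ?_
  have hsin : 0 < sin (θ / 2) := sin_half_pos ⟨hθ.1, hθ.2.le.trans ht.2⟩
  have hcos : 0 < cos (θ / 2) := cos_half_pos ⟨hθ.1, hθ.2.trans_le ht.2⟩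
  have hjacobi := jacobiP_eq_add_jacobiP_succ n (show -1 < α - 1 / 2 by linarith)
    (show -1 < β - 1 / 2 by linarith) (cos θ)
  rw [one_sub_cos_div_two, one_add_cos_div_two] at hjacobi
  simp only [rpow_two_mul_add_one hsin, rpow_two_mul_add_one hcos, add_sub_right_comm _ (1 : ℝ)]
  linear_combination ((t - θ) ^ δ * sin (θ / 2) ^ (2 * α) * cos (θ / 2) ^ (2 * β)) * hjacobi

theorem mul_FJ_add_one_right (hα : -1 / 2 < α) (hβ : -1 / 2 < β) (hδ : 0 ≤ δ)
    (ht : t ∈ Icc 0 π) (n : ℕ) :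
    (2 * n + α + β + 1) * FJ n α (β + 1) δ t =
      (n + 1) * FJ (n + 1) α β δ t + (n + β + 1 / 2) * FJ n α β δ t := by
  simp only [FJ, ← intervalIntegral.integral_const_mul]
  rw [← intervalIntegral.integral_add
    ((intervalIntegrable_FJ_integrand hα hβ hδ ht _ _ _).const_mul _)
    ((intervalIntegrable_FJ_integrand hα hβ hδ ht _ _ _).const_mul _)]
  refine intervalIntegral.integral_congr_Ioo_of_le ht.1 fun θ hθ => ?_
  have hcos : 0 < cos (θ / 2) := cos_half_pos ⟨hθ.1, hθ.2.trans_le ht.2⟩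
  have hjacobi := mul_jacobiP_add_one_right n (show -1 < α - 1 / 2 by linarith)
    (show -1 < β - 1 / 2 by linarith) (cos θ)
  rw [one_add_cos_div_two] at hjacobi
  simp only [rpow_two_mul_add_one hcos, add_sub_right_comm _ (1 : ℝ)]
  linear_combination ((t - θ) ^ δ * sin (θ / 2) ^ (2 * α) * cos (θ / 2) ^ (2 * β)) * hjacobi

theorem FJ_zero_right (hα : -1 / 2 < α) (ht : t ∈ Icc 0 π) (n : ℕ) (δ : ℝ) :
    FJ n α 0 δ t = Ring.choose (n + (α - 1 / 2)) n * fracInt δ (weightedJacobi n α) t := by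
  rw [FJ, fracInt, ← intervalIntegral.integral_const_mul]
  refine intervalIntegral.integral_congr_Ioo_of_le ht.1 fun θ hθ => ?_
  have hθπ : θ ∈ Ioc 0 π := ⟨hθ.1, hθ.2.le.trans ht.2⟩
  have hhav : hav θ ≠ 0 := (hav_pos hθπ).ne'
  have hpow : sin (θ / 2) ^ (2 * α) = hav θ ^ α := by
    rw [Real.rpow_mul (sin_half_pos hθπ).le, Real.rpow_two, hav]
  have hcoeff : ∀ j, ordinaryHypergeometricCoefficient (-(n : ℝ))
      (n + (α - 1 / 2) + (0 - 1 / 2) + 1) (α - 1 / 2 + 1) j = havCoeff n α j := fun j => by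
    rw [havCoeff]
    congr 1 <;> ring
  simp only [jacobiP_eq_sum_hypergeometric n (show -1 < α - 1 / 2 by linarith)
    (show (-1 : ℝ) < 0 - 1 / 2 by norm_num), hcoeff, one_sub_cos_div_two, ← hav.eq_1, hpow,
    mul_zero, Real.rpow_zero, weightedJacobi_eq_hav_rpow_mul n α hhav]
  ring

end Contiguous

section Monotonicity

variable {α δ t : ℝ}

theorem FJ_natCast_pos (hα : 0 < α) (hδ : (⌈α⌉ : ℝ) + 1 ≤ δ) (ht : t ∈ Ioc 0 π) (β n : ℕ) :
    0 < FJ n α β δ t := by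
  have hα' : -1 / 2 < α := by linarith
  have htπ : t ∈ Icc 0 π := Ioc_subset_Icc_self ht
  have hδ0 : 0 ≤ δ := by linarith [Int.le_ceil α]
  induction β generalizing n with
  | zero =>
    rw [Nat.cast_zero, FJ_zero_right hα' htπ]
    exact mul_pos (ringChoose_pos (by linarith)) (fracInt_weightedJacobi_pos hα hδ ht n)
  | succ β ih =>
    have hprod : 0 < (2 * n + α + β + 1) * FJ n α (β + 1 : ℕ) δ t := by
      have := ih n
      have := ih (n + 1)
      have hβ : (-1 / 2 : ℝ) < β := by linarith [β.cast_nonneg (α := ℝ)]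
      rw [Nat.cast_add_one, mul_FJ_add_one_right hα' hβ hδ0 htπ]
      positivity
    exact pos_of_mul_pos_right hprod (by positivity)

theorem FJ_strict_monotone_in_beta_general (hα : -1 / 2 < α) (hδ : (⌈α⌉ : ℝ) + 2 ≤ δ)
    (ht : t ∈ Ioc 0 π) (β n : ℕ) : FJ n α (β + 1) δ t < FJ n α β δ t := by
  have hβ : (-1 / 2 : ℝ) < β := by linarith [β.cast_nonneg (α := ℝ)]
  have hδ' : (⌈α + 1⌉ : ℝ) + 1 ≤ δ := by
    push_cast [Int.ceil_add_one]
    linarith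
  rw [← sub_pos, FJ_sub_FJ_add_one_right hα hβ (by linarith [Int.le_ceil α])
    (Ioc_subset_Icc_self ht)]
  exact FJ_natCast_pos (by linarith) hδ' ht β n

end Monotonicity

theorem FJ_strict_monotone_in_beta (α : ℝ) (hα : 0 < α) (β : ℕ) (δ : ℝ)
    (hδ : ((⌈α⌉ : ℤ) : ℝ) + 2 ≤ δ) :
    ∀ t ∈ Set.Ioc (0:ℝ) π, ∀ n : ℕ,
      FJ n α ((β : ℝ) + 1) δ t < FJ n α (β : ℝ) δ t := fun _ ht n =>
  FJ_strict_monotone_in_beta_general (by linarith) hδ ht β n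
end
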